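/- arXiv:1211.6080 — 3 statements merged into one kernel-verified Lean document; each statement's English description precedes it below -/
import Mathlib

section
/- Endow ℝ² with the norm ‖x‖ = (|x₁|^p + |x₂|^p)^{1/p} for some real p > 2 (a uniformly convex norm), and for ε > 0 let F : ℝ² → ℝ² be defined by F(x) = (x₁ + ε x₂², x₂). Then for every r > 0 and every ε > 0 the image F(B̄(0,r)) of the closed ball of radius r centered at the origin (taken with respect to the p-norm) is not a convex subset of ℝ². In particular, the convexity of images of small balls under C^{1,1}-diffeomorphisms does not extend from Hilbert spaces to uniformly convex Banach spaces. -/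
/-- Endow `ℝ²` with the `p`-norm for some real `p > 2`, and for `ε > 0` let
`F(x) = (x₁ + ε x₂², x₂)`.  Then for every `r > 0` and every `ε > 0` the image under `F` of the
closed `p`-norm ball of radius `r` centered at the origin is not convex. -/
theorem stmt_5 (p : ℝ) (hp : 2 < p) (ε : ℝ) (hε : 0 < ε) (r : ℝ) (hr : 0 < r) :
    ¬ Convex ℝ ((fun x : ℝ × ℝ => (x.1 + ε * x.2 ^ 2, x.2)) ''
      {x : ℝ × ℝ | (|x.1| ^ p + |x.2| ^ p) ^ (1 / p) ≤ r}) := by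
  intro hconv
  have hp0 : 0 < p := by linarith
  have mem_iff : ∀ a b : ℝ, (|a| ^ p + |b| ^ p) ^ (1 / p) ≤ r ↔ |a| ^ p + |b| ^ p ≤ r ^ p := by
    intro a b
    rw [one_div]
    exact Real.rpow_inv_le_iff_of_pos (by positivity) hr.le hp0
  -- choose a small `t`
  have hpos : 0 < r ^ (p - 1) * (ε / 2) := by positivity
  obtain ⟨t, ht0, ht1, ht2⟩ : ∃ t : ℝ, 0 < t ∧ t ^ (p - 2) < r ^ (p - 1) * (ε / 2) ∧
      ε / 2 * t ^ 2 < r := by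
    have h1 : Filter.Tendsto (fun t : ℝ => t ^ (p - 2)) (nhdsWithin 0 (Set.Ioi 0)) (nhds 0) := by
      have h := (Real.continuousAt_rpow_const 0 (p - 2) (Or.inr (by linarith))).tendsto
      rw [Real.zero_rpow (by linarith)] at h
      exact h.mono_left nhdsWithin_le_nhds
    have h2 : Filter.Tendsto (fun t : ℝ => ε / 2 * t ^ 2) (nhdsWithin 0 (Set.Ioi 0)) (nhds 0) := by
      have h : Continuous (fun t : ℝ => ε / 2 * t ^ 2) := by fun_prop
      have h := h.tendsto 0
      simp only [ne_eq, OfNat.ofNat_ne_zero, not_false_eq_true, zero_pow, mul_zero] at h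
      exact h.mono_left nhdsWithin_le_nhds
    obtain ⟨t, ht, ha, hb⟩ := ((eventually_mem_nhdsWithin (a := (0:ℝ)) (s := Set.Ioi 0)).and
      ((h1.eventually_lt_const hpos).and (h2.eventually_lt_const hr))).exists
    exact ⟨t, ht, ha, hb⟩
  set s : ℝ := ε / 2 * t ^ 2 with hs
  have hs0 : 0 < s := by positivity
  have hmul : ∀ x : ℝ, 0 < x → x ^ p = x ^ (p - 1) * x := by
    intro x hx
    rw [← Real.rpow_add_one hx.ne']
    congr 1
    ring
  have h3 : (r - s) ^ p ≤ r ^ (p - 1) * (r - s) := by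
    rw [hmul _ (by linarith)]
    exact mul_le_mul_of_nonneg_right
      (Real.rpow_le_rpow (by linarith) (by linarith) (by linarith)) (by linarith)
  have h4 : t ^ p ≤ r ^ (p - 1) * s := by
    have : t ^ p = t ^ (p - 2) * t ^ 2 := by
      rw [← Real.rpow_natCast t 2, ← Real.rpow_add ht0]
      congr 1
      push_cast
      ring
    rw [this, hs, ← mul_assoc]
    exact mul_le_mul_of_nonneg_right ht1.le (by positivity)
  have h5 : (r - s) ^ p + t ^ p ≤ r ^ p := by
    rw [hmul r hr]
    linarith
  have hA : ∀ b : ℝ, |b| = t → ((r - s) + ε * b ^ 2, b) ∈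
      ((fun x : ℝ × ℝ => (x.1 + ε * x.2 ^ 2, x.2)) ''
      {x : ℝ × ℝ | (|x.1| ^ p + |x.2| ^ p) ^ (1 / p) ≤ r}) := by
    intro b hb
    refine ⟨(r - s, b), ?_, rfl⟩
    simp only [Set.mem_ofPred_eq]
    rw [mem_iff, hb, abs_of_pos (by linarith)]
    exact h5
  have hm := hconv (hA t (abs_of_pos ht0)) (hA (-t) (by rw [abs_neg, abs_of_pos ht0]))
    (by norm_num : (0 : ℝ) ≤ 1 / 2) (by norm_num : (0 : ℝ) ≤ 1 / 2) (by norm_num)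
  obtain ⟨⟨a, b⟩, hab, heq⟩ := hm
  simp only [Set.mem_ofPred_eq] at hab
  rw [mem_iff] at hab
  simp only [Prod.smul_mk, Prod.mk_add_mk, Prod.mk.injEq, smul_eq_mul] at heq
  obtain ⟨e1, e2⟩ := heq
  have hb : b = 0 := by linarith
  subst hb
  have ha : a = r + s := by
    rw [hs] at e1 ⊢
    linarith
  rw [ha, abs_zero, Real.zero_rpow hp0.ne', add_zero, abs_of_pos (by linarith)] at hab
  have := Real.rpow_lt_rpow hr.le (by linarith : r < r + s) hp0
  linarith
end

section
/- Let X be a real Hilbert space, I ⊆ ℝ an interval, U ⊆ I × X relatively open in I × X, and f : U → X continuous and of class C^{1,1} with respect to its second argument. Let φ denote the general solution of ẋ = f(t,x). Let x₀ ∈ X, r > 0, and t₀, t₁ ∈ I with (t₁, t₀, x) ∈ dom φ for all x ∈ B̄(x₀,r). Suppose M₁, M₂ ∈ ℝ satisfy, for all (τ,x) ∈ U: M₁ ≥ 2μ₊(D₂f(τ,x)) − μ₋(D₂f(τ,x)) if t₁ ≥ t₀ and M₁ ≥ μ₊(D₂f(τ,x)) − 2μ₋(D₂f(τ,x)) otherwise,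 and M₂ ≥ limsup_{h→0} ‖D₂f(τ,x+h) − D₂f(τ,x)‖/‖h‖. Define K(α) = |t₁−t₀| if α = 0 and K(α) = (exp(α|t₁−t₀|)−1)/α otherwise. If r·M₂·K(M₁) ≤ 1, then the reachable set φ(t₁,t₀,B̄(x₀,r)) is convex. -/
open Filter Topology Metric Set RealInnerProductSpace

/-- `μ₋(A) = inf {⟨Ax,x⟩ : ‖x‖ = 1}`. -/
noncomputable def muMinus {X : Type*} [NormedAddCommGroup X] [InnerProductSpace ℝ X]
    (A : X →L[ℝ] X) : ℝ :=
  sInf {c : ℝ | ∃ y : X, ‖y‖ = 1 ∧ c = ⟪A y, y⟫}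

/-- `μ₊(A) = sup {⟨Ax,x⟩ : ‖x‖ = 1}`. -/
noncomputable def muPlus {X : Type*} [NormedAddCommGroup X] [InnerProductSpace ℝ X]
    (A : X →L[ℝ] X) : ℝ :=
  sSup {c : ℝ | ∃ y : X, ‖y‖ = 1 ∧ c = ⟪A y, y⟫}

namespace RS

/-- Chaining a local Lipschitz bound. -/
lemma chain {E : Type*} [NormedAddCommGroup E] {h : ℝ → E} {a b C : ℝ} (hab : a ≤ b)
    (hc : ContinuousOn h (Icc a b))
    (hl : ∀ t ∈ Ico a b, ∀ᶠ t' in 𝓝[>] t, ‖h t' - h t‖ ≤ C * (t' - t)) :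
    ‖h b - h a‖ ≤ C * (b - a) := by
  have key : Icc a b ⊆ {t | ‖h t - h a‖ ≤ C * (t - a)} := by
    apply IsClosed.Icc_subset_of_forall_mem_nhdsWithin
    · rw [inter_comm]
      refine ContinuousOn.preimage_isClosed_of_isClosed (t := {p : ℝ × ℝ | p.1 ≤ p.2})
        (f := fun t => (‖h t - h a‖, C * (t - a))) ?_ isClosed_Icc
        (isClosed_le continuous_fst continuous_snd)
      exact ((hc.sub continuousOn_const).norm).prodMk (by fun_prop)
    · simp
    · rintro t ⟨ht, ht'⟩
      filter_upwards [hl t ht'] with t' h'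
      simp only [mem_ofPred_eq] at ht ⊢
      calc ‖h t' - h a‖ = ‖(h t' - h t) + (h t - h a)‖ := by congr 1; abel
        _ ≤ _ := norm_add_le _ _
        _ ≤ C * (t' - t) + C * (t - a) := add_le_add h' ht
        _ = _ := by ring
  exact key ⟨hab, le_rfl⟩

section abs
variable {X : Type*} [NormedAddCommGroup X] [InnerProductSpace ℝ X] [CompleteSpace X]

/-- Lifting a Lipschitz path. -/
lemma lift {g : X → X} {x₀ : X} {r C L : ℝ} (hC : 0 ≤ C)
    (hinj : InjOn g (closedBall x₀ r))
    (hcont : ContinuousOn g (closedBall x₀ r))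
    (LI : ∀ x ∈ ball x₀ r, ∃ δ > 0, ∀ v : X, ‖v‖ < δ →
      ∃ x' ∈ closedBall x₀ r, g x' = g x + v ∧ ‖x' - x‖ ≤ C * ‖v‖)
    {ρ : ℝ} (hρ : ρ ≤ r) {y : ℝ → X} {τ : ℝ} (hτ : 0 < τ)
    (hy : ContinuousOn y (Icc 0 τ))
    (hyl : ∀ t ∈ Ico 0 τ, ∀ᶠ t' in 𝓝 t, t' ∈ Icc 0 τ → ‖y t' - y t‖ ≤ L * |t' - t|)
    (hmem : ∀ t ∈ Ico 0 τ, ∃ x ∈ closedBall x₀ ρ ∩ ball x₀ r, g x = y t) :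
    ∃ x ∈ closedBall x₀ ρ, g x = y τ := by
  choose! c hc hcy using hmem
  have hsub : closedBall x₀ ρ ⊆ closedBall x₀ r := closedBall_subset_closedBall hρ
  have hL : 0 ≤ L := by
    have h1 := hyl 0 ⟨le_rfl, hτ⟩
    have h2 : ∀ᶠ t' in 𝓝[>] (0:ℝ), t' ∈ Icc 0 τ → ‖y t' - y 0‖ ≤ L * |t' - 0| :=
      h1.filter_mono nhdsWithin_le_nhds
    obtain ⟨t', h3, h4⟩ := (h2.and (Ioc_mem_nhdsGT hτ)).exists
    have h5 := h3 ⟨h4.1.le, h4.2⟩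
    have h6 : 0 < |t' - 0| := by simpa using h4.1.ne'
    by_contra hneg
    push Not at hneg
    have := mul_neg_of_neg_of_pos hneg h6
    linarith [norm_nonneg (y t' - y 0)]
  have hloc : ∀ t ∈ Ico 0 τ, ∀ᶠ t' in 𝓝 t, t' ∈ Ico 0 τ → ‖c t' - c t‖ ≤ (C * L) * |t' - t| := by
    intro t ht
    obtain ⟨δ, hδ, hv⟩ := LI (c t) (hc t ht).2
    have hcty : ∀ᶠ t' in 𝓝 t, t' ∈ Icc 0 τ → ‖y t' - y t‖ < δ := by
      have := hy t ⟨ht.1, ht.2.le⟩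
      have h2 := (Metric.tendsto_nhds.1 this) δ hδ
      rw [eventually_nhdsWithin_iff] at h2
      simpa [dist_eq_norm] using h2
    filter_upwards [hcty, hyl t ht] with t' h1 h2 ht'
    have ht'' : t' ∈ Icc 0 τ := ⟨ht'.1, ht'.2.le⟩
    obtain ⟨x', hx', hgx, hle⟩ := hv _ (h1 ht'')
    have : x' = c t' := by
      apply hinj hx' (hsub (hc t' ht').1)
      rw [hgx, hcy t ht, hcy t' ht']; abel
    subst this
    calc _ ≤ _ := hle
      _ ≤ C * (L * |t' - t|) := by gcongr; exact h2 ht''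
      _ = _ := by ring
  have hccont : ContinuousOn c (Ico 0 τ) := by
    intro t ht
    rw [ContinuousWithinAt, tendsto_iff_norm_sub_tendsto_zero]
    have : Tendsto (fun t' => (C * L) * |t' - t|) (𝓝[Ico 0 τ] t) (𝓝 0) := by
      have : ContinuousAt (fun t' => (C * L) * |t' - t|) t := by fun_prop
      have h := this.tendsto
      simp at h
      exact h.mono_left nhdsWithin_le_nhds
    refine tendsto_of_tendsto_of_tendsto_of_le_of_le' tendsto_const_nhds this
      (Eventually.of_forall fun _ => norm_nonneg _) ?_
    rw [eventually_nhdsWithin_iff]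
    exact hloc t ht
  have hglob : ∀ s t, 0 ≤ s → s ≤ t → t < τ → ‖c t - c s‖ ≤ (C * L) * (t - s) := by
    intro s t hs hst ht
    refine chain hst (hccont.mono fun u hu => ⟨hs.trans hu.1, hu.2.trans_lt ht⟩) ?_
    intro u hu
    have hu' : u ∈ Ico 0 τ := ⟨hs.trans hu.1, hu.2.trans ht⟩
    filter_upwards [(hloc u hu').filter_mono nhdsWithin_le_nhds, Ioo_mem_nhdsGT hu'.2]
      with u' h1 h2
    have := h1 ⟨hu'.1.trans h2.1.le, h2.2⟩
    rwa [abs_of_pos (sub_pos.2 h2.1)] at this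
  have hlip : LipschitzOnWith (C * L).toNNReal c (Ico 0 τ) := by
    rw [lipschitzOnWith_iff_norm_sub_le]
    intro s hs t ht
    rw [Real.coe_toNNReal _ (mul_nonneg hC hL)]
    rcases le_total s t with h | h
    · rw [norm_sub_rev, Real.norm_eq_abs, abs_sub_comm, abs_of_nonneg (sub_nonneg.2 h)]
      exact hglob s t hs.1 h ht.2
    · rw [Real.norm_eq_abs, abs_of_nonneg (sub_nonneg.2 h)]
      exact hglob t s ht.1 h hs.2
  have hne : (𝓝[Ico 0 τ] τ).NeBot := by
    rw [← mem_closure_iff_nhdsWithin_neBot, closure_Ico hτ.ne]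
    exact ⟨hτ.le, le_rfl⟩
  have hcau : Cauchy (map c (𝓝[Ico 0 τ] τ)) := by
    have hca : Cauchy (𝓝[Ico 0 τ] τ) := cauchy_nhds.mono nhdsWithin_le_nhds
    exact hca.map_of_le hlip.uniformContinuousOn (by
      exact le_principal_iff.2 self_mem_nhdsWithin)
  obtain ⟨x, hx⟩ := CompleteSpace.complete hcau
  have hx : Tendsto c (𝓝[Ico 0 τ] τ) (𝓝 x) := hx
  have hev : ∀ᶠ t in 𝓝[Ico 0 τ] τ, c t ∈ closedBall x₀ ρ := by
    filter_upwards [self_mem_nhdsWithin] with t ht using (hc t ht).1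
  have hxm : x ∈ closedBall x₀ ρ := isClosed_closedBall.mem_of_tendsto hx hev
  refine ⟨x, hxm, ?_⟩
  have h1 : Tendsto (fun t => g (c t)) (𝓝[Ico 0 τ] τ) (𝓝 (g x)) := by
    refine (hcont x (hsub hxm)).tendsto.comp (tendsto_nhdsWithin_iff.2 ⟨hx, ?_⟩)
    filter_upwards [hev] with t ht using hsub ht
  have h2 : Tendsto y (𝓝[Ico 0 τ] τ) (𝓝 (y τ)) :=
    (hy τ ⟨hτ.le, le_rfl⟩).mono_left (nhdsWithin_mono _ Ico_subset_Icc_self)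
  refine tendsto_nhds_unique (h1.congr' ?_) h2
  filter_upwards [self_mem_nhdsWithin] with t ht using hcy t ht

/-- Maximum principle: a segment lying in the image of the open ball
with endpoints in the image of a smaller ball lies in the image of the smaller ball. -/
lemma maxprin {g : X → X} {x₀ : X} {r C : ℝ}
    (hinj : InjOn g (closedBall x₀ r))
    (LI : ∀ x ∈ ball x₀ r, ∃ δ > 0, ∀ v : X, ‖v‖ < δ →
      ∃ x' ∈ closedBall x₀ r, g x' = g x + v ∧ ‖x' - x‖ ≤ C * ‖v‖)
    (KEY : ∀ x ∈ ball x₀ r, ∃ δ > 0, ∀ x₁ ∈ closedBall x₀ r, ∀ x₂ ∈ closedBall x₀ r,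
      ‖x₁ - x‖ < δ → ‖x₂ - x‖ < δ → x₁ ≠ x → g x₁ + g x₂ = (2:ℝ) • g x →
      2 * ‖x - x₀‖ ^ 2 < ‖x₁ - x₀‖ ^ 2 + ‖x₂ - x₀‖ ^ 2)
    {ρ : ℝ} (hρ : ρ < r) {a b : X} (ha : a ∈ closedBall x₀ ρ) (hb : b ∈ closedBall x₀ ρ)
    (hseg : ∀ σ ∈ Icc (0:ℝ) 1, ∃ x ∈ ball x₀ r, g x = g a + σ • (g b - g a)) :
    ∀ σ ∈ Icc (0:ℝ) 1, ∃ x ∈ closedBall x₀ ρ, g x = g a + σ • (g b - g a) := by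
  have hsub : closedBall x₀ ρ ⊆ closedBall x₀ r := closedBall_subset_closedBall hρ.le
  by_cases hab : g b = g a
  · intro σ _
    exact ⟨a, ha, by simp [hab]⟩
  choose! c hc hcy using hseg
  have hcB : ∀ σ ∈ Icc (0:ℝ) 1, c σ ∈ closedBall x₀ r := fun σ hσ => ball_subset_closedBall (hc σ hσ)
  have hccont : ContinuousOn c (Icc 0 1) := by
    intro t ht
    obtain ⟨δ, hδ, hv⟩ := LI (c t) (hc t ht)
    rw [ContinuousWithinAt, tendsto_iff_norm_sub_tendsto_zero]
    have hT : Tendsto (fun t' : ℝ => (t' - t) • (g b - g a)) (𝓝[Icc 0 1] t) (𝓝 0) := by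
      have : ContinuousAt (fun t' : ℝ => (t' - t) • (g b - g a)) t := by fun_prop
      have h := this.tendsto
      simp at h
      exact h.mono_left nhdsWithin_le_nhds
    have hT' : Tendsto (fun t' : ℝ => C * ‖(t' - t) • (g b - g a)‖) (𝓝[Icc 0 1] t) (𝓝 0) := by
      simpa using (hT.norm.const_mul C)
    refine tendsto_of_tendsto_of_tendsto_of_le_of_le' tendsto_const_nhds hT'
      (Eventually.of_forall fun _ => norm_nonneg _) ?_
    filter_upwards [hT.eventually (Metric.ball_mem_nhds 0 hδ), self_mem_nhdsWithin] with t' h1 h2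
    simp only [mem_ball, dist_zero_right] at h1
    obtain ⟨x', hx', hgx, hle⟩ := hv _ h1
    have : x' = c t' := by
      apply hinj hx' (hcB t' h2)
      rw [hgx, hcy t ht, hcy t' h2, sub_smul]; abel
    rwa [← this]
  have h0 : c 0 = a := hinj (hcB 0 (by simp)) (hsub ha) (by rw [hcy 0 (by simp)]; simp)
  have h1 : c 1 = b := hinj (hcB 1 (by simp)) (hsub hb) (by rw [hcy 1 (by simp)]; simp)
  obtain ⟨σ, hσ, hmax⟩ := isCompact_Icc.exists_isMaxOn (nonempty_Icc.2 zero_le_one)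
    ((hccont.sub (continuousOn_const (c := x₀))).norm)
  have hmax' : ∀ t ∈ Icc (0:ℝ) 1, ‖c t - x₀‖ ≤ ‖c σ - x₀‖ := fun t ht => hmax ht
  suffices hfin : c σ ∈ closedBall x₀ ρ by
    intro t ht
    refine ⟨c t, ?_, hcy t ht⟩
    rw [mem_closedBall, dist_eq_norm] at hfin ⊢
    exact (hmax' t ht).trans hfin
  rcases eq_or_lt_of_le hσ.1 with h | hσ0
  · rw [← h, h0]; exact ha
  rcases eq_or_lt_of_le hσ.2 with h | hσ1
  · rw [h, h1]; exact hb
  exfalso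
  obtain ⟨δ, hδ, hK⟩ := KEY (c σ) (hc σ hσ)
  have hcat : ContinuousAt c σ := hccont.continuousAt (Icc_mem_nhds hσ0 hσ1)
  have e1 : ∀ᶠ h in 𝓝[>] (0:ℝ), ‖c (σ + h) - c σ‖ < δ := by
    have : Tendsto (fun h => c (σ + h)) (𝓝 (0:ℝ)) (𝓝 (c σ)) := by
      refine hcat.tendsto.comp ?_
      have : ContinuousAt (fun h => σ + h) 0 := by fun_prop
      simpa using this.tendsto
    have := (Metric.tendsto_nhds.1 this δ hδ).filter_mono (nhdsWithin_le_nhds (s := Ioi 0))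
    simpa [dist_eq_norm] using this
  have e2 : ∀ᶠ h in 𝓝[>] (0:ℝ), ‖c (σ - h) - c σ‖ < δ := by
    have : Tendsto (fun h => c (σ - h)) (𝓝 (0:ℝ)) (𝓝 (c σ)) := by
      refine hcat.tendsto.comp ?_
      have : ContinuousAt (fun h => σ - h) 0 := by fun_prop
      simpa using this.tendsto
    have := (Metric.tendsto_nhds.1 this δ hδ).filter_mono (nhdsWithin_le_nhds (s := Ioi 0))
    simpa [dist_eq_norm] using this
  obtain ⟨h, ⟨⟨he1, he2⟩, he3⟩, he4⟩ := (((e1.and e2).and (Ioo_mem_nhdsGT hσ0)).and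
    (Ioo_mem_nhdsGT (sub_pos.2 hσ1))).exists
  have m1 : σ + h ∈ Icc (0:ℝ) 1 := ⟨by linarith [he3.1], by linarith [he4.2]⟩
  have m2 : σ - h ∈ Icc (0:ℝ) 1 := ⟨by linarith [he3.2], by linarith [he3.1]⟩
  have := hK _ (hcB _ m1) _ (hcB _ m2) he1 he2 ?_ ?_
  · have q1 := hmax' _ m1
    have q2 := hmax' _ m2
    have q3 : ‖c (σ + h) - x₀‖ ^ 2 ≤ ‖c σ - x₀‖ ^ 2 := by gcongr
    have q4 : ‖c (σ - h) - x₀‖ ^ 2 ≤ ‖c σ - x₀‖ ^ 2 := by gcongr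
    linarith
  · intro heq
    have := congrArg g heq
    rw [hcy _ m1, hcy _ hσ] at this
    have h3 : h • (g b - g a) = 0 := by
      have h4 : (σ + h) • (g b - g a) = σ • (g b - g a) := add_left_cancel this
      rw [add_smul] at h4
      simpa using h4
    rcases smul_eq_zero.1 h3 with h5 | h5
    · exact he3.1.ne' h5
    · exact hab (sub_eq_zero.1 h5)
  · rw [hcy _ m1, hcy _ hσ, hcy _ m2]; module

end abs
end RS
namespace RS

lemma real_induction {S : Set ℝ} (h0 : (0:ℝ) ∈ S)
    (hl : ∀ t ∈ Ioc (0:ℝ) 1, (∀ s ∈ Ico 0 t, s ∈ S) → t ∈ S)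
    (hr : ∀ t ∈ Ico (0:ℝ) 1, t ∈ S → S ∈ 𝓝[>] t) : (1:ℝ) ∈ S := by
  set A := {t ∈ Icc (0:ℝ) 1 | Icc 0 t ⊆ S} with hA
  have a_mem : (0:ℝ) ∈ A := ⟨by simp, by simp [h0]⟩
  have bdd_A : BddAbove A := ⟨1, fun t ht ↦ ht.1.2⟩
  set t₁ := sSup A
  have t₁_mem : t₁ ∈ Icc (0:ℝ) 1 :=
    ⟨le_csSup bdd_A a_mem, csSup_le ⟨0, a_mem⟩ (fun t ht ↦ ht.1.2)⟩
  have hlt : ∀ s ∈ Ico 0 t₁, s ∈ S := by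
    intro s hs
    obtain ⟨c, cA, tc⟩ : ∃ c ∈ A, s < c := (lt_csSup_iff bdd_A ⟨0, a_mem⟩).1 hs.2
    exact cA.2 ⟨hs.1, tc.le⟩
  have ht₁ : t₁ ∈ S := by
    rcases t₁_mem.1.eq_or_lt with h | h
    · rwa [← h]
    · exact hl t₁ ⟨h, t₁_mem.2⟩ hlt
  have hIcc : Icc 0 t₁ ⊆ S := by
    intro s hs
    rcases hs.2.eq_or_lt with h | h
    · rwa [h]
    · exact hlt s ⟨hs.1, h⟩
  suffices t₁ = 1 by rwa [← this]
  apply eq_of_le_of_not_lt t₁_mem.2 fun t₁b' ↦ ?_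
  obtain ⟨m, t₁m, H⟩ : ∃ m > t₁, Ioo t₁ m ⊆ S :=
    (mem_nhdsGT_iff_exists_Ioo_subset' t₁b').mp (hr t₁ ⟨t₁_mem.1, t₁b'⟩ ht₁)
  obtain ⟨t, hat, ht⟩ : ∃ t, t₁ < t ∧ t < min m 1 := exists_between (lt_min t₁m t₁b')
  have : t ∈ A := by
    refine ⟨⟨t₁_mem.1.trans hat.le, ht.le.trans (min_le_right _ _)⟩, fun t' ht' ↦ ?_⟩
    rcases le_or_gt t' t₁ with hcase | hcase
    · exact hIcc ⟨ht'.1, hcase⟩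
    · exact H ⟨hcase, ht'.2.trans_lt <| ht.trans_le <| min_le_left ..⟩
  have : t ≤ t₁ := le_csSup bdd_A this
  order

section abs
variable {X : Type*} [NormedAddCommGroup X] [InnerProductSpace ℝ X]

lemma line_lip {Y : Type*} [NormedAddCommGroup Y] {g : X → Y} {x₀ : X} {r C' : ℝ}
    (LC : ∀ x ∈ closedBall x₀ r, ∃ δ > 0, ∀ x' ∈ closedBall x₀ r, ‖x' - x‖ < δ →
      ‖g x' - g x‖ ≤ C' * ‖x' - x‖) {u w : X}
    (hu : ∀ t ∈ Icc (0:ℝ) 1, u + t • w ∈ closedBall x₀ r) :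
    ∀ t ∈ Icc (0:ℝ) 1, ∀ᶠ t' in 𝓝 t, t' ∈ Icc (0:ℝ) 1 →
      ‖g (u + t' • w) - g (u + t • w)‖ ≤ (C' * ‖w‖) * |t' - t| := by
  intro t ht
  obtain ⟨δ, hδ, h⟩ := LC _ (hu t ht)
  have hc : ContinuousAt (fun t' : ℝ => u + t' • w) t := by fun_prop
  filter_upwards [hc.eventually (Metric.ball_mem_nhds _ hδ)] with t' h1 h2
  rw [dist_eq_norm] at h1
  refine (h _ (hu t' h2) h1).trans (le_of_eq ?_)
  have : u + t' • w - (u + t • w) = (t' - t) • w := by module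
  rw [this, norm_smul, Real.norm_eq_abs]; ring

lemma lc_cont {Y : Type*} [NormedAddCommGroup Y] {g : X → Y} {x₀ : X} {r C' : ℝ}
    (LC : ∀ x ∈ closedBall x₀ r, ∃ δ > 0, ∀ x' ∈ closedBall x₀ r, ‖x' - x‖ < δ →
      ‖g x' - g x‖ ≤ C' * ‖x' - x‖) : ContinuousOn g (closedBall x₀ r) := by
  intro x hx
  obtain ⟨δ, hδ, h⟩ := LC x hx
  rw [ContinuousWithinAt, tendsto_iff_norm_sub_tendsto_zero]
  have hT : Tendsto (fun x' : X => C' * ‖x' - x‖) (𝓝[closedBall x₀ r] x) (𝓝 0) := by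
    have : ContinuousAt (fun x' : X => C' * ‖x' - x‖) x := by fun_prop
    have h := this.tendsto
    simp at h
    exact h.mono_left nhdsWithin_le_nhds
  refine tendsto_of_tendsto_of_tendsto_of_le_of_le' tendsto_const_nhds hT
    (Eventually.of_forall fun _ => norm_nonneg _) ?_
  filter_upwards [nhdsWithin_le_nhds (Metric.ball_mem_nhds x hδ), self_mem_nhdsWithin] with x' h1 h2
  rw [mem_ball, dist_eq_norm] at h1
  exact h x' h2 h1

variable [CompleteSpace X]

lemma abs_strict {g : X → X} {x₀ : X} {r C C' : ℝ} (hC : 0 ≤ C)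
    (hinj : InjOn g (closedBall x₀ r))
    (LC : ∀ x ∈ closedBall x₀ r, ∃ δ > 0, ∀ x' ∈ closedBall x₀ r, ‖x' - x‖ < δ →
      ‖g x' - g x‖ ≤ C' * ‖x' - x‖)
    (LI : ∀ x ∈ ball x₀ r, ∃ δ > 0, ∀ v : X, ‖v‖ < δ →
      ∃ x' ∈ closedBall x₀ r, g x' = g x + v ∧ ‖x' - x‖ ≤ C * ‖v‖)
    (KEY : ∀ x ∈ ball x₀ r, ∃ δ > 0, ∀ x₁ ∈ closedBall x₀ r, ∀ x₂ ∈ closedBall x₀ r,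
      ‖x₁ - x‖ < δ → ‖x₂ - x‖ < δ → x₁ ≠ x → g x₁ + g x₂ = (2:ℝ) • g x →
      2 * ‖x - x₀‖ ^ 2 < ‖x₁ - x₀‖ ^ 2 + ‖x₂ - x₀‖ ^ 2)
    {ρ : ℝ} (hρ : ρ < r) {a b : X} (ha : a ∈ closedBall x₀ ρ) (hb : b ∈ closedBall x₀ ρ) :
    ∀ σ ∈ Icc (0:ℝ) 1, ∃ x ∈ closedBall x₀ ρ, g x = g a + σ • (g b - g a) := by
  have hsub : closedBall x₀ ρ ⊆ closedBall x₀ r := closedBall_subset_closedBall hρ.le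
  have hsub' : closedBall x₀ ρ ⊆ ball x₀ r := closedBall_subset_ball hρ
  have hline : ∀ t ∈ Icc (0:ℝ) 1, a + t • (b - a) ∈ closedBall x₀ ρ := by
    intro t ht
    exact (convex_closedBall x₀ ρ).add_smul_sub_mem ha hb ht
  have hcont := lc_cont LC
  have hq := line_lip LC (fun t ht => hsub (hline t ht))
  have hqc : ContinuousOn (fun t : ℝ => g (a + t • (b - a))) (Icc 0 1) :=
    hcont.comp (by fun_prop) (fun t ht => hsub (hline t ht))
  have hopen : IsOpen (g '' ball x₀ r) := by
    rw [Metric.isOpen_iff]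
    rintro _ ⟨x, hx, rfl⟩
    obtain ⟨δ, hδ, h⟩ := LI x hx
    rw [mem_ball, dist_eq_norm] at hx
    have hpos : 0 < (r - ‖x - x₀‖) / (C + 1) := div_pos (by linarith) (by linarith)
    refine ⟨min δ ((r - ‖x - x₀‖) / (C + 1)), lt_min hδ hpos, ?_⟩
    intro y hy
    rw [mem_ball, dist_eq_norm, lt_min_iff] at hy
    obtain ⟨x', hx', h1, h2⟩ := h _ hy.1
    refine ⟨x', ?_, by rw [h1]; abel⟩
    rw [mem_ball, dist_eq_norm]
    have h3 := hy.2
    rw [lt_div_iff₀ (by linarith)] at h3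
    calc ‖x' - x₀‖ = ‖(x' - x) + (x - x₀)‖ := by congr 1; abel
      _ ≤ _ := norm_add_le _ _
      _ < r := by nlinarith [norm_nonneg (y - g x)]
  let S : Set ℝ := {t | ∀ σ ∈ Icc (0:ℝ) 1, ∃ x ∈ closedBall x₀ ρ,
    g x = g a + σ • (g (a + t • (b - a)) - g a)}
  have h1 : (1:ℝ) ∈ S := by
    apply real_induction
    · intro σ _
      exact ⟨a, ha, by simp⟩
    · intro t ht hS σ hσ
      refine lift (τ := t) (L := C' * ‖b - a‖) (y := fun t => g a + σ • (g (a + t • (b - a)) - g a))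
        hC hinj hcont LI hρ.le ht.1 ?_ ?_ ?_
      · exact continuousOn_const.add (continuousOn_const.smul
          ((hqc.mono (Icc_subset_Icc_right ht.2)).sub continuousOn_const))
      · intro s hs
        filter_upwards [hq s ⟨hs.1, hs.2.le.trans ht.2⟩] with s' h1 h2
        have h3 := h1 ⟨h2.1, h2.2.trans ht.2⟩
        have : g a + σ • (g (a + s' • (b - a)) - g a) - (g a + σ • (g (a + s • (b - a)) - g a))
          = σ • (g (a + s' • (b - a)) - g (a + s • (b - a))) := by module
        rw [this, norm_smul, Real.norm_eq_abs, abs_of_nonneg hσ.1]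
        refine le_trans ?_ h3
        exact mul_le_of_le_one_left (norm_nonneg _) hσ.2
      · intro s hs
        obtain ⟨x, hx, hgx⟩ := hS s hs σ hσ
        exact ⟨x, ⟨hx, hsub' hx⟩, hgx⟩
    · intro t ht hS
      have hmp : ∀ t' ∈ Icc (0:ℝ) 1, (∀ σ ∈ Icc (0:ℝ) 1,
          g a + σ • (g (a + t' • (b - a)) - g a) ∈ g '' ball x₀ r) → t' ∈ S := by
        intro t' ht' h
        exact maxprin hinj LI KEY hρ ha (hline t' ht') h
      have hev : ∀ᶠ t' in 𝓝[Icc 0 1] t, ∀ σ ∈ Icc (0:ℝ) 1,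
          g a + σ • (g (a + t' • (b - a)) - g a) ∈ g '' ball x₀ r := by
        let f : X → ℝ → X := fun p σ => g a + σ • (p - g a)
        have hf : Continuous (Function.uncurry f) := by
          simp only [f, Function.uncurry_def]; fun_prop
        have hU : ∀ᶠ p in 𝓝 (g (a + t • (b - a))), ∀ σ ∈ Icc (0:ℝ) 1, f p σ ∈ g '' ball x₀ r := by
          refine isCompact_Icc.eventually_forall_of_forall_eventually ?_
          intro σ hσ
          refine hf.continuousAt.eventually (hopen.mem_nhds ?_)
          obtain ⟨x, hx, hgx⟩ := hS σ hσ
          exact ⟨x, hsub' hx, hgx⟩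
        exact (hqc t ⟨ht.1, ht.2.le⟩).eventually hU
      have : 𝓝[>] t ≤ 𝓝[Icc 0 1] t := by
        rw [← nhdsWithin_Ioo_eq_nhdsGT ht.2]
        exact nhdsWithin_mono _ (fun s hs => ⟨ht.1.trans hs.1.le, hs.2.le⟩)
      filter_upwards [this hev, Ioo_mem_nhdsGT ht.2] with s h1 h2
      exact hmp s ⟨ht.1.trans h2.1.le, h2.2.le⟩ h1
  intro σ hσ
  simpa [S] using h1 σ hσ

theorem abs_convex {g : X → X} {x₀ : X} {r C C' : ℝ} (hr : 0 < r) (hC : 0 ≤ C)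
    (hinj : InjOn g (closedBall x₀ r))
    (LC : ∀ x ∈ closedBall x₀ r, ∃ δ > 0, ∀ x' ∈ closedBall x₀ r, ‖x' - x‖ < δ →
      ‖g x' - g x‖ ≤ C' * ‖x' - x‖)
    (LI : ∀ x ∈ ball x₀ r, ∃ δ > 0, ∀ v : X, ‖v‖ < δ →
      ∃ x' ∈ closedBall x₀ r, g x' = g x + v ∧ ‖x' - x‖ ≤ C * ‖v‖)
    (KEY : ∀ x ∈ ball x₀ r, ∃ δ > 0, ∀ x₁ ∈ closedBall x₀ r, ∀ x₂ ∈ closedBall x₀ r,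
      ‖x₁ - x‖ < δ → ‖x₂ - x‖ < δ → x₁ ≠ x → g x₁ + g x₂ = (2:ℝ) • g x →
      2 * ‖x - x₀‖ ^ 2 < ‖x₁ - x₀‖ ^ 2 + ‖x₂ - x₀‖ ^ 2) :
    Convex ℝ (g '' closedBall x₀ r) := by
  rw [convex_iff_segment_subset]
  rintro _ ⟨a, ha, rfl⟩ _ ⟨b, hb, rfl⟩ y hy
  rw [segment_eq_image'] at hy
  obtain ⟨σ, hσ, rfl⟩ := hy
  have hcont := lc_cont LC
  have hmem : ∀ u ∈ closedBall x₀ r, ∀ t ∈ Icc (0:ℝ) 1,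
      x₀ + t • (u - x₀) ∈ closedBall x₀ (t * r) := by
    intro u hu t ht
    rw [mem_closedBall, dist_eq_norm] at hu ⊢
    rw [add_sub_cancel_left, norm_smul, Real.norm_eq_abs, abs_of_nonneg ht.1]
    exact mul_le_mul_of_nonneg_left hu ht.1
  have hmem' : ∀ u ∈ closedBall x₀ r, ∀ t ∈ Icc (0:ℝ) 1,
      x₀ + t • (u - x₀) ∈ closedBall x₀ r := fun u hu t ht =>
    closedBall_subset_closedBall (by nlinarith [ht.1, ht.2]) (hmem u hu t ht)
  have hla := line_lip LC (hmem' a ha)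
  have hlb := line_lip LC (hmem' b hb)
  have hca : ContinuousOn (fun t : ℝ => g (x₀ + t • (a - x₀))) (Icc 0 1) :=
    hcont.comp (by fun_prop) (hmem' a ha)
  have hcb : ContinuousOn (fun t : ℝ => g (x₀ + t • (b - x₀))) (Icc 0 1) :=
    hcont.comp (by fun_prop) (hmem' b hb)
  have := lift (τ := 1) (ρ := r) (L := C' * ‖a - x₀‖ + C' * ‖b - x₀‖)
    (y := fun t => g (x₀ + t • (a - x₀)) + σ • (g (x₀ + t • (b - x₀)) - g (x₀ + t • (a - x₀))))
    hC hinj hcont LI le_rfl one_pos (hca.add (continuousOn_const.smul (hcb.sub hca))) ?_ ?_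
  · obtain ⟨x, hx, h⟩ := this
    exact ⟨x, hx, by simpa using h⟩
  · intro t ht
    filter_upwards [hla t ⟨ht.1, ht.2.le⟩, hlb t ⟨ht.1, ht.2.le⟩] with s h1 h2 hs
    have h1 := h1 hs
    have h2 := h2 hs
    have heq : g (x₀ + s • (a - x₀)) + σ • (g (x₀ + s • (b - x₀)) - g (x₀ + s • (a - x₀)))
      - (g (x₀ + t • (a - x₀)) + σ • (g (x₀ + t • (b - x₀)) - g (x₀ + t • (a - x₀))))
      = (1 - σ) • (g (x₀ + s • (a - x₀)) - g (x₀ + t • (a - x₀)))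
        + σ • (g (x₀ + s • (b - x₀)) - g (x₀ + t • (b - x₀))) := by module
    rw [heq]
    refine (norm_add_le _ _).trans ?_
    rw [norm_smul, norm_smul, Real.norm_eq_abs, Real.norm_eq_abs, abs_of_nonneg hσ.1,
      abs_of_nonneg (sub_nonneg.2 hσ.2), add_mul]
    refine add_le_add (le_trans ?_ h1) (le_trans ?_ h2)
    · exact mul_le_of_le_one_left (norm_nonneg _) (by linarith [hσ.1])
    · exact mul_le_of_le_one_left (norm_nonneg _) hσ.2
  · intro t ht
    have hlt : t * r < r := by nlinarith [ht.2]
    obtain ⟨x, hx, h⟩ := abs_strict hC hinj LC LI KEY hlt (hmem a ha t ⟨ht.1, ht.2.le⟩)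
      (hmem b hb t ⟨ht.1, ht.2.le⟩) σ hσ
    exact ⟨x, ⟨closedBall_subset_closedBall hlt.le hx, closedBall_subset_ball hlt hx⟩, h⟩

end abs
end RS
namespace RS
section mu
variable {X : Type*} [NormedAddCommGroup X] [InnerProductSpace ℝ X]

lemma mu_bdd (A : X →L[ℝ] X) : BddAbove {c : ℝ | ∃ y : X, ‖y‖ = 1 ∧ c = ⟪A y, y⟫} := by
  refine ⟨‖A‖, ?_⟩
  rintro _ ⟨y, hy, rfl⟩
  calc ⟪A y, y⟫ ≤ ‖A y‖ * ‖y‖ := real_inner_le_norm _ _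
    _ ≤ ‖A‖ * ‖y‖ * ‖y‖ := by gcongr; exact A.le_opNorm y
    _ = ‖A‖ := by simp [hy]

lemma inner_le_muPlus (A : X →L[ℝ] X) (y : X) : ⟪A y, y⟫ ≤ muPlus A * ‖y‖ ^ 2 := by
  by_cases hy : y = 0
  · simp [hy]
  have hn : ‖y‖ ≠ 0 := by simpa using hy
  have h : ⟪A (‖y‖⁻¹ • y), ‖y‖⁻¹ • y⟫ ≤ muPlus A :=
    le_csSup (mu_bdd A) ⟨‖y‖⁻¹ • y, by rw [norm_smul]; simp [hn], rfl⟩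
  rw [map_smul, real_inner_smul_left, real_inner_smul_right] at h
  calc ⟪A y, y⟫ = (‖y‖⁻¹ * (‖y‖⁻¹ * ⟪A y, y⟫)) * ‖y‖ ^ 2 := by field_simp
    _ ≤ _ := by gcongr

lemma muMinus_eq (A : X →L[ℝ] X) : muMinus A = - muPlus (-A) := by
  unfold muMinus muPlus
  rw [Real.sInf_def]
  congr 2
  ext c
  simp only [Set.mem_neg]
  constructor
  · rintro ⟨y, hy, h⟩
    exact ⟨y, hy, by simp [← h]⟩
  · rintro ⟨y, hy, h⟩
    exact ⟨y, hy, by simp [h]⟩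

lemma muPlus_neg (A : X →L[ℝ] X) : muPlus (-A) = - muMinus A := by
  rw [muMinus_eq, neg_neg]

lemma muMinus_neg (A : X →L[ℝ] X) : muMinus (-A) = - muPlus A := by
  rw [muMinus_eq, neg_neg]

lemma muMinus_le_inner (A : X →L[ℝ] X) (y : X) : muMinus A * ‖y‖ ^ 2 ≤ ⟪A y, y⟫ := by
  have := inner_le_muPlus (-A) y
  rw [muPlus_neg] at this
  simp at this
  linarith

variable [Nontrivial X]

lemma muPlus_le_add (A B : X →L[ℝ] X) : muPlus A ≤ muPlus B + ‖A - B‖ := by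
  obtain ⟨y, hy⟩ := exists_norm_eq X zero_le_one
  refine csSup_le ⟨_, y, hy, rfl⟩ ?_
  rintro _ ⟨y, hy, rfl⟩
  have h1 := inner_le_muPlus B y
  have h2 : ⟪(A - B) y, y⟫ ≤ ‖A - B‖ := by
    calc ⟪(A - B) y, y⟫ ≤ ‖(A - B) y‖ * ‖y‖ := real_inner_le_norm _ _
      _ ≤ ‖A - B‖ * ‖y‖ * ‖y‖ := by gcongr; exact (A - B).le_opNorm y
      _ = ‖A - B‖ := by simp [hy]
  rw [sub_apply, inner_sub_left] at h2
  simp only [hy] at h1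
  linarith

lemma muPlus_continuous : Continuous (muPlus : (X →L[ℝ] X) → ℝ) := by
  have : LipschitzWith 1 (muPlus : (X →L[ℝ] X) → ℝ) := by
    refine LipschitzWith.of_le_add fun A B => ?_
    rw [dist_eq_norm]
    exact muPlus_le_add A B
  exact this.continuous

lemma muMinus_continuous : Continuous (muMinus : (X →L[ℝ] X) → ℝ) := by
  have : (muMinus : (X →L[ℝ] X) → ℝ) = fun A => - muPlus (-A) := funext muMinus_eq
  rw [this]
  exact (muPlus_continuous.comp continuous_neg).neg

lemma muMinus_le_muPlus (A : X →L[ℝ] X) : muMinus A ≤ muPlus A := by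
  obtain ⟨y, hy⟩ := exists_norm_eq X zero_le_one
  have h1 := inner_le_muPlus A y
  have h2 := muMinus_le_inner A y
  simp only [hy] at h1 h2
  linarith

end mu

lemma antideriv {m : ℝ → ℝ} {T : ℝ} (hT : 0 ≤ T) (hm : ContinuousOn m (Icc 0 T)) :
    ∃ E : ℝ → ℝ, E 0 = 0 ∧ ∀ s ∈ Icc 0 T, HasDerivWithinAt E (m s) (Icc 0 T) s := by
  have hc : Continuous (IccExtend hT ((Icc 0 T).domRestrict m)) :=
    (continuousOn_iff_continuous_domRestrict.1 hm).Icc_extend'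
  refine ⟨fun t => ∫ x in (0:ℝ)..t, IccExtend hT ((Icc 0 T).domRestrict m) x, by simp, ?_⟩
  intro s hs
  have := (hc.integral_hasStrictDerivAt 0 s).hasDerivAt.hasDerivWithinAt (s := Icc 0 T)
  rwa [IccExtend_of_mem _ _ hs] at this

/-- An ODE on `[0, T]`. -/
structure Sys (X : Type*) [NormedAddCommGroup X] [InnerProductSpace ℝ X] where
  T : ℝ
  hT : 0 ≤ T
  W : Set (ℝ × X)
  hW : IsOpen W
  F : ℝ → X → X
  F' : ℝ → X → X →L[ℝ] X
  M : ℝ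
  hM : 0 ≤ M
  hFc : ContinuousOn (fun p : ℝ × X => F p.1 p.2) (W ∩ Icc 0 T ×ˢ univ)
  hFc' : ContinuousOn (fun p : ℝ × X => F' p.1 p.2) (W ∩ Icc 0 T ×ˢ univ)
  hd : ∀ s ∈ Icc 0 T, ∀ x, (s, x) ∈ W → HasFDerivAt (F s) (F' s x) x
  hL : ∀ s ∈ Icc 0 T, ∀ x y, (∀ z ∈ segment ℝ x y, (s, z) ∈ W) →
    ‖F' s y - F' s x‖ ≤ M * ‖y - x‖

namespace Sys
variable {X : Type*} [NormedAddCommGroup X] [InnerProductSpace ℝ X] (S : Sys X)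

/-- Solutions on `[0, T]`. -/
def Sol (ξ : ℝ → X) : Prop :=
  ∀ s ∈ Icc 0 S.T, (s, ξ s) ∈ S.W ∧ HasDerivWithinAt ξ (S.F s (ξ s)) (Icc 0 S.T) s

/-- Time reversal. -/
def rev : Sys X where
  T := S.T
  hT := S.hT
  W := (fun p : ℝ × X => (S.T - p.1, p.2)) ⁻¹' S.W
  hW := S.hW.preimage (by fun_prop)
  F := fun s x => - S.F (S.T - s) x
  F' := fun s x => - S.F' (S.T - s) x
  M := S.M
  hM := S.hM
  hFc := (S.hFc.comp (f := fun p : ℝ × X => (S.T - p.1, p.2)) (by fun_prop) (by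
    rintro ⟨s, x⟩ ⟨h1, h2, -⟩
    simp only [mem_Icc] at h2
    exact ⟨h1, ⟨by simp only [mem_Icc]; constructor <;> linarith, trivial⟩⟩)).neg
  hFc' := (S.hFc'.comp (f := fun p : ℝ × X => (S.T - p.1, p.2)) (by fun_prop) (by
    rintro ⟨s, x⟩ ⟨h1, h2, -⟩
    simp only [mem_Icc] at h2
    exact ⟨h1, ⟨by simp only [mem_Icc]; constructor <;> linarith, trivial⟩⟩)).neg
  hd := fun s hs x hx => (S.hd (S.T - s) ⟨by linarith [hs.2], by linarith [hs.1]⟩ x hx).neg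
  hL := fun s hs x y h => by
    have := S.hL (S.T - s) ⟨by linarith [hs.2], by linarith [hs.1]⟩ x y h
    rwa [← neg_sub', norm_neg]

variable {S}

lemma Sol.rev {ξ : ℝ → X} (h : S.Sol ξ) : S.rev.Sol (fun s => ξ (S.T - s)) := by
  intro s hs
  change s ∈ Icc 0 S.T at hs
  have hs' : S.T - s ∈ Icc 0 S.T := ⟨by linarith [hs.2], by linarith [hs.1]⟩
  refine ⟨(h _ hs').1, ?_⟩
  have h1 : HasDerivWithinAt (fun s => S.T - s) (-1) (Icc 0 S.T) s :=
    ((hasDerivAt_id s).const_sub S.T).hasDerivWithinAt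
  have h2 := HasDerivWithinAt.scomp s (h _ hs').2 h1
    (fun u hu => ⟨by linarith [hu.2], by linarith [hu.1]⟩)
  convert! h2 using 1
  simp [Sys.rev]

lemma Sol.unrev {ξ : ℝ → X} (h : S.rev.Sol ξ) : S.Sol (fun s => ξ (S.T - s)) := by
  have := h.rev
  intro s hs
  have h2 := this s hs
  simpa [Sys.rev] using h2

lemma Sol.cont {ξ : ℝ → X} (h : S.Sol ξ) : ContinuousOn ξ (Icc 0 S.T) :=
  fun s hs => (h s hs).2.continuousWithinAt

lemma Sol.comp_cont {ξ : ℝ → X} (h : S.Sol ξ) :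
    ContinuousOn (fun s => S.F' s (ξ s)) (Icc 0 S.T) :=
  S.hFc'.comp (f := fun s => (s, ξ s)) (continuousOn_id.prodMk h.cont)
    (fun s hs => ⟨(h s hs).1, hs, trivial⟩)

lemma Sol.tube {ξ : ℝ → X} (h : S.Sol ξ) :
    ∃ ρ > 0, ∀ s ∈ Icc 0 S.T, ∀ y, ‖y - ξ s‖ ≤ ρ → (s, y) ∈ S.W := by
  have hK : IsCompact ((fun s => (s, ξ s)) '' Icc 0 S.T) :=
    isCompact_Icc.image_of_continuousOn (continuousOn_id.prodMk h.cont)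
  obtain ⟨ρ, hρ, hsub⟩ := hK.exists_cthickening_subset_open S.hW (by
    rintro _ ⟨s, hs, rfl⟩
    exact (h s hs).1)
  refine ⟨ρ, hρ, fun s hs y hy => hsub ?_⟩
  refine mem_cthickening_of_dist_le (s, y) (s, ξ s) ρ _ (mem_image_of_mem _ hs) ?_
  rw [Prod.dist_eq, dist_self, dist_eq_norm]
  exact max_le hρ.le hy

lemma taylor {s : ℝ} (hs : s ∈ Icc 0 S.T) {x y : X}
    (h : ∀ z ∈ segment ℝ x y, (s, z) ∈ S.W) :
    ‖S.F s y - S.F s x - S.F' s x (y - x)‖ ≤ S.M / 2 * ‖y - x‖ ^ 2 := by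
  have hz : ∀ t ∈ Icc (0:ℝ) 1, x + t • (y - x) ∈ segment ℝ x y := fun t ht => by
    rw [segment_eq_image']; exact ⟨t, ht, rfl⟩
  have hD : ∀ t ∈ Icc (0:ℝ) 1, HasDerivAt
      (fun t : ℝ => S.F s (x + t • (y - x)) - S.F s x - t • S.F' s x (y - x))
      (S.F' s (x + t • (y - x)) (y - x) - S.F' s x (y - x)) t := by
    intro t ht
    have h1 : HasDerivAt (fun t : ℝ => x + t • (y - x)) (y - x) t := by
      simpa using ((hasDerivAt_id t).smul_const (y - x)).const_add x
    have h2 := (S.hd s hs _ (h _ (hz t ht))).comp_hasDerivAt t h1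
    have h3 : HasDerivAt (fun t : ℝ => t • S.F' s x (y - x)) (S.F' s x (y - x)) t := by
      simpa using ((hasDerivAt_id t).smul_const (S.F' s x (y - x)))
    exact (h2.sub_const _).sub h3
  have := image_norm_le_of_norm_deriv_right_le_deriv_boundary' (a := 0) (b := 1)
    (f := fun t : ℝ => S.F s (x + t • (y - x)) - S.F s x - t • S.F' s x (y - x))
    (f' := fun t => S.F' s (x + t • (y - x)) (y - x) - S.F' s x (y - x))
    (B := fun t => S.M / 2 * ‖y - x‖ ^ 2 * t ^ 2) (B' := fun t => S.M * ‖y - x‖ ^ 2 * t)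
    (fun t ht => (hD t ht).continuousAt.continuousWithinAt)
    (fun t ht => (hD t ⟨ht.1, ht.2.le⟩).hasDerivWithinAt) (by simp) (by fun_prop)
    (fun t ht => by
      have := ((hasDerivAt_pow 2 t).const_mul (S.M / 2 * ‖y - x‖ ^ 2)).hasDerivWithinAt (s := Ici t)
      convert! this using 1
      simp; ring)
    (fun t ht => by
      have hseg : ∀ z ∈ segment ℝ x (x + t • (y - x)), (s, z) ∈ S.W := fun z hz' =>
        h z ((convex_segment x y).segment_subset (left_mem_segment ℝ x y)
          (hz t ⟨ht.1, ht.2.le⟩) hz')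
      have h1 := S.hL s hs _ _ hseg
      rw [add_sub_cancel_left, norm_smul, Real.norm_eq_abs, abs_of_nonneg ht.1] at h1
      rw [← sub_apply]
      calc _ ≤ _ := ContinuousLinearMap.le_opNorm _ _
        _ ≤ S.M * (t * ‖y - x‖) * ‖y - x‖ := by gcongr
        _ = _ := by ring)
    (right_mem_Icc.2 zero_le_one)
  simpa using this

lemma seg_tube {ρ : ℝ} {x y : X} (hy : ‖y - x‖ ≤ ρ) : ∀ z ∈ segment ℝ x y, ‖z - x‖ ≤ ρ := by
  intro z hz
  rw [segment_eq_image'] at hz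
  obtain ⟨t, ht, rfl⟩ := hz
  rw [add_sub_cancel_left, norm_smul, Real.norm_eq_abs, abs_of_nonneg ht.1]
  exact (mul_le_of_le_one_left (norm_nonneg _) ht.2).trans hy

lemma _root_.RS.toIci {E : Type*} [NormedAddCommGroup E] [NormedSpace ℝ E] {f : ℝ → E} {f' : E}
    {T s : ℝ} (h : HasDerivWithinAt f f' (Icc 0 T) s) (hs : s ∈ Ico 0 T) :
    HasDerivWithinAt f f' (Ici s) s := by
  refine h.mono_of_mem_nhdsWithin ?_
  exact mem_of_superset (Icc_mem_nhdsGE hs.2) (Icc_subset_Icc_left hs.1)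

lemma fwd {ξ : ℝ → X} (hξ : S.Sol ξ) {E : ℝ → ℝ} (hE0 : E 0 = 0)
    (hE : ∀ s ∈ Icc 0 S.T, HasDerivWithinAt E (muPlus (S.F' s (ξ s))) (Icc 0 S.T) s)
    {ε : ℝ} (hε : 0 < ε) :
    ∃ δ > 0, ∀ η, S.Sol η → ‖η 0 - ξ 0‖ < δ → ∀ s ∈ Icc 0 S.T,
      ‖η s - ξ s‖ ≤ ε ∧ ‖η s - ξ s‖ ≤ Real.exp (E s + ε * s) * ‖η 0 - ξ 0‖ := by
  obtain ⟨ρ, hρ, htube⟩ := hξ.tube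
  have hM := S.hM
  have hEc : ContinuousOn (fun s => E s + ε * s) (Icc 0 S.T) :=
    ContinuousOn.add (fun s hs => (hE s hs).continuousWithinAt) (by fun_prop)
  obtain ⟨B, hB⟩ := isCompact_Icc.bddAbove_image hEc
  have hB : ∀ s ∈ Icc 0 S.T, E s + ε * s ≤ B := fun s hs => hB ⟨s, hs, rfl⟩
  set ρ₁ := min ρ (min ε (ε / (S.M + 1))) with hρ₁
  have hρ₁p : 0 < ρ₁ := lt_min hρ (lt_min hε (by positivity))
  have hρ₁M : S.M / 2 * ρ₁ < ε := by
    have h1 : ρ₁ ≤ ε / (S.M + 1) := (min_le_right _ _).trans (min_le_right _ _)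
    rw [le_div_iff₀ (by linarith)] at h1
    nlinarith
  refine ⟨ρ₁ * Real.exp (-B), by positivity, fun η hη hδ => ?_⟩
  have main : ∀ κ, ‖η 0 - ξ 0‖ < κ → κ < ρ₁ * Real.exp (-B) → ∀ s ∈ Icc 0 S.T,
      ‖η s - ξ s‖ ≤ κ * Real.exp (E s + ε * s) := by
    intro κ h1 h2
    have hκ : 0 < κ := (norm_nonneg _).trans_lt h1
    have hder : ∀ s ∈ Icc 0 S.T, HasDerivWithinAt (fun s => (κ * Real.exp (E s + ε * s)) ^ 2)
        (2 * (muPlus (S.F' s (ξ s)) + ε) * (κ * Real.exp (E s + ε * s)) ^ 2) (Icc 0 S.T) s := by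
      intro s hs
      have h3 : HasDerivWithinAt (fun s => E s + ε * s) (muPlus (S.F' s (ξ s)) + ε)
          (Icc 0 S.T) s := by
        convert! (hE s hs).add (((hasDerivAt_id s).const_mul ε).hasDerivWithinAt) using 1
        simp
      have h4 := (h3.exp.const_mul κ).pow 2
      convert! h4 using 1
      simp; ring
    have hder2 : ∀ s ∈ Icc 0 S.T, HasDerivWithinAt (fun s => ‖η s - ξ s‖ ^ 2)
        (2 * ⟪η s - ξ s, S.F s (η s) - S.F s (ξ s)⟫) (Icc 0 S.T) s := by
      intro s hs
      exact ((hη s hs).2.sub (hξ s hs).2).norm_sq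
    have := image_le_of_deriv_right_lt_deriv_boundary' (a := 0) (b := S.T)
      (fun s hs => (hder2 s hs).continuousWithinAt)
      (fun s hs => toIci (hder2 s ⟨hs.1, hs.2.le⟩) hs)
      (B := fun s => (κ * Real.exp (E s + ε * s)) ^ 2)
      (by simp only [hE0]; simp only [mul_zero, add_zero, Real.exp_zero, mul_one]; gcongr)
      (fun s hs => (hder s hs).continuousWithinAt)
      (fun s hs => toIci (hder s ⟨hs.1, hs.2.le⟩) hs)
      (by
        intro s hs heq
        have hs' : s ∈ Icc 0 S.T := ⟨hs.1, hs.2.le⟩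
        have heq' : ‖η s - ξ s‖ = κ * Real.exp (E s + ε * s) := by
          rwa [sq_eq_sq₀ (norm_nonneg _) (by positivity)] at heq
        have hpos : 0 < ‖η s - ξ s‖ := by rw [heq']; positivity
        have hle : ‖η s - ξ s‖ ≤ ρ₁ := by
          rw [heq']
          calc κ * Real.exp (E s + ε * s) ≤ (ρ₁ * Real.exp (-B)) * Real.exp B := by
                gcongr; exact hB s hs'
            _ = ρ₁ := by rw [mul_assoc, ← Real.exp_add]; simp
        have ht := taylor hs' (x := ξ s) (y := η s) (fun z hz =>
          htube s hs' z ((seg_tube hle z hz).trans (min_le_left _ _)))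
        set d := η s - ξ s with hd
        set R := S.F s (η s) - S.F s (ξ s) - S.F' s (ξ s) d with hR
        have e1 : S.F s (η s) - S.F s (ξ s) = S.F' s (ξ s) d + R := by rw [hR]; abel
        have e2 : ⟪d, R⟫ ≤ S.M / 2 * ρ₁ * ‖d‖ ^ 2 := by
          calc ⟪d, R⟫ ≤ ‖d‖ * ‖R‖ := real_inner_le_norm _ _
            _ ≤ ‖d‖ * (S.M / 2 * ‖d‖ ^ 2) := by gcongr
            _ = S.M / 2 * ‖d‖ * ‖d‖ ^ 2 := by ring
            _ ≤ _ := by gcongr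
        have e3 := inner_le_muPlus (S.F' s (ξ s)) d
        rw [← heq, e1, inner_add_right, real_inner_comm]
        have e4 : S.M / 2 * ρ₁ * ‖d‖ ^ 2 < ε * ‖d‖ ^ 2 := by gcongr
        nlinarith)
    intro s hs
    have h5 := this hs
    exact (sq_le_sq₀ (norm_nonneg _) (by positivity)).1 h5
  intro s hs
  constructor
  · obtain ⟨κ, h1, h2⟩ := exists_between hδ
    calc _ ≤ _ := main κ h1 h2 s hs
      _ ≤ (ρ₁ * Real.exp (-B)) * Real.exp B := by
        gcongr; exact hB s hs
      _ = ρ₁ := by rw [mul_assoc, ← Real.exp_add]; simp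
      _ ≤ ε := (min_le_right _ _).trans (min_le_left _ _)
  · by_contra hcon
    push Not at hcon
    have h3 : ‖η 0 - ξ 0‖ < ‖η s - ξ s‖ / Real.exp (E s + ε * s) := by
      rw [lt_div_iff₀ (Real.exp_pos _), mul_comm]; exact hcon
    obtain ⟨κ, h1, h2⟩ := exists_between (lt_min h3 hδ)
    have h4 := main κ h1 (h2.trans_le (min_le_right _ _)) s hs
    have h5 := h2.trans_le (min_le_left _ _)
    rw [lt_div_iff₀ (Real.exp_pos _)] at h5
    linarith

end Sys
end RS
namespace RS

/-- Radial retraction. -/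
noncomputable def retr {X : Type*} [NormedAddCommGroup X] [InnerProductSpace ℝ X] (ρ : ℝ) (z : X) :
    X := (ρ / max ‖z‖ ρ) • z

section retr
variable {X : Type*} [NormedAddCommGroup X] [InnerProductSpace ℝ X] {ρ : ℝ}

lemma retr_of_le (hρ : 0 < ρ) {z : X} (hz : ‖z‖ ≤ ρ) : retr ρ z = z := by
  rw [retr, max_eq_right hz, div_self hρ.ne', one_smul]

lemma retr_norm_le (hρ : 0 < ρ) (z : X) : ‖retr ρ z‖ ≤ ρ := by
  have hm : 0 < max ‖z‖ ρ := lt_max_of_lt_right hρ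
  rw [retr, norm_smul, Real.norm_eq_abs, abs_of_pos (by positivity), div_mul_eq_mul_div,
    div_le_iff₀ hm]
  gcongr
  exact le_max_left _ _

lemma retr_lip (hρ : 0 < ρ) (x y : X) : ‖retr ρ x - retr ρ y‖ ≤ 2 * ‖x - y‖ := by
  have hx : 0 < max ‖x‖ ρ := lt_max_of_lt_right hρ
  have hy : 0 < max ‖y‖ ρ := lt_max_of_lt_right hρ
  have e : retr ρ x - retr ρ y
      = (ρ / max ‖x‖ ρ) • (x - y) + (ρ / max ‖x‖ ρ - ρ / max ‖y‖ ρ) • y := by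
    rw [retr, retr]; module
  have h1 : ρ / max ‖x‖ ρ ≤ 1 := (div_le_one hx).2 (le_max_right _ _)
  have h2 : ‖y‖ / max ‖y‖ ρ ≤ 1 := (div_le_one hy).2 (le_max_left _ _)
  have h3 : |max ‖y‖ ρ - max ‖x‖ ρ| ≤ ‖x - y‖ := by
    refine (abs_max_sub_max_le_abs _ _ _).trans ?_
    rw [abs_sub_comm]
    exact abs_norm_sub_norm_le x y
  have h4 : (ρ / max ‖x‖ ρ - ρ / max ‖y‖ ρ)
      = (ρ / max ‖x‖ ρ) * ((max ‖y‖ ρ - max ‖x‖ ρ) / max ‖y‖ ρ) := by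
    field_simp
  rw [e]
  refine (norm_add_le _ _).trans ?_
  rw [norm_smul, norm_smul, Real.norm_eq_abs, Real.norm_eq_abs, abs_of_pos (by positivity), h4,
    abs_mul, abs_of_pos (a := ρ / max ‖x‖ ρ) (by positivity), abs_div, abs_of_pos hy]
  have h5 : ρ / max ‖x‖ ρ * ‖x - y‖ ≤ 1 * ‖x - y‖ := by gcongr
  have h6 : ρ / max ‖x‖ ρ * (|max ‖y‖ ρ - max ‖x‖ ρ| / max ‖y‖ ρ) * ‖y‖ ≤ 1 * ‖x - y‖ := by
    calc _ = ρ / max ‖x‖ ρ * (|max ‖y‖ ρ - max ‖x‖ ρ| * (‖y‖ / max ‖y‖ ρ)) := by ring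
      _ ≤ 1 * (‖x - y‖ * 1) := by gcongr
      _ = _ := by ring
  linarith

end retr

namespace Sys
variable {X : Type*} [NormedAddCommGroup X] [InnerProductSpace ℝ X] {S : Sys X}

lemma near [CompleteSpace X] {ξ : ℝ → X} (hξ : S.Sol ξ) {L₀ : ℝ} (hL0 : 0 ≤ L₀)
    (hL : ∀ s ∈ Icc 0 S.T, ‖S.F' s (ξ s)‖ ≤ L₀) :
    ∃ δ > 0, ∀ v : X, ‖v‖ < δ → ∃ η, S.Sol η ∧ η 0 = ξ 0 + v ∧
      ∀ s ∈ Icc 0 S.T, ‖η s - ξ s‖ ≤ Real.exp ((L₀ + 1) * 2 * S.T) * ‖v‖ := by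
  obtain ⟨ρ₀, hρ₀, htube⟩ := hξ.tube
  have hM := S.hM
  have hT := S.hT
  set ρ := min ρ₀ (1 / (S.M + 1)) with hρdef
  have hρ : 0 < ρ := lt_min hρ₀ (by positivity)
  have hMρ : S.M * ρ ≤ 1 := by
    have h1 : ρ ≤ 1 / (S.M + 1) := min_le_right _ _
    rw [le_div_iff₀ (by linarith)] at h1
    nlinarith
  have hW : ∀ s ∈ Icc 0 S.T, ∀ y ∈ closedBall (ξ s) ρ, (s, y) ∈ S.W := by
    intro s hs y hy
    rw [mem_closedBall, dist_eq_norm] at hy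
    exact htube s hs y (hy.trans (min_le_left _ _))
  have hF'b : ∀ s ∈ Icc 0 S.T, ∀ y ∈ closedBall (ξ s) ρ, ‖S.F' s y‖ ≤ L₀ + 1 := by
    intro s hs y hy
    have hy' : ‖y - ξ s‖ ≤ ρ := by rwa [mem_closedBall, dist_eq_norm] at hy
    have h1 := S.hL s hs (ξ s) y (fun z hz => htube s hs z
      ((seg_tube hy' z hz).trans (min_le_left _ _)))
    have h2 : S.M * ‖y - ξ s‖ ≤ S.M * ρ := by gcongr
    have h3 := norm_le_norm_add_norm_sub' (S.F' s y) (S.F' s (ξ s))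
    linarith [hL s hs]
  have hFlip : ∀ s ∈ Icc 0 S.T, ∀ x ∈ closedBall (ξ s) ρ, ∀ y ∈ closedBall (ξ s) ρ,
      ‖S.F s y - S.F s x‖ ≤ (L₀ + 1) * ‖y - x‖ := by
    intro s hs x hx y hy
    exact (convex_closedBall (ξ s) ρ).norm_image_sub_le_of_norm_hasFDerivWithin_le
      (fun z hz => (S.hd s hs z (hW s hs z hz)).hasFDerivWithinAt) (hF'b s hs) hx hy
  let G : ℝ → X → X := fun s z => S.F s (ξ s + retr ρ z) - S.F s (ξ s)
  have hmem : ∀ s z, ξ s + retr ρ z ∈ closedBall (ξ s) ρ := by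
    intro s z
    rw [mem_closedBall, dist_eq_norm, add_sub_cancel_left]
    exact retr_norm_le hρ z
  have hGlip : ∀ s ∈ Icc 0 S.T, ∀ z w, ‖G s z - G s w‖ ≤ ((L₀ + 1) * 2) * ‖z - w‖ := by
    intro s hs z w
    have h1 := hFlip s hs _ (hmem s w) _ (hmem s z)
    have h2 : G s z - G s w = S.F s (ξ s + retr ρ z) - S.F s (ξ s + retr ρ w) := by
      simp only [G]; abel
    rw [h2]
    refine h1.trans ?_
    rw [add_sub_add_left_eq_sub, mul_assoc]
    gcongr
    exact retr_lip hρ z w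
  have hG0 : ∀ s, G s 0 = 0 := by intro s; simp [G, retr]
  have hGn : ∀ s ∈ Icc 0 S.T, ∀ z, ‖G s z‖ ≤ ((L₀ + 1) * 2) * ‖z‖ := by
    intro s hs z
    simpa [hG0] using hGlip s hs z 0
  have hGb : ∀ s ∈ Icc 0 S.T, ∀ z, ‖G s z‖ ≤ (L₀ + 1) * ρ := by
    intro s hs z
    have h1 := hFlip s hs _ (mem_closedBall_self hρ.le) _ (hmem s z)
    refine h1.trans ?_
    rw [add_sub_cancel_left]
    gcongr
    exact retr_norm_le hρ z
  have hGc : ∀ z, ContinuousOn (fun s => G s z) (Icc 0 S.T) := by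
    intro z
    refine ContinuousOn.sub ?_ ?_
    · exact S.hFc.comp (f := fun s => (s, ξ s + retr ρ z))
        (continuousOn_id.prodMk (hξ.cont.add continuousOn_const))
        (fun s hs => ⟨hW s hs _ (hmem s z), hs, trivial⟩)
    · exact S.hFc.comp (f := fun s => (s, ξ s)) (continuousOn_id.prodMk hξ.cont)
        (fun s hs => ⟨(hξ s hs).1, hs, trivial⟩)
  have hPL : IsPicardLindelof G (⟨0, le_rfl, hT⟩ : Icc (0:ℝ) S.T) 0
      ((L₀ + 1) * ρ * S.T + 1).toNNReal 1 ((L₀ + 1) * ρ).toNNReal ((L₀ + 1) * 2).toNNReal := by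
    refine ⟨?_, fun z _ => hGc z, ?_, ?_⟩
    · intro s hs
      rw [lipschitzOnWith_iff_norm_sub_le]
      intro z _ w _
      rw [Real.coe_toNNReal _ (by positivity)]
      exact hGlip s hs z w
    · intro s hs z _
      rw [Real.coe_toNNReal _ (by positivity)]
      exact hGb s hs z
    · rw [Real.coe_toNNReal _ (by positivity), Real.coe_toNNReal _ (by positivity)]
      simp [max_eq_left hT]
  refine ⟨min 1 (ρ * Real.exp (-((L₀ + 1) * 2 * S.T))), lt_min one_pos (by positivity), ?_⟩
  intro v hv
  obtain ⟨hv1, hv2⟩ := lt_min_iff.1 hv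
  obtain ⟨α, hα0, hα⟩ := hPL.exists_eq_forall_mem_Icc_hasDerivWithinAt (x := v)
    (by simpa using hv1.le)
  have hα0 : α 0 = v := hα0
  have hgr := norm_le_gronwallBound_of_norm_deriv_right_le (f := α) (f' := fun s => G s (α s))
    (δ := ‖v‖) (K := (L₀ + 1) * 2) (ε := 0) (a := 0) (b := S.T)
    (fun s hs => (hα s hs).continuousWithinAt) (fun s hs => toIci (hα s ⟨hs.1, hs.2.le⟩) hs)
    (by rw [hα0]) (fun s hs => by simpa using hGn s ⟨hs.1, hs.2.le⟩ (α s))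
  have hαb : ∀ s ∈ Icc 0 S.T, ‖α s‖ ≤ Real.exp ((L₀ + 1) * 2 * S.T) * ‖v‖ := by
    intro s hs
    have h1 := hgr s hs
    rw [gronwallBound_ε0, sub_zero, mul_comm] at h1
    refine h1.trans ?_
    gcongr
    exact hs.2
  have hαρ : ∀ s ∈ Icc 0 S.T, ‖α s‖ ≤ ρ := by
    intro s hs
    calc ‖α s‖ ≤ _ := hαb s hs
      _ ≤ Real.exp ((L₀ + 1) * 2 * S.T) * (ρ * Real.exp (-((L₀ + 1) * 2 * S.T))) := by gcongr
      _ = ρ * (Real.exp ((L₀ + 1) * 2 * S.T) * Real.exp (-((L₀ + 1) * 2 * S.T))) := by ring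
      _ = ρ := by rw [← Real.exp_add]; simp
  refine ⟨fun s => ξ s + α s, ?_, by simp [hα0], fun s hs => by simpa using hαb s hs⟩
  intro s hs
  have hr := retr_of_le hρ (hαρ s hs)
  constructor
  · have := hW s hs _ (hmem s (α s))
    rwa [hr] at this
  · convert! (hξ s hs).2.add (hα s hs) using 1
    simp [G, hr]

lemma second [Nontrivial X] {ξ : ℝ → X} (hξ : S.Sol ξ) {M₁ : ℝ}
    (hM1 : ∀ s ∈ Icc 0 S.T, 2 * muPlus (S.F' s (ξ s)) - muMinus (S.F' s (ξ s)) ≤ M₁)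
    {k : ℝ → ℝ} (hk0 : k 0 = 0) (hk : ∀ s, HasDerivAt k (Real.exp (M₁ * s)) s)
    {ε : ℝ} (hε : 0 < ε) :
    ∃ δ > 0, ∀ η₁ η₂, S.Sol η₁ → S.Sol η₂ → ‖η₁ 0 - ξ 0‖ < δ → ‖η₂ 0 - ξ 0‖ < δ →
      η₁ S.T + η₂ S.T = (2:ℝ) • ξ S.T →
      ‖η₁ 0 + η₂ 0 - (2:ℝ) • ξ 0‖ ≤ (S.M / 2 * Real.exp (2 * ε * S.T) *
        (‖η₁ 0 - ξ 0‖ ^ 2 + ‖η₂ 0 - ξ 0‖ ^ 2)) * k S.T := by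
  have hM := S.hM
  have hT := S.hT
  obtain ⟨ρ, hρ, htube⟩ := hξ.tube
  obtain ⟨E, hE0, hE⟩ := antideriv hT (muPlus_continuous.comp_continuousOn hξ.comp_cont)
  obtain ⟨D, hD0, hD⟩ := antideriv hT (muMinus_continuous.comp_continuousOn hξ.comp_cont)
  simp only [Function.comp_apply] at hE hD
  obtain ⟨δ, hδ, hfwd⟩ := fwd hξ hE0 hE (lt_min hε hρ)
  refine ⟨δ, hδ, fun η₁ η₂ h1 h2 hd1 hd2 hend => ?_⟩
  have hED : ∀ s ∈ Icc 0 S.T, 2 * E s - D s ≤ M₁ * s := by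
    intro s hs
    have hder : ∀ s ∈ Icc 0 S.T, HasDerivWithinAt (fun s => 2 * E s - D s)
        (2 * muPlus (S.F' s (ξ s)) - muMinus (S.F' s (ξ s))) (Icc 0 S.T) s := fun s hs =>
      ((hE s hs).const_mul 2).sub (hD s hs)
    refine image_le_of_deriv_right_le_deriv_boundary (a := 0) (b := S.T)
      (fun s hs => (hder s hs).continuousWithinAt)
      (fun s hs => toIci (hder s ⟨hs.1, hs.2.le⟩) hs) (B := fun s => M₁ * s) (B' := fun _ => M₁)
      (by simp [hE0, hD0]) (by fun_prop) (fun s hs => ?_) (fun s hs => hM1 s ⟨hs.1, hs.2.le⟩) hs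
    simpa using ((hasDerivAt_id s).const_mul M₁).hasDerivWithinAt (s := Ici s)
  have hest : ∀ η, S.Sol η → ‖η 0 - ξ 0‖ < δ → ∀ s ∈ Icc 0 S.T,
      ‖S.F s (η s) - S.F s (ξ s) - S.F' s (ξ s) (η s - ξ s)‖
        ≤ S.M / 2 * (Real.exp (2 * E s + 2 * ε * s) * ‖η 0 - ξ 0‖ ^ 2) := by
    intro η hη hd s hs
    obtain ⟨q1, q2⟩ := hfwd η hη hd s hs
    have q3 := taylor hs (x := ξ s) (y := η s) (fun z hz =>
          htube s hs z ((seg_tube q1 z hz).trans (min_le_right _ _)))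
    refine q3.trans ?_
    gcongr
    have q4 : ‖η s - ξ s‖ ≤ Real.exp (E s + ε * s) * ‖η 0 - ξ 0‖ := by
      refine q2.trans ?_
      gcongr
      · exact hs.1
      · exact min_le_left _ _
    calc ‖η s - ξ s‖ ^ 2 ≤ (Real.exp (E s + ε * s) * ‖η 0 - ξ 0‖) ^ 2 := by gcongr
      _ = _ := by rw [mul_pow, ← Real.exp_nat_mul]; push_cast; congr 2; ring
  set Q := ‖η₁ 0 - ξ 0‖ ^ 2 + ‖η₂ 0 - ξ 0‖ ^ 2 with hQ
  have hQ0 : 0 ≤ Q := by positivity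
  set c := S.M / 2 * Real.exp (2 * ε * S.T) * Q with hc
  have hc0 : 0 ≤ c := by positivity
  let ω : ℝ → X := fun s => η₁ s + η₂ s - (2:ℝ) • ξ s
  let ω' : ℝ → X := fun s => S.F s (η₁ s) + S.F s (η₂ s) - (2:ℝ) • S.F s (ξ s)
  have hω : ∀ s ∈ Icc 0 S.T, HasDerivWithinAt ω (ω' s) (Icc 0 S.T) s := fun s hs =>
    ((h1 s hs).2.add (h2 s hs).2).sub ((hξ s hs).2.const_smul (2:ℝ))
  let Z : ℝ → X := fun s => Real.exp (-D s) • ω s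
  let Z' : ℝ → X := fun s => Real.exp (-D s) • (ω' s - muMinus (S.F' s (ξ s)) • ω s)
  have hZ : ∀ s ∈ Icc 0 S.T, HasDerivWithinAt Z (Z' s) (Icc 0 S.T) s := by
    intro s hs
    convert! (hD s hs).neg.exp.smul (hω s hs) using 1
    simp only [Z', Pi.neg_apply]
    module
  have hinner : ∀ s ∈ Icc 0 S.T, -(c * Real.exp (M₁ * s)) * ‖Z s‖ ≤ ⟪Z s, Z' s⟫ := by
    intro s hs
    set A := S.F' s (ξ s) with hA
    set R := (S.F s (η₁ s) - S.F s (ξ s) - A (η₁ s - ξ s))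
      + (S.F s (η₂ s) - S.F s (ξ s) - A (η₂ s - ξ s)) with hR
    have e1 : ω' s = A (ω s) + R := by
      simp only [ω, ω', hR, map_sub, map_add, map_smul]; module
    have e2 : ‖R‖ ≤ S.M / 2 * (Real.exp (2 * E s + 2 * ε * s) * Q) := by
      refine (norm_add_le _ _).trans ?_
      have := add_le_add (hest η₁ h1 hd1 s hs) (hest η₂ h2 hd2 s hs)
      refine this.trans (le_of_eq ?_)
      rw [hQ]; ring
    have e3 : Real.exp (-D s) * ‖R‖ ≤ c * Real.exp (M₁ * s) := by
      calc Real.exp (-D s) * ‖R‖ ≤ Real.exp (-D s) *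
            (S.M / 2 * (Real.exp (2 * E s + 2 * ε * s) * Q)) := by gcongr
        _ = S.M / 2 * Q * (Real.exp (-D s) * Real.exp (2 * E s + 2 * ε * s)) := by ring
        _ = S.M / 2 * Q * Real.exp ((2 * E s - D s) + 2 * ε * s) := by
          rw [← Real.exp_add]; congr 2; ring
        _ ≤ S.M / 2 * Q * Real.exp (M₁ * s + 2 * ε * S.T) := by
          gcongr
          · exact hED s hs
          · exact hs.2
        _ = _ := by rw [Real.exp_add, hc]; ring
    have e4 := muMinus_le_inner A (ω s)
    have e5 : ⟪Z s, Z' s⟫ = Real.exp (-D s) ^ 2 *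
        (⟪A (ω s), ω s⟫ - muMinus A * ‖ω s‖ ^ 2 + ⟪ω s, R⟫) := by
      simp only [Z, Z', e1, real_inner_smul_left, real_inner_smul_right, inner_sub_right,
        inner_add_right, real_inner_self_eq_norm_sq]
      rw [real_inner_comm (ω s) (A (ω s))]
      ring
    have e6 : -(‖ω s‖ * ‖R‖) ≤ ⟪ω s, R⟫ := by
      have := abs_real_inner_le_norm (ω s) R
      linarith [neg_abs_le ⟪ω s, R⟫]
    have e7 : ‖Z s‖ = Real.exp (-D s) * ‖ω s‖ := by
      simp only [Z, norm_smul, Real.norm_eq_abs, Real.abs_exp]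
    have hexp := Real.exp_pos (-D s)
    rw [e5, e7]
    calc -(c * Real.exp (M₁ * s)) * (Real.exp (-D s) * ‖ω s‖)
        ≤ -(Real.exp (-D s) * ‖R‖) * (Real.exp (-D s) * ‖ω s‖) := by gcongr
      _ = Real.exp (-D s) ^ 2 * (-(‖ω s‖ * ‖R‖)) := by ring
      _ ≤ _ := by gcongr; linarith
  have hZT : Z S.T = 0 := by
    simp only [Z, ω, hend, sub_self, smul_zero]
  have hZ0 : ‖Z 0‖ = ‖η₁ 0 + η₂ 0 - (2:ℝ) • ξ 0‖ := by
    simp [Z, ω, hD0]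
  rw [← hZ0]
  refine le_of_forall_pos_le_add fun κ hκ => ?_
  let N : ℝ → ℝ := fun s => Real.sqrt (‖Z s‖ ^ 2 + κ ^ 2)
  have hNpos : ∀ s, 0 < N s := fun s => Real.sqrt_pos.2 (by positivity)
  have hN : ∀ s ∈ Icc 0 S.T, HasDerivWithinAt (fun s => -N s) (-(⟪Z s, Z' s⟫ / N s))
      (Icc 0 S.T) s := by
    intro s hs
    have := (((hZ s hs).norm_sq.add_const (κ ^ 2)).sqrt (by positivity)).neg
    convert! this using 1
    simp only [N]
    field_simp
  have hZN : ∀ s, ‖Z s‖ ≤ N s := fun s => Real.le_sqrt_of_sq_le (by nlinarith)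
  have hfin := image_le_of_deriv_right_le_deriv_boundary (a := 0) (b := S.T)
    (fun s hs => (hN s hs).continuousWithinAt) (fun s hs => toIci (hN s ⟨hs.1, hs.2.le⟩) hs)
    (B := fun s => c * k s - N 0) (B' := fun s => c * Real.exp (M₁ * s))
    (by simp [hk0])
    (fun s hs => ((hk s).continuousAt.continuousWithinAt.const_mul c).sub continuousWithinAt_const)
    (fun s hs => (((hk s).const_mul c).sub_const _).hasDerivWithinAt)
    (fun s hs => by
      have hs' : s ∈ Icc 0 S.T := ⟨hs.1, hs.2.le⟩
      rw [neg_le, le_div_iff₀ (hNpos s)]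
      refine le_trans ?_ (hinner s hs')
      rw [neg_mul, neg_mul]
      have := hZN s
      gcongr)
    (right_mem_Icc.2 hT)
  have hNT : N S.T = κ := by
    simp only [N, hZT, norm_zero]
    rw [zero_pow two_ne_zero, zero_add, Real.sqrt_sq hκ.le]
  have := hZN 0
  simp only [hNT] at hfin
  linarith

end Sys
end RS
namespace RS
namespace Sys
variable {X : Type*} [NormedAddCommGroup X] [InnerProductSpace ℝ X] {S : Sys X}

lemma uniq [Nontrivial X] {ξ η : ℝ → X} (hξ : S.Sol ξ) (hη : S.Sol η) (h0 : η 0 = ξ 0) :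
    ∀ s ∈ Icc 0 S.T, η s = ξ s := by
  obtain ⟨E, hE0, hE⟩ := antideriv S.hT (muPlus_continuous.comp_continuousOn hξ.comp_cont)
  simp only [Function.comp_apply] at hE
  obtain ⟨δ, hδ, h⟩ := fwd hξ hE0 hE zero_lt_one
  intro s hs
  have := (h η hη (by simpa [h0] using hδ) s hs).2
  rw [h0, sub_self, norm_zero, mul_zero] at this
  exact sub_eq_zero.1 (norm_le_zero_iff.1 this)

lemma locLip [Nontrivial X] {M₁ : ℝ} {ξ : ℝ → X} (hξ : S.Sol ξ)
    (hM1 : ∀ s ∈ Icc 0 S.T, 2 * muPlus (S.F' s (ξ s)) - muMinus (S.F' s (ξ s)) ≤ M₁) :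
    ∃ δ > 0, ∀ η, S.Sol η → ‖η 0 - ξ 0‖ < δ → ∀ s ∈ Icc 0 S.T,
      (∀ z ∈ segment ℝ (ξ s) (η s), (s, z) ∈ S.W) ∧
      ‖η s - ξ s‖ ≤ Real.exp ((|M₁| + 1) * S.T) * ‖η 0 - ξ 0‖ := by
  obtain ⟨ρ, hρ, htube⟩ := hξ.tube
  obtain ⟨E, hE0, hE⟩ := antideriv S.hT (muPlus_continuous.comp_continuousOn hξ.comp_cont)
  simp only [Function.comp_apply] at hE
  obtain ⟨δ, hδ, h⟩ := fwd hξ hE0 hE (lt_min zero_lt_one hρ)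
  refine ⟨δ, hδ, fun η hη hd s hs => ?_⟩
  obtain ⟨h1, h2⟩ := h η hη hd s hs
  refine ⟨fun z hz => htube s hs z ((seg_tube h1 z hz).trans (min_le_right _ _)), h2.trans ?_⟩
  have hEs : E s ≤ M₁ * s := by
    have := image_le_of_deriv_right_le_deriv_boundary (a := 0) (b := S.T) (f := E)
      (fun s hs => (hE s hs).continuousWithinAt)
      (fun s hs => toIci (hE s ⟨hs.1, hs.2.le⟩) hs)
      (B := fun s => M₁ * s) (B' := fun _ => M₁) (by simp [hE0]) (by fun_prop)
      (fun s _ => by simpa using ((hasDerivAt_id s).const_mul M₁).hasDerivWithinAt)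
      (fun s hs => by
        have a1 := hM1 s ⟨hs.1, hs.2.le⟩
        have a2 := muMinus_le_muPlus (S.F' s (ξ s))
        linarith)
    exact this hs
  gcongr
  have h3 : M₁ * s ≤ |M₁| * s := mul_le_mul_of_nonneg_right (le_abs_self _) hs.1
  have h4 : min 1 ρ * s ≤ 1 * s := mul_le_mul_of_nonneg_right (min_le_left _ _) hs.1
  have h5 : (|M₁| + 1) * s ≤ (|M₁| + 1) * S.T :=
    mul_le_mul_of_nonneg_left hs.2 (by positivity)
  linarith

theorem core [Nontrivial X] [CompleteSpace X] {M₁ : ℝ}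
    (hM1 : ∀ s ∈ Icc 0 S.T, ∀ x, (s, x) ∈ S.W →
      2 * muPlus (S.F' s x) - muMinus (S.F' s x) ≤ M₁)
    {k : ℝ → ℝ} (hk0 : k 0 = 0) (hk : ∀ s, HasDerivAt k (Real.exp (M₁ * s)) s)
    (hkT : 0 ≤ k S.T) {x₀ : X} {r : ℝ} (hr : 0 < r) (φ : ℝ → X → X)
    (hφ : ∀ x ∈ closedBall x₀ r, φ 0 x = x ∧ S.Sol (fun s => φ s x))
    (hrad : r * S.M * k S.T ≤ 1) :
    Convex ℝ (φ S.T '' closedBall x₀ r) := by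
  have hT := S.hT
  have hM := S.hM
  have h0T : (0:ℝ) ∈ Icc 0 S.T := ⟨le_rfl, hT⟩
  have hTT : S.T ∈ Icc 0 S.T := ⟨hT, le_rfl⟩
  have hM1' : ∀ x ∈ closedBall x₀ r, ∀ s ∈ Icc 0 S.T,
      2 * muPlus (S.F' s (φ s x)) - muMinus (S.F' s (φ s x)) ≤ M₁ :=
    fun x hx s hs => hM1 s hs _ ((hφ x hx).2 s hs).1
  set C' := Real.exp ((|M₁| + 1) * S.T) with hC'
  have hC'p : 0 < C' := Real.exp_pos _
  have LCall : ∀ x ∈ closedBall x₀ r, ∃ δ > 0, ∀ x' ∈ closedBall x₀ r, ‖x' - x‖ < δ →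
      ∀ s ∈ Icc 0 S.T, (∀ z ∈ segment ℝ (φ s x) (φ s x'), (s, z) ∈ S.W) ∧
      ‖φ s x' - φ s x‖ ≤ C' * ‖x' - x‖ := by
    intro x hx
    obtain ⟨δ, hδ, h⟩ := locLip (hφ x hx).2 (hM1' x hx)
    refine ⟨δ, hδ, fun x' hx' hd s hs => ?_⟩
    have := h _ (hφ x' hx').2 (by simpa [(hφ x' hx').1, (hφ x hx).1] using hd) s hs
    simpa [(hφ x' hx').1, (hφ x hx).1] using this
  have hx₀ : x₀ ∈ closedBall x₀ r := mem_closedBall_self hr.le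
  obtain ⟨B, hB⟩ := isCompact_Icc.bddAbove_image ((hφ x₀ hx₀).2.comp_cont.norm)
  have hB : ∀ s ∈ Icc 0 S.T, ‖S.F' s (φ s x₀)‖ ≤ B := fun s hs => hB ⟨s, hs, rfl⟩
  have hB0 : 0 ≤ B := (norm_nonneg _).trans (hB 0 h0T)
  set L₀ := B + S.M * C' * r with hL₀
  have hL₀p : 0 ≤ L₀ := by positivity
  have hL₀b : ∀ x ∈ closedBall x₀ r, ∀ s ∈ Icc 0 S.T, ‖S.F' s (φ s x)‖ ≤ L₀ := by
    intro x hx s hs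
    have LC : ∀ x ∈ closedBall x₀ r, ∃ δ > 0, ∀ x' ∈ closedBall x₀ r, ‖x' - x‖ < δ →
        ‖S.F' s (φ s x') - S.F' s (φ s x)‖ ≤ (S.M * C') * ‖x' - x‖ := by
      intro x hx
      obtain ⟨δ, hδ, h⟩ := LCall x hx
      refine ⟨δ, hδ, fun x' hx' hd => ?_⟩
      obtain ⟨h1, h2⟩ := h x' hx' hd s hs
      calc _ ≤ _ := S.hL s hs _ _ h1
        _ ≤ S.M * (C' * ‖x' - x‖) := by gcongr
        _ = _ := by ring
    have hu : ∀ t ∈ Icc (0:ℝ) 1, x₀ + t • (x - x₀) ∈ closedBall x₀ r := fun t ht =>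
      (convex_closedBall x₀ r).add_smul_sub_mem hx₀ hx ht
    have hl := line_lip (g := fun x => S.F' s (φ s x)) LC hu
    have hc := lc_cont (g := fun x => S.F' s (φ s x)) LC
    have := chain (h := fun t : ℝ => S.F' s (φ s (x₀ + t • (x - x₀)))) (a := 0) (b := 1)
      (C := S.M * C' * ‖x - x₀‖) zero_le_one
      (hc.comp (f := fun t : ℝ => x₀ + t • (x - x₀)) (by fun_prop) hu)
      (fun t ht => by
        filter_upwards [(hl t ⟨ht.1, ht.2.le⟩).filter_mono nhdsWithin_le_nhds,
          Ioo_mem_nhdsGT ht.2] with t' h1 h2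
        have := h1 ⟨ht.1.trans h2.1.le, h2.2.le⟩
        rwa [abs_of_pos (sub_pos.2 h2.1)] at this)
    simp only [one_smul, zero_smul, add_zero, add_sub_cancel, sub_zero, mul_one] at this
    have h3 : ‖x - x₀‖ ≤ r := by rwa [mem_closedBall, dist_eq_norm] at hx
    have h4 : S.M * C' * ‖x - x₀‖ ≤ S.M * C' * r := by gcongr
    have h5 := norm_le_norm_add_norm_sub' (S.F' s (φ s x)) (S.F' s (φ s x₀))
    have h6 := hB s hs
    linarith
  have hinj : InjOn (φ S.T) (closedBall x₀ r) := by
    intro x hx y hy hxy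
    have := uniq (hφ x hx).2.rev (hφ y hy).2.rev (by simpa using hxy.symm) S.T hTT
    simp only [sub_self] at this
    rw [(hφ x hx).1, (hφ y hy).1] at this
    exact this.symm
  refine abs_convex (C := Real.exp ((L₀ + 1) * 2 * S.T)) (C' := C') hr (Real.exp_pos _).le hinj
    ?_ ?_ ?_
  · intro x hx
    obtain ⟨δ, hδ, h⟩ := LCall x hx
    exact ⟨δ, hδ, fun x' hx' hd => (h x' hx' hd S.T hTT).2⟩
  · intro x hx
    have hxc := ball_subset_closedBall hx
    obtain ⟨δ, hδ, h⟩ := near (hφ x hxc).2.rev hL₀p (fun s hs => by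
      change ‖- S.F' (S.T - s) (φ (S.T - s) x)‖ ≤ L₀
      rw [norm_neg]
      change s ∈ Icc 0 S.T at hs
      exact hL₀b x hxc _ ⟨by linarith [hs.2], by linarith [hs.1]⟩)
    rw [mem_ball, dist_eq_norm] at hx
    set C := Real.exp ((L₀ + 1) * 2 * S.T) with hC
    have hCp : 0 < C := Real.exp_pos _
    refine ⟨min δ ((r - ‖x - x₀‖) / C), lt_min hδ (div_pos (by linarith) hCp), fun v hv => ?_⟩
    obtain ⟨η, hη, hη0, hηs⟩ := h v (hv.trans_le (min_le_left _ _))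
    have hηT := hηs S.T hTT
    simp only [sub_self] at hηT
    rw [(hφ x hxc).1] at hηT
    change ‖η S.T - x‖ ≤ C * ‖v‖ at hηT
    have hv2 := hv.trans_le (min_le_right _ _)
    rw [lt_div_iff₀ hCp] at hv2
    have hmem : η S.T ∈ closedBall x₀ r := by
      rw [mem_closedBall, dist_eq_norm]
      have := norm_sub_le_norm_sub_add_norm_sub (η S.T) x x₀
      linarith
    refine ⟨η S.T, hmem, ?_, hηT⟩
    have := uniq hη.unrev (hφ _ hmem).2 (by simp [(hφ _ hmem).1]) S.T hTT
    simp only [sub_self] at this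
    rw [this, hη0]
    simp
  · intro x hx
    have hxc := ball_subset_closedBall hx
    rw [mem_ball, dist_eq_norm] at hx
    obtain ⟨ε, hε, hlt⟩ : ∃ ε > 0,
        ‖x - x₀‖ * S.M * k S.T * Real.exp (2 * ε * S.T) < 1 := by
      have h1 : ‖x - x₀‖ * S.M * k S.T * Real.exp (2 * 0 * S.T) < 1 := by
        simp only [mul_zero, zero_mul, Real.exp_zero, mul_one]
        rcases (mul_nonneg hM hkT).eq_or_lt with h | h
        · rw [mul_assoc, ← h]; simp
        · calc _ = ‖x - x₀‖ * (S.M * k S.T) := by ring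
            _ < r * (S.M * k S.T) := by gcongr
            _ = r * S.M * k S.T := by ring
            _ ≤ 1 := hrad
      have h2 : ContinuousAt (fun ε : ℝ => ‖x - x₀‖ * S.M * k S.T * Real.exp (2 * ε * S.T)) 0 := by
        fun_prop
      have h3 := (h2.eventually (Iio_mem_nhds h1)).filter_mono (nhdsWithin_le_nhds (s := Ioi 0))
      obtain ⟨ε, h4, h5⟩ := (h3.and self_mem_nhdsWithin).exists
      exact ⟨ε, h5, h4⟩
    obtain ⟨δ, hδ, h⟩ := second (hφ x hxc).2 (hM1' x hxc) hk0 hk hε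
    refine ⟨δ, hδ, fun x₁ hx₁ x₂ hx₂ hd1 hd2 hne heq => ?_⟩
    have hw := h _ _ (hφ x₁ hx₁).2 (hφ x₂ hx₂).2
      (by simpa [(hφ x₁ hx₁).1, (hφ x hxc).1] using hd1)
      (by simpa [(hφ x₂ hx₂).1, (hφ x hxc).1] using hd2) heq
    simp only [(hφ x₁ hx₁).1, (hφ x hxc).1, (hφ x₂ hx₂).1] at hw
    set Q := ‖x₁ - x‖ ^ 2 + ‖x₂ - x‖ ^ 2 with hQ
    set w := x₁ + x₂ - (2:ℝ) • x with hwdef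
    have hQp : 0 < Q := by
      have : 0 < ‖x₁ - x‖ := norm_pos_iff.2 (sub_ne_zero.2 hne)
      positivity
    have e1 : ‖x₁ - x₀‖ ^ 2 = ‖x₁ - x‖ ^ 2 + 2 * ⟪x₁ - x, x - x₀⟫ + ‖x - x₀‖ ^ 2 := by
      rw [← norm_add_sq_real]; congr 2; abel
    have e2 : ‖x₂ - x₀‖ ^ 2 = ‖x₂ - x‖ ^ 2 + 2 * ⟪x₂ - x, x - x₀⟫ + ‖x - x₀‖ ^ 2 := by
      rw [← norm_add_sq_real]; congr 2; abel
    have e3 : ⟪x₁ - x, x - x₀⟫ + ⟪x₂ - x, x - x₀⟫ = ⟪w, x - x₀⟫ := by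
      rw [← inner_add_left]; congr 1; rw [hwdef]; module
    have e4 : |⟪w, x - x₀⟫| ≤ ‖w‖ * ‖x - x₀‖ := abs_real_inner_le_norm _ _
    have e5 : ‖w‖ * ‖x - x₀‖ ≤ (S.M / 2 * Real.exp (2 * ε * S.T) * Q) * k S.T * ‖x - x₀‖ := by
      gcongr
    have e6 : (S.M / 2 * Real.exp (2 * ε * S.T) * Q) * k S.T * ‖x - x₀‖ < Q / 2 := by
      calc _ = (‖x - x₀‖ * S.M * k S.T * Real.exp (2 * ε * S.T)) * (Q / 2) := by ring
        _ < 1 * (Q / 2) := by gcongr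
        _ = _ := one_mul _
    have e7 := neg_abs_le ⟪w, x - x₀⟫
    linarith

end Sys
end RS
namespace RS
section fin
variable {X : Type*} [NormedAddCommGroup X] [InnerProductSpace ℝ X]

lemma quot_bdd {Y : Type*} [NormedAddCommGroup Y] {G : X → Y} {V : Set X} (hV : IsOpen V)
    {p : X} (hp : p ∈ V) {ε L : ℝ} (hε : 0 < ε)
    (hloc : ∀ x ∈ ball p ε, x ∈ V → ‖G x - G p‖ ≤ L * ‖x - p‖) :
    IsBoundedUnder (· ≤ ·) (𝓝[≠] (0:X)) (fun h : X => ‖G (p + h) - G p‖ / ‖h‖) := by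
  refine ⟨L, ?_⟩
  rw [eventually_map]
  have hc : Tendsto (fun h : X => p + h) (𝓝 0) (𝓝 p) := by
    have : ContinuousAt (fun h : X => p + h) 0 := by fun_prop
    simpa using this.tendsto
  have h1 := (hc.eventually (ball_mem_nhds p hε)).filter_mono (nhdsWithin_le_nhds (s := {0}ᶜ))
  have h2 := (hc.eventually (hV.mem_nhds hp)).filter_mono (nhdsWithin_le_nhds (s := {0}ᶜ))
  filter_upwards [h1, h2, self_mem_nhdsWithin] with h h1 h2 h3
  have h3' : 0 < ‖h‖ := norm_pos_iff.2 h3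
  rw [div_le_iff₀ h3']
  simpa using hloc _ h1 h2

lemma quot_nonneg [Nontrivial X] {Y : Type*} [NormedAddCommGroup Y] {G : X → Y} {p : X} {M : ℝ}
    (hb : IsBoundedUnder (· ≤ ·) (𝓝[≠] (0:X)) (fun h : X => ‖G (p + h) - G p‖ / ‖h‖))
    (hM : limsup (fun h : X => ‖G (p + h) - G p‖ / ‖h‖) (𝓝[≠] (0:X)) ≤ M) : 0 ≤ M := by
  haveI : (𝓝[≠] (0:X)).NeBot := Module.punctured_nhds_neBot ℝ X 0
  refine le_trans ?_ hM
  refine le_limsup_of_frequently_le ?_ hb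
  exact (Eventually.of_forall fun h => by positivity).frequently

lemma slope_lip {Y : Type*} [NormedAddCommGroup Y] {G : X → Y} {V : Set X} {M : ℝ}
    (hG : ContinuousOn G V)
    (hb : ∀ p ∈ V, IsBoundedUnder (· ≤ ·) (𝓝[≠] (0:X)) (fun h : X => ‖G (p + h) - G p‖ / ‖h‖))
    (hM : ∀ p ∈ V, limsup (fun h : X => ‖G (p + h) - G p‖ / ‖h‖) (𝓝[≠] (0:X)) ≤ M)
    {x y : X} (hxy : ∀ z ∈ segment ℝ x y, z ∈ V) : ‖G y - G x‖ ≤ M * ‖y - x‖ := by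
  by_cases hne : y = x
  · simp [hne]
  have hpos : 0 < ‖y - x‖ := norm_pos_iff.2 (sub_ne_zero.2 hne)
  have hz : ∀ t ∈ Icc (0:ℝ) 1, x + t • (y - x) ∈ V := fun t ht => by
    apply hxy; rw [segment_eq_image']; exact ⟨t, ht, rfl⟩
  have key : ∀ c, M < c → ‖G y - G x‖ ≤ c * ‖y - x‖ := by
    intro c hc
    have := chain (h := fun t : ℝ => G (x + t • (y - x))) (a := 0) (b := 1)
      (C := c * ‖y - x‖) zero_le_one
      (hG.comp (f := fun t : ℝ => x + t • (y - x)) (by fun_prop) hz)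
      (fun t ht => by
        have h1 := eventually_lt_of_limsup_lt ((hM _ (hz t ⟨ht.1, ht.2.le⟩)).trans_lt hc)
          (hb _ (hz t ⟨ht.1, ht.2.le⟩))
        rw [eventually_nhdsWithin_iff] at h1
        have h2 : Tendsto (fun t' : ℝ => (t' - t) • (y - x)) (𝓝 t) (𝓝 0) := by
          have : ContinuousAt (fun t' : ℝ => (t' - t) • (y - x)) t := by fun_prop
          simpa using this.tendsto
        filter_upwards [(h2.eventually h1).filter_mono nhdsWithin_le_nhds,
          self_mem_nhdsWithin] with t' h3 h4
        have h4' : 0 < t' - t := sub_pos.2 h4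
        have h5 := h3 (smul_ne_zero h4'.ne' (sub_ne_zero.2 hne))
        have e : x + t • (y - x) + (t' - t) • (y - x) = x + t' • (y - x) := by module
        rw [e, norm_smul, Real.norm_eq_abs, abs_of_pos h4', div_lt_iff₀ (by positivity)] at h5
        refine h5.le.trans (le_of_eq (by ring)))
    simpa using this
  refine le_of_forall_gt_imp_ge_of_dense fun a ha => ?_
  have := key (a / ‖y - x‖) ((lt_div_iff₀ hpos).2 ha)
  rwa [div_mul_cancel₀ _ hpos.ne'] at this

lemma kfun (M₁ : ℝ) : ∃ k : ℝ → ℝ, (∀ s, k s = if M₁ = 0 then s else (Real.exp (M₁ * s) - 1) / M₁) ∧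
    k 0 = 0 ∧ (∀ s, HasDerivAt k (Real.exp (M₁ * s)) s) ∧ ∀ s, 0 ≤ s → 0 ≤ k s := by
  by_cases h : M₁ = 0
  · refine ⟨fun s => s, fun s => by simp [h], rfl, fun s => ?_, fun s hs => hs⟩
    simp only [h, zero_mul, Real.exp_zero]
    exact hasDerivAt_id' s
  · refine ⟨fun s => (Real.exp (M₁ * s) - 1) / M₁, fun s => by simp [h], by simp, fun s => ?_, ?_⟩
    · have h1 : HasDerivAt (fun s => M₁ * s) M₁ s := by
        simpa using (hasDerivAt_id s).const_mul M₁
      have h2 := (h1.exp.sub_const 1).div_const M₁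
      rwa [mul_div_cancel_right₀ _ h] at h2
    · intro s hs
      rcases lt_or_gt_of_ne h with h1 | h1
      · refine div_nonneg_of_nonpos ?_ h1.le
        rw [sub_nonpos, Real.exp_le_one_iff]
        exact mul_nonpos_of_nonpos_of_nonneg h1.le hs
      · refine div_nonneg ?_ h1.le
        rw [sub_nonneg, Real.one_le_exp_iff]
        positivity

/-- The frozen theorem after normalizing the direction of time. -/
theorem directed [CompleteSpace X] [Nontrivial X]
    (W : Set (ℝ × X)) (hW : IsOpen W) (J : Set ℝ)
    (f : ℝ → X → X) (f' : ℝ → X → X →L[ℝ] X)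
    (hfc : ContinuousOn (fun p : ℝ × X => f p.1 p.2) (W ∩ J ×ˢ univ))
    (hf'c : ContinuousOn (fun p : ℝ × X => f' p.1 p.2) (W ∩ J ×ˢ univ))
    (hderiv : ∀ p ∈ W ∩ J ×ˢ (univ : Set X), HasFDerivAt (fun x => f p.1 x) (f' p.1 p.2) p.2)
    (hlip : ∀ p ∈ W ∩ J ×ˢ (univ : Set X), ∃ ε > 0, ∃ L : NNReal,
      ∀ x ∈ ball p.2 ε, ∀ y ∈ ball p.2 ε, (p.1, x) ∈ W ∩ J ×ˢ (univ : Set X) →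
        (p.1, y) ∈ W ∩ J ×ˢ (univ : Set X) → ‖f' p.1 x - f' p.1 y‖ ≤ L * ‖x - y‖)
    (x₀ : X) (r : ℝ) (hr : 0 < r) (t₀ σ T : ℝ) (hσ : σ = 1 ∨ σ = -1) (hT : 0 ≤ T)
    (hJ : ∀ s ∈ Icc 0 T, t₀ + σ * s ∈ J)
    (φ : ℝ → X → X)
    (hφ : ∀ x ∈ closedBall x₀ r, φ t₀ x = x ∧
      ∀ s ∈ Icc 0 T, (t₀ + σ * s, φ (t₀ + σ * s) x) ∈ W ∩ J ×ˢ (univ : Set X) ∧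
        HasDerivWithinAt (fun s => φ s x) (f (t₀ + σ * s) (φ (t₀ + σ * s) x))
          ((fun s => t₀ + σ * s) '' Icc 0 T) (t₀ + σ * s))
    (M₁ M₂ : ℝ)
    (hM₁ : ∀ p ∈ W ∩ J ×ˢ (univ : Set X),
      2 * muPlus (σ • f' p.1 p.2) - muMinus (σ • f' p.1 p.2) ≤ M₁)
    (hM₂ : ∀ p ∈ W ∩ J ×ˢ (univ : Set X),
      limsup (fun h : X => ‖f' p.1 (p.2 + h) - f' p.1 p.2‖ / ‖h‖) (𝓝[≠] (0:X)) ≤ M₂)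
    (hrad : r * M₂ * (if M₁ = 0 then T else (Real.exp (M₁ * T) - 1) / M₁) ≤ 1) :
    Convex ℝ ((fun x => φ (t₀ + σ * T) x) '' closedBall x₀ r) := by
  have hσn : ‖σ‖ = 1 := by rcases hσ with h | h <;> simp [h]
  have hVo : ∀ t, IsOpen {x : X | (t, x) ∈ W} := fun t => hW.preimage (by fun_prop)
  have hb : ∀ t ∈ J, ∀ p ∈ {x : X | (t, x) ∈ W}, IsBoundedUnder (· ≤ ·) (𝓝[≠] (0:X))
      (fun h : X => ‖f' t (p + h) - f' t p‖ / ‖h‖) := by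
    intro t ht p hp
    obtain ⟨ε, hε, L, h⟩ := hlip (t, p) ⟨hp, ht, trivial⟩
    exact quot_bdd (hVo t) hp hε (L := L) fun x hx hxV =>
      h x hx p (mem_ball_self hε) ⟨hxV, ht, trivial⟩ ⟨hp, ht, trivial⟩
  have hM₂0 : 0 ≤ M₂ := by
    have h1 := ((hφ x₀ (mem_closedBall_self hr.le)).2 0 ⟨le_rfl, hT⟩).1
    exact quot_nonneg (hb _ h1.2.1 _ h1.1) (hM₂ _ h1)
  have hcm : MapsTo (fun p : ℝ × X => (t₀ + σ * p.1, p.2))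
      (((fun p : ℝ × X => (t₀ + σ * p.1, p.2)) ⁻¹' W) ∩ Icc 0 T ×ˢ univ) (W ∩ J ×ˢ univ) := by
    rintro ⟨s, x⟩ ⟨h1, h2, -⟩
    exact ⟨h1, hJ s h2, trivial⟩
  let S : Sys X :=
    { T := T
      hT := hT
      W := (fun p : ℝ × X => (t₀ + σ * p.1, p.2)) ⁻¹' W
      hW := hW.preimage (by fun_prop)
      F := fun s x => σ • f (t₀ + σ * s) x
      F' := fun s x => σ • f' (t₀ + σ * s) x
      M := M₂
      hM := hM₂0
      hFc := (hfc.comp (f := fun p : ℝ × X => (t₀ + σ * p.1, p.2)) (by fun_prop) hcm).const_smul σ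
      hFc' := (hf'c.comp (f := fun p : ℝ × X => (t₀ + σ * p.1, p.2)) (by fun_prop)
        hcm).const_smul σ
      hd := fun s hs x hx => (hderiv (t₀ + σ * s, x) ⟨hx, hJ s hs, trivial⟩).const_smul σ
      hL := fun s hs x y h => by
        rw [← smul_sub, norm_smul, hσn, one_mul]
        refine slope_lip (G := f' (t₀ + σ * s)) (V := {x : X | (t₀ + σ * s, x) ∈ W}) ?_
          (hb _ (hJ s hs)) (fun p hp => hM₂ (t₀ + σ * s, p) ⟨hp, hJ s hs, trivial⟩) h
        exact hf'c.comp (f := fun x : X => (t₀ + σ * s, x)) (by fun_prop)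
          (fun x hx => ⟨hx, hJ s hs, trivial⟩) }
  obtain ⟨k, hk, hk0, hkd, hkn⟩ := kfun M₁
  refine Sys.core (S := S) (M₁ := M₁) (fun s hs x hx => hM₁ (t₀ + σ * s, x) ⟨hx, hJ s hs, trivial⟩)
    hk0 hkd (hkn _ hT) hr (fun s x => φ (t₀ + σ * s) x) ?_ (by rw [hk]; exact hrad)
  intro x hx
  obtain ⟨h0, h1⟩ := hφ x hx
  refine ⟨by simpa using h0, fun s hs => ⟨(h1 s hs).1.1, ?_⟩⟩
  have h2 : HasDerivWithinAt (fun s => t₀ + σ * s) σ (Icc 0 T) s := by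
    simpa using (((hasDerivAt_id s).const_mul σ).const_add t₀).hasDerivWithinAt
  exact HasDerivWithinAt.scomp s (h1 s hs).2 h2 (mapsTo_image _ _)

end fin
end RS

/-- Let `X` be a real Hilbert space, `I ⊆ ℝ` an interval, `U ⊆ I × X`
relatively open, and `f : U → X` continuous and of class `C^{1,1}` with respect to its second
argument, with partial derivative `f'`.  Let `φ` be the general solution of `ẋ = f(t,x)`,
`x₀ ∈ X`, `r > 0`, `t₀, t₁ ∈ I` with `(t₁,t₀,x) ∈ dom φ` for all `x ∈ B̄(x₀,r)`.  Suppose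
`M₁ ≥ 2μ₊(D₂f(τ,x)) − μ₋(D₂f(τ,x))` (if `t₁ ≥ t₀`; `M₁ ≥ μ₊ − 2μ₋` otherwise) and
`M₂ ≥ limsup_{h→0} ‖D₂f(τ,x+h) − D₂f(τ,x)‖/‖h‖` on `U`, and let
`K(α) = |t₁−t₀|` for `α = 0`, `K(α) = (exp(α|t₁−t₀|)−1)/α` otherwise.  If `r·M₂·K(M₁) ≤ 1`,
then the reachable set `φ(t₁,t₀,B̄(x₀,r))` is convex. -/
theorem stmt_6 {X : Type*} [NormedAddCommGroup X] [InnerProductSpace ℝ X] [CompleteSpace X]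
    (I : Set ℝ) (hI : I.OrdConnected)
    (U : Set (ℝ × X)) (hU : ∃ W : Set (ℝ × X), IsOpen W ∧ U = W ∩ I ×ˢ (univ : Set X))
    (f : ℝ → X → X) (f' : ℝ → X → X →L[ℝ] X)
    (hfc : ContinuousOn (fun p : ℝ × X => f p.1 p.2) U)
    (hf'c : ContinuousOn (fun p : ℝ × X => f' p.1 p.2) U)
    (hderiv : ∀ p ∈ U, HasFDerivAt (fun x => f p.1 x) (f' p.1 p.2) p.2)
    (hlip : ∀ p ∈ U, ∃ ε > 0, ∃ L : NNReal,
      ∀ x ∈ ball p.2 ε, ∀ y ∈ ball p.2 ε, (p.1, x) ∈ U → (p.1, y) ∈ U →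
        ‖f' p.1 x - f' p.1 y‖ ≤ L * ‖x - y‖)
    (x₀ : X) (r : ℝ) (hr : 0 < r) (t₀ t₁ : ℝ) (ht₀ : t₀ ∈ I) (ht₁ : t₁ ∈ I)
    (φ : ℝ → ℝ → X → X)
    (hφ : ∀ x ∈ closedBall x₀ r, φ t₀ t₀ x = x ∧
      ∀ τ ∈ uIcc t₀ t₁, (τ, φ τ t₀ x) ∈ U ∧
        HasDerivWithinAt (fun s => φ s t₀ x) (f τ (φ τ t₀ x)) (uIcc t₀ t₁) τ)
    (M₁ M₂ : ℝ)
    (hM₁ : ∀ p ∈ U, (if t₀ ≤ t₁ then 2 * muPlus (f' p.1 p.2) - muMinus (f' p.1 p.2)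
      else muPlus (f' p.1 p.2) - 2 * muMinus (f' p.1 p.2)) ≤ M₁)
    (hM₂ : ∀ p ∈ U,
      limsup (fun h : X => ‖f' p.1 (p.2 + h) - f' p.1 p.2‖ / ‖h‖) (𝓝[≠] (0:X)) ≤ M₂)
    (K : ℝ → ℝ)
    (hK : ∀ α : ℝ, K α = if α = 0 then |t₁ - t₀| else (Real.exp (α * |t₁ - t₀|) - 1) / α)
    (hrad : r * M₂ * K M₁ ≤ 1) :
    Convex ℝ ((fun x => φ t₁ t₀ x) '' closedBall x₀ r) := by
  rcases subsingleton_or_nontrivial X with hX | hX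
  · exact (Set.subsingleton_of_subsingleton).convex
  obtain ⟨W, hW, rfl⟩ := hU
  by_cases h01 : t₀ ≤ t₁
  · have hT : |t₁ - t₀| = t₁ - t₀ := abs_of_nonneg (by linarith)
    have him : (fun s => t₀ + 1 * s) '' Icc 0 (t₁ - t₀) = uIcc t₀ t₁ := by
      rw [uIcc_of_le h01]
      simp
    have hmem : ∀ s ∈ Icc 0 (t₁ - t₀), t₀ + 1 * s ∈ uIcc t₀ t₁ := fun s hs => by
      rw [← him]; exact ⟨s, hs, rfl⟩
    have := RS.directed W hW I f f' hfc hf'c hderiv hlip x₀ r hr t₀ 1 (t₁ - t₀) (Or.inl rfl)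
      (by linarith) (fun s hs => hI.uIcc_subset ht₀ ht₁ (hmem s hs)) (fun s x => φ s t₀ x)
      (fun x hx => ⟨(hφ x hx).1, fun s hs => by
        rw [him]; exact (hφ x hx).2 _ (hmem s hs)⟩) M₁ M₂
      (fun p hp => by have := hM₁ p hp; rw [if_pos h01] at this; rwa [one_smul]) hM₂
      (by rw [hK, hT] at hrad; exact hrad)
    rwa [one_mul, add_sub_cancel] at this
  · have hT : |t₁ - t₀| = t₀ - t₁ := by rw [abs_of_neg (by linarith)]; ring
    have hle : t₁ ≤ t₀ := by linarith
    have him : (fun s => t₀ + (-1) * s) '' Icc 0 (t₀ - t₁) = uIcc t₀ t₁ := by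
      rw [uIcc_of_ge hle]
      have : (fun s => t₀ + (-1) * s) = fun s => t₀ - s := by ext s; ring
      rw [this]
      simp
    have hmem : ∀ s ∈ Icc 0 (t₀ - t₁), t₀ + (-1) * s ∈ uIcc t₀ t₁ := fun s hs => by
      rw [← him]; exact ⟨s, hs, rfl⟩
    have := RS.directed W hW I f f' hfc hf'c hderiv hlip x₀ r hr t₀ (-1) (t₀ - t₁) (Or.inr rfl)
      (by linarith) (fun s hs => hI.uIcc_subset ht₀ ht₁ (hmem s hs)) (fun s x => φ s t₀ x)
      (fun x hx => ⟨(hφ x hx).1, fun s hs => by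
        rw [him]; exact (hφ x hx).2 _ (hmem s hs)⟩) M₁ M₂
      (fun p hp => by
        have := hM₁ p hp
        rw [if_neg h01] at this
        rw [neg_one_smul, RS.muPlus_neg, RS.muMinus_neg]
        linarith) hM₂
      (by rw [hK, hT] at hrad; exact hrad)
    have e : t₀ + (-1) * (t₀ - t₁) = t₁ := by ring
    rwa [e] at this
end

section
/- Let X be a real Hilbert space, I ⊆ ℝ an interval, U ⊆ I × X relatively open, f : U → X continuous and of class C^{1,1} with respect to its second argument, φ the general solution of ẋ = f(t,x), x₀ ∈ X, r > 0, t₀, t₁ ∈ I with (t₁,t₀,x) ∈ dom φ for all x ∈ B̄(x₀,r), and suppose M₂ ≥ limsup_{h→0} ‖D₂f(τ,x+h) − D₂f(τ,x)‖/‖h‖ for all (τ,x) ∈ U. Assume there exist λ₋, λ₊ ∈ ℝ with λ₋ ≤ μ₋(D₂f(τ,x)) ≤ μ₊(D₂f(τ,x)) ≤ λ₊ for all (τ,x) ∈ U, and set M₁ = 2λ₊ − λ₋ if t₁ ≥ t₀ and M₁ = λ₊ − 2λ₋ otherwise. If r·M₂·K(M₁) ≤ 1, where K(α) = |t₁−t₀|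 for α = 0 and K(α) = (exp(α|t₁−t₀|)−1)/α otherwise, then the reachable set φ(t₁,t₀,B̄(x₀,r)) is convex. -/
open Filter Topology Metric Set RealInnerProductSpace

section helpers
variable {X : Type*} [NormedAddCommGroup X] [InnerProductSpace ℝ X]

lemma hdw_Ici {E : Type*} [NormedAddCommGroup E] [NormedSpace ℝ E] {u : ℝ → E} {v : E} {a b t : ℝ}
    (ht : t ∈ Ico a b) (h : HasDerivWithinAt u v (Icc a b) t) :
    HasDerivWithinAt u v (Ici t) t :=
  h.mono_of_mem_nhdsWithin (Icc_mem_nhdsGE_of_mem ht)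

lemma fence {u u' : ℝ → X} {T lam ε a : ℝ} (A A' : ℝ → ℝ) (hT : 0 ≤ T) (hε : 0 < ε)
    (hu : ∀ t ∈ Icc 0 T, HasDerivWithinAt u (u' t) (Icc 0 T) t)
    (hA : ∀ t, HasDerivAt A (A' t) t) (hA0 : ∀ t ∈ Icc 0 T, 0 ≤ A t)
    (ha : ‖u 0‖ ≤ a)
    (hb : ∀ t ∈ Icc 0 T, Real.exp (lam * t) * (a + A t) ≤ ε / 2)
    (hd : ∀ t ∈ Icc 0 T, ‖u t‖ < ε →
      ⟪u' t, u t⟫ ≤ lam * ‖u t‖ ^ 2 + Real.exp (lam * t) * A' t * ‖u t‖) :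
    ∀ t ∈ Icc 0 T, ‖u t‖ ≤ Real.exp (lam * t) * (a + A t) := by
  have ha0 : 0 ≤ a := (norm_nonneg _).trans ha
  set E := Real.exp (|lam| * T) with hE
  have hEpos : 0 < E := Real.exp_pos _
  have hEt : ∀ t ∈ Icc 0 T, Real.exp (lam * t) ≤ E := by
    intro t ht
    apply Real.exp_le_exp.2
    calc lam * t ≤ |lam| * t := mul_le_mul_of_nonneg_right (le_abs_self _) ht.1
      _ ≤ |lam| * T := mul_le_mul_of_nonneg_left ht.2 (abs_nonneg _)
  have key : ∀ η : ℝ, 0 < η → η * (E * (1 + T)) < ε / 2 →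
      ∀ t ∈ Icc 0 T, ‖u t‖ ≤ Real.exp (lam * t) * (a + A t + η * (1 + t)) := by
    intro η hη hηs
    set β : ℝ → ℝ := fun t => Real.exp (lam * t) * (a + A t + η * (1 + t)) with hβ
    set β' : ℝ → ℝ := fun t => lam * β t + Real.exp (lam * t) * (A' t + η) with hβ'
    have hβd : ∀ t, HasDerivAt β (β' t) t := by
      intro t
      have h1 : HasDerivAt (fun t : ℝ => Real.exp (lam * t)) (Real.exp (lam * t) * (lam * 1)) t :=
        ((hasDerivAt_id t).const_mul lam).exp
      have h2 : HasDerivAt (fun t : ℝ => a + A t + η * (1 + t)) (A' t + η * 1) t :=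
        ((hA t).const_add a).add (((hasDerivAt_id t).const_add 1).const_mul η)
      refine (h1.mul h2).congr_deriv ?_
      simp only [hβ', hβ]; ring
    have hβpos : ∀ t ∈ Icc 0 T, 0 < β t := by
      intro t ht
      have := hA0 t ht
      have := ht.1
      have : 0 < η * (1 + t) := by positivity
      simp only [hβ]
      exact mul_pos (Real.exp_pos _) (by linarith)
    have hβlt : ∀ t ∈ Icc 0 T, β t < ε := by
      intro t ht
      have h1 := hb t ht
      have h2 : Real.exp (lam * t) * (η * (1 + t)) ≤ η * (E * (1 + T)) := by
        have : Real.exp (lam * t) * (1 + t) ≤ E * (1 + T) :=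
          mul_le_mul (hEt t ht) (by linarith [ht.2]) (by linarith [ht.1]) hEpos.le
        calc _ = η * (Real.exp (lam * t) * (1 + t)) := by ring
          _ ≤ _ := mul_le_mul_of_nonneg_left this hη.le
      simp only [hβ]
      nlinarith
    have main : ∀ ⦃t⦄, t ∈ Icc 0 T → ‖u t‖ ^ 2 ≤ β t ^ 2 := by
      refine image_le_of_deriv_right_lt_deriv_boundary' (f' := fun t => 2 * ⟪u t, u' t⟫)
        (B' := fun t => 2 * β t * β' t) ?_ ?_ ?_ ?_ ?_ ?_
      · have : ContinuousOn u (Icc 0 T) := fun t ht => (hu t ht).continuousWithinAt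
        exact this.norm.pow 2
      · intro t ht
        exact (hdw_Ici ht (hu t ⟨ht.1, ht.2.le⟩)).norm_sq
      · have := hA0 0 ⟨le_rfl, hT⟩
        have h0 : β 0 = a + A 0 + η := by simp [hβ]
        rw [h0]
        exact pow_le_pow_left₀ (norm_nonneg _) (by linarith) 2
      · exact fun t _ => ((hβd t).pow 2).continuousAt.continuousWithinAt
      · intro t ht
        have := (((hβd t).pow 2).hasDerivWithinAt (s := Ici t)).congr_deriv
          (show _ = 2 * β t * β' t by norm_num)
        exact this
      · intro t ht heq
        have ht' : t ∈ Icc 0 T := ⟨ht.1, ht.2.le⟩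
        have hp := hβpos t ht'
        have heq' : ‖u t‖ = β t := by
          exact (pow_left_inj₀ (norm_nonneg _) hp.le two_ne_zero).1 heq
        have h1 := hd t ht' (by rw [heq']; exact hβlt t ht')
        rw [heq', real_inner_comm] at h1
        have h2 : 0 < Real.exp (lam * t) * η * β t :=
          mul_pos (mul_pos (Real.exp_pos _) hη) hp
        simp only [hβ']
        nlinarith
    intro t ht
    exact (pow_le_pow_iff_left₀ (norm_nonneg _) (hβpos t ht).le two_ne_zero).1 (main ht)
  intro t ht
  have hlim : Tendsto (fun η : ℝ => Real.exp (lam * t) * (a + A t + η * (1 + t))) (𝓝[>] 0)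
      (𝓝 (Real.exp (lam * t) * (a + A t))) := by
    have : Continuous (fun η : ℝ => Real.exp (lam * t) * (a + A t + η * (1 + t))) := by fun_prop
    have h := this.tendsto 0
    simp only [zero_mul, add_zero] at h
    exact h.mono_left nhdsWithin_le_nhds
  refine ge_of_tendsto hlim ?_
  have hsm : ∀ᶠ η : ℝ in 𝓝[>] 0, η * (E * (1 + T)) < ε / 2 := by
    have : Continuous (fun η : ℝ => η * (E * (1 + T))) := by fun_prop
    have h := this.tendsto 0
    simp only [zero_mul] at h
    exact (h.mono_left nhdsWithin_le_nhds).eventually (gt_mem_nhds (by linarith))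
  filter_upwards [hsm, self_mem_nhdsWithin] with η h1 h2
  exact key η h2 h1 t ht

/-- right-slope bound gives a Lipschitz estimate -/
lemma lip_of_slope {E : Type*} [NormedAddCommGroup E] {h : ℝ → E} {a b C : ℝ} (hab : a ≤ b)
    (hc : ContinuousOn h (Icc a b))
    (hs : ∀ t ∈ Ico a b, ∀ C' > C, ∀ᶠ s in 𝓝[>] t, ‖h s - h t‖ ≤ C' * (s - t)) :
    ‖h b - h a‖ ≤ C * (b - a) := by
  have := image_le_of_liminf_slope_right_le_deriv_boundary (f := fun t => ‖h t - h a‖)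
    (B := fun t => C * (t - a)) (B' := fun _ => C) (a := a) (b := b)
    ((hc.sub continuousOn_const).norm) (by simp) (by fun_prop) ?_ ?_ (right_mem_Icc.2 hab)
  · exact this
  · intro t ht
    have := (((hasDerivAt_id t).sub_const a).const_mul C).hasDerivWithinAt (s := Ici t)
    simpa using this
  · intro t ht r hr
    obtain ⟨C', h1, h2⟩ := exists_between hr
    refine Eventually.frequently ?_
    filter_upwards [hs t ht C' h1, self_mem_nhdsWithin] with s hs1 hs2
    have hpos : 0 < s - t := sub_pos.2 hs2
    rw [slope_def_field, div_lt_iff₀ hpos]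
    have : ‖h s - h a‖ ≤ ‖h s - h t‖ + ‖h t - h a‖ := by
      simpa using norm_add_le (h s - h t) (h t - h a)
    nlinarith

lemma mu_bounds (A : X →L[ℝ] X) {lm lp : ℝ}
    (h1 : lm ≤ sInf {c : ℝ | ∃ y : X, ‖y‖ = 1 ∧ c = ⟪A y, y⟫})
    (h2 : sSup {c : ℝ | ∃ y : X, ‖y‖ = 1 ∧ c = ⟪A y, y⟫} ≤ lp) (y : X) :
    lm * ‖y‖ ^ 2 ≤ ⟪A y, y⟫ ∧ ⟪A y, y⟫ ≤ lp * ‖y‖ ^ 2 := by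
  by_cases hy : y = 0
  · simp [hy]
  have hn : 0 < ‖y‖ := norm_pos_iff.2 hy
  set z := ‖y‖⁻¹ • y with hz
  have hz1 : ‖z‖ = 1 := by rw [hz, norm_smul, norm_inv, norm_norm, inv_mul_cancel₀ hn.ne']
  have hyz : y = ‖y‖ • z := by rw [hz, smul_smul, mul_inv_cancel₀ hn.ne', one_smul]
  have habs : ∀ c ∈ {c : ℝ | ∃ y : X, ‖y‖ = 1 ∧ c = ⟪A y, y⟫}, |c| ≤ ‖A‖ := by
    rintro c ⟨w, hw, rfl⟩
    calc |⟪A w, w⟫| ≤ ‖A w‖ * ‖w‖ := abs_real_inner_le_norm _ _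
      _ ≤ ‖A‖ * ‖w‖ * ‖w‖ := by gcongr; exact A.le_opNorm w
      _ = ‖A‖ := by rw [hw]; ring
  have hm : ⟪A z, z⟫ ∈ {c : ℝ | ∃ y : X, ‖y‖ = 1 ∧ c = ⟪A y, y⟫} := ⟨z, hz1, rfl⟩
  have b1 : lm ≤ ⟪A z, z⟫ := h1.trans (csInf_le ⟨-‖A‖, fun c hc => (abs_le.1 (habs c hc)).1⟩ hm)
  have b2 : ⟪A z, z⟫ ≤ lp := (le_csSup ⟨‖A‖, fun c hc => (abs_le.1 (habs c hc)).2⟩ hm).trans h2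
  have e : ⟪A y, y⟫ = ⟪A z, z⟫ * ‖y‖ ^ 2 := by
    conv_lhs => rw [hyz]
    rw [map_smul, real_inner_smul_left, real_inner_smul_right]; ring
  rw [e]
  exact ⟨by gcongr, by gcongr⟩

lemma retract_exists {ε : ℝ} (hε : 0 < ε) : ∃ P : X → X, (∀ v, ‖P v‖ ≤ ε) ∧
    (∀ v, ‖v‖ ≤ ε → P v = v) ∧ ∀ v w, ‖P v - P w‖ ≤ 2 * ‖v - w‖ := by
  refine ⟨fun v => (ε / max ε ‖v‖) • v, ?_, ?_, ?_⟩
  · intro v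
    have hm : 0 < max ε ‖v‖ := lt_max_of_lt_left hε
    rw [norm_smul, Real.norm_of_nonneg (by positivity), div_mul_eq_mul_div, div_le_iff₀ hm]
    gcongr; exact le_max_right _ _
  · intro v hv
    simp only [max_eq_left hv, div_self hε.ne', one_smul]
  · intro v w
    have hv : 0 < max ε ‖v‖ := lt_max_of_lt_left hε
    have hw : 0 < max ε ‖w‖ := lt_max_of_lt_left hε
    have e : (ε / max ε ‖v‖) • v - (ε / max ε ‖w‖) • w =
      (ε / max ε ‖v‖) • (v - w) + (ε / max ε ‖v‖ - ε / max ε ‖w‖) • w := by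
      module
    have h1 : ε / max ε ‖v‖ ≤ 1 := (div_le_one hv).2 (le_max_left _ _)
    have h1' : 0 ≤ ε / max ε ‖v‖ := by positivity
    have h2 : |max ε ‖w‖ - max ε ‖v‖| ≤ ‖v - w‖ := by
      have := abs_max_sub_max_le_abs ‖w‖ ‖v‖ ε
      rw [max_comm ε, max_comm ε]
      refine this.trans ?_
      rw [norm_sub_rev]
      exact abs_norm_sub_norm_le w v
    have h3 : ε / max ε ‖v‖ - ε / max ε ‖w‖ =
      (ε / max ε ‖v‖) * ((max ε ‖w‖ - max ε ‖v‖) / max ε ‖w‖) := by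
      field_simp
    rw [e]
    refine (norm_add_le _ _).trans ?_
    have h4 : ‖w‖ / max ε ‖w‖ ≤ 1 := (div_le_one hw).2 (le_max_right _ _)
    rw [norm_smul, norm_smul, h3, norm_mul, Real.norm_of_nonneg h1', norm_div,
      Real.norm_of_nonneg hw.le, Real.norm_eq_abs]
    have h5 : ε / max ε ‖v‖ * (|max ε ‖w‖ - max ε ‖v‖| / max ε ‖w‖) * ‖w‖ ≤ 1 * ‖v - w‖ * 1 := by
      calc _ = ε / max ε ‖v‖ * |max ε ‖w‖ - max ε ‖v‖| * (‖w‖ / max ε ‖w‖) := by ring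
        _ ≤ _ := by gcongr
    have h6 : ε / max ε ‖v‖ * ‖v - w‖ ≤ 1 * ‖v - w‖ := by gcongr
    linarith

lemma cauchy_of_lip {Y Z : Type*} [PseudoMetricSpace Y] [PseudoMetricSpace Z] {a : ℕ → Y}
    {b : ℕ → Z} {L : ℝ} (hb : CauchySeq b) (h : ∀ n m, dist (a n) (a m) ≤ L * dist (b n) (b m)) :
    CauchySeq a := by
  rw [Metric.cauchySeq_iff] at hb ⊢
  intro ε hε
  obtain ⟨N, hN⟩ := hb (ε / (|L| + 1)) (by positivity)
  refine ⟨N, fun m hm n hn => ?_⟩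
  have h1 := hN m hm n hn
  rw [lt_div_iff₀ (by positivity)] at h1
  have h2 : L * dist (b m) (b n) ≤ |L| * dist (b m) (b n) :=
    mul_le_mul_of_nonneg_right (le_abs_self _) dist_nonneg
  have h3 := h m n
  have h4 : 0 ≤ dist (b m) (b n) := dist_nonneg
  nlinarith

lemma mid_ineq {a b m : X} {R k : ℝ} (hk : 0 ≤ k) (ha : ‖a‖ ≤ R) (hb : ‖b‖ ≤ R)
    (hm : ‖m‖ = R) (hmid : ‖m - (1 / 2 : ℝ) • (a + b)‖ ≤ k * ‖a - b‖ ^ 2) (hd : 0 < ‖a - b‖)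
    (hs : k ^ 2 * ‖a - b‖ ^ 2 < 1 / 4 - 2 * R * k) : False := by
  set d := ‖a - b‖ with hdd
  set P := ‖(1 / 2 : ℝ) • (a + b)‖ with hP
  have hP2 : P ^ 2 = (‖a‖ ^ 2 + ‖b‖ ^ 2) / 2 - d ^ 2 / 4 := by
    have := parallelogram_law_with_norm ℝ a b
    have e : P = 1 / 2 * ‖a + b‖ := by rw [hP, norm_smul]; norm_num
    rw [e]; nlinarith
  have hPR : R ≤ P + k * d ^ 2 := by
    have : ‖m‖ ≤ ‖m - (1 / 2 : ℝ) • (a + b)‖ + ‖(1 / 2 : ℝ) • (a + b)‖ := by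
      simpa using norm_add_le (m - (1 / 2 : ℝ) • (a + b)) ((1 / 2 : ℝ) • (a + b))
    linarith
  have hP0 : 0 ≤ P := norm_nonneg _
  have hR0 : 0 ≤ R := (norm_nonneg _).trans ha
  have h1 : ‖a‖ ^ 2 ≤ R ^ 2 := pow_le_pow_left₀ (norm_nonneg _) ha 2
  have h2 : ‖b‖ ^ 2 ≤ R ^ 2 := pow_le_pow_left₀ (norm_nonneg _) hb 2
  have h3 : P ≤ R := by
    apply le_of_sq_le_sq _ hR0 
    nlinarith [sq_nonneg d]
  have hd2 : 0 < d ^ 2 := by positivity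
  have h4 : R ^ 2 ≤ (P + k * d ^ 2) ^ 2 := pow_le_pow_left₀ hR0 hPR 2
  have h5 : P * (k * d ^ 2) ≤ R * (k * d ^ 2) := mul_le_mul_of_nonneg_right h3 (by positivity)
  have h6 := mul_lt_mul_of_pos_right hs hd2
  nlinarith

lemma convex_image [CompleteSpace X] {F : X → X} {x₀ : X} {r C c k : ℝ} (hC : 0 ≤ C) (hc : 0 ≤ c)
    (hk : 0 ≤ k) (hkr : 8 * r * k ≤ 1)
    (hinj : InjOn F (closedBall x₀ r))
    (hF : ∀ x ∈ closedBall x₀ r, ∃ δ > 0, ∀ y ∈ closedBall x₀ r, ‖y - x‖ < δ →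
      ‖F y - F x‖ ≤ C * ‖y - x‖)
    (hG : ∀ x ∈ ball x₀ r, ∃ δ > 0, ∀ z, ‖z - F x‖ < δ →
      ∃ y ∈ ball x₀ r, F y = z ∧ ‖y - x‖ ≤ c * ‖z - F x‖)
    (hmid : ∀ x ∈ ball x₀ r, ∃ δ > 0, ∀ y ∈ ball x₀ r, ∀ y' ∈ ball x₀ r,
      ‖y - x‖ < δ → ‖y' - x‖ < δ → ∃ m ∈ ball x₀ r, F m = (1 / 2 : ℝ) • (F y + F y') ∧
        ‖m - (1 / 2 : ℝ) • (y + y')‖ ≤ k * ‖y - y'‖ ^ 2) :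
    Convex ℝ (F '' closedBall x₀ r) := by
  classical
  set V := F '' ball x₀ r with hV
  set G := Function.invFunOn F (ball x₀ r) with hGdef
  have hGm : ∀ z ∈ V, G z ∈ ball x₀ r := fun z hz => Function.invFunOn_mem hz
  have hFG : ∀ z ∈ V, F (G z) = z := fun z hz => Function.invFunOn_eq hz
  have hbc : ball x₀ r ⊆ closedBall x₀ r := ball_subset_closedBall
  have hGF : ∀ x ∈ ball x₀ r, G (F x) = x := fun x hx =>
    hinj (hbc (hGm _ (mem_image_of_mem F hx))) (hbc hx) (hFG _ (mem_image_of_mem F hx))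
  have hGl : ∀ z ∈ V, ∃ δ > 0, ∀ z', ‖z' - z‖ < δ → z' ∈ V ∧ ‖G z' - G z‖ ≤ c * ‖z' - z‖ := by
    rintro z ⟨x, hx, rfl⟩
    obtain ⟨δ, hδ, h⟩ := hG x hx
    refine ⟨δ, hδ, fun z' hz' => ?_⟩
    obtain ⟨y, hy, rfl, hle⟩ := h z' hz'
    exact ⟨mem_image_of_mem F hy, by rwa [hGF y hy, hGF x hx]⟩
  have hVo : IsOpen V := by
    rw [Metric.isOpen_iff]
    intro z hz
    obtain ⟨δ, hδ, h⟩ := hGl z hz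
    exact ⟨δ, hδ, fun z' hz' => (h z' (by simpa [dist_eq_norm] using hz')).1⟩
  have hGc : ContinuousOn G V := by
    intro z hz
    apply ContinuousAt.continuousWithinAt
    obtain ⟨δ, hδ, h⟩ := hGl z hz
    rw [ContinuousAt, tendsto_iff_norm_sub_tendsto_zero]
    have h1 : Tendsto (fun z' => c * ‖z' - z‖) (𝓝 z) (𝓝 0) := by
      have : Continuous (fun z' => c * ‖z' - z‖) := by fun_prop
      simpa using this.tendsto z
    refine squeeze_zero' (Eventually.of_forall fun _ => norm_nonneg _) ?_ h1
    filter_upwards [Metric.ball_mem_nhds z hδ] with z' hz'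
    exact (h z' (by simpa [dist_eq_norm] using hz')).2
  have hFc : ContinuousOn F (closedBall x₀ r) := by
    intro x hx
    obtain ⟨δ, hδ, h⟩ := hF x hx
    rw [ContinuousWithinAt, tendsto_iff_norm_sub_tendsto_zero]
    have h1 : Tendsto (fun z' => C * ‖z' - x‖) (𝓝[closedBall x₀ r] x) (𝓝 0) := by
      have : Continuous (fun z' => C * ‖z' - x‖) := by fun_prop
      have h2 := (this.tendsto x).mono_left (nhdsWithin_le_nhds (s := closedBall x₀ r))
      simpa [Function.comp_def] using h2
    refine squeeze_zero' (Eventually.of_forall fun _ => norm_nonneg _) ?_ h1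
    filter_upwards [nhdsWithin_le_nhds (Metric.ball_mem_nhds x hδ), self_mem_nhdsWithin] with y hy hy'
    exact h y hy' (by simpa [dist_eq_norm] using hy)
  have hseg : ∀ x ∈ closedBall x₀ r, ∀ y ∈ closedBall x₀ r, ∀ t ∈ Icc (0:ℝ) 1,
      x + t • (y - x) ∈ closedBall x₀ r := fun x hx y hy t ht =>
    (convex_closedBall x₀ r).add_smul_sub_mem hx hy ht
  have hFlip : ∀ x ∈ closedBall x₀ r, ∀ y ∈ closedBall x₀ r, ‖F y - F x‖ ≤ C * ‖y - x‖ := by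
    intro x hx y hy
    have := lip_of_slope (h := fun t : ℝ => F (x + t • (y - x))) (a := 0) (b := 1)
      (C := C * ‖y - x‖) zero_le_one ?_ ?_
    · simpa using this
    · exact hFc.comp (by fun_prop) (fun t ht => hseg x hx y hy t ht)
    · intro t ht C' hC'
      obtain ⟨δ, hδ, h⟩ := hF _ (hseg x hx y hy t ⟨ht.1, ht.2.le⟩)
      have h1 : ∀ᶠ s in 𝓝[>] t, ‖(x + s • (y - x)) - (x + t • (y - x))‖ < δ := by
        have : Continuous (fun s : ℝ => ‖(x + s • (y - x)) - (x + t • (y - x))‖) := by fun_prop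
        have h2 := this.tendsto t
        simp only [sub_self, norm_zero] at h2
        exact (h2.mono_left nhdsWithin_le_nhds).eventually (gt_mem_nhds hδ)
      have h2 : ∀ᶠ s in 𝓝[>] t, s < 1 := nhdsWithin_le_nhds (gt_mem_nhds ht.2)
      filter_upwards [h1, h2, self_mem_nhdsWithin] with s hs1 hs2 hs3
      have hs3' : t < s := hs3
      refine (h _ (hseg x hx y hy s ⟨ht.1.trans hs3'.le, hs2.le⟩) hs1).trans ?_
      have e : (x + s • (y - x)) - (x + t • (y - x)) = (s - t) • (y - x) := by module
      rw [e, norm_smul, Real.norm_of_nonneg (by linarith)]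
      have : C * ‖y - x‖ * (s - t) ≤ C' * (s - t) :=
        mul_le_mul_of_nonneg_right hC'.le (by linarith)
      linarith
  have hGlip : ∀ (p : ℝ → X) (a b D : ℝ), a ≤ b → ContinuousOn p (Icc a b) →
      (∀ t ∈ Icc a b, p t ∈ V) →
      (∀ t ∈ Icc a b, ∀ s ∈ Icc a b, t ≤ s → ‖p s - p t‖ ≤ D * (s - t)) →
      ‖G (p b) - G (p a)‖ ≤ c * D * (b - a) := by
    intro p a b D hab hp hpV hpD
    refine lip_of_slope (h := fun t => G (p t)) hab (hGc.comp hp hpV) ?_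
    intro t ht C' hC'
    have ht' : t ∈ Icc a b := ⟨ht.1, ht.2.le⟩
    obtain ⟨δ, hδ, h⟩ := hGl _ (hpV t ht')
    have hcont : ContinuousWithinAt p (Ioi t) t :=
      (hp t ht').mono_of_mem_nhdsWithin
        (mem_of_superset (Ioo_mem_nhdsGT ht.2) (fun s hs => ⟨ht.1.trans hs.1.le, hs.2.le⟩))
    have h1 : ∀ᶠ s in 𝓝[>] t, ‖p s - p t‖ < δ := by
      have := (hcont.sub_const (p t)).norm
      simp only [sub_self, norm_zero] at this
      exact Tendsto.eventually this (gt_mem_nhds hδ)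
    filter_upwards [h1, Ioo_mem_nhdsGT ht.2] with s hs1 hs2
    refine (h _ hs1).2.trans ?_
    have h3 := hpD t ht' s ⟨ht.1.trans hs2.1.le, hs2.2.le⟩ hs2.1.le
    have h4 : C' * (s - t) ≥ c * D * (s - t) :=
      mul_le_mul_of_nonneg_right hC'.le (by linarith [hs2.1])
    have h5 := mul_le_mul_of_nonneg_left h3 hc
    linarith
  -- maximum principle
  have hmax : ∀ r' < r, ∀ x ∈ closedBall x₀ r', ∀ y ∈ closedBall x₀ r',
      (∀ s ∈ Icc (0:ℝ) 1, F x + s • (F y - F x) ∈ V) →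
      ∀ s ∈ Icc (0:ℝ) 1, G (F x + s • (F y - F x)) ∈ closedBall x₀ r' := by
    intro r' hr' x hx y hy hz
    have hsub : closedBall x₀ r' ⊆ ball x₀ r := closedBall_subset_ball hr'
    by_cases hxy : F x = F y
    · intro s hs
      simpa [hxy, hGF y (hsub hy)] using hy
    set g : ℝ → X := fun s => G (F x + s • (F y - F x)) with hg
    have hgc : ContinuousOn g (Icc 0 1) := hGc.comp (by fun_prop) hz
    have hgb : ∀ s ∈ Icc (0:ℝ) 1, g s ∈ ball x₀ r := fun s hs => hGm _ (hz s hs)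
    have hFg : ∀ s ∈ Icc (0:ℝ) 1, F (g s) = F x + s • (F y - F x) := fun s hs => hFG _ (hz s hs)
    obtain ⟨s, hs, hsm⟩ := isCompact_Icc.exists_isMaxOn (nonempty_Icc.2 (zero_le_one' ℝ))
      ((hgc.sub continuousOn_const).norm : ContinuousOn (fun s => ‖g s - x₀‖) (Icc 0 1))
    have hsm' : ∀ t ∈ Icc (0:ℝ) 1, ‖g t - x₀‖ ≤ ‖g s - x₀‖ := fun t ht => hsm ht
    have g0 : g 0 = x := by simp [hg, hGF x (hsub hx)]
    have g1 : g 1 = y := by simp [hg, hGF y (hsub hy)]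
    have main : ‖g s - x₀‖ ≤ r' := by
      rcases eq_or_lt_of_le hs.1 with h0 | h0
      · rw [← h0, g0]; simpa [dist_eq_norm] using hx
      rcases eq_or_lt_of_le hs.2 with h1 | h1
      · rw [h1, g1]; simpa [dist_eq_norm] using hy
      exfalso
      set R := ‖g s - x₀‖ with hR
      have hRr : R < r := by simpa [dist_eq_norm] using hgb s hs
      have hgap : 0 < 1 / 4 - 2 * R * k := by
        rcases eq_or_lt_of_le hk with h | h
        · rw [← h]; norm_num
        · nlinarith
      obtain ⟨δ, hδ, hm⟩ := hmid (g s) (hgb s hs)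
      have hgs : ContinuousAt g s := hgc.continuousAt (Icc_mem_nhds h0 h1)
      obtain ⟨δ₂, hδ₂, hδ₂'⟩ : ∃ δ₂ > 0, ∀ d : ℝ, |d| < δ₂ → k ^ 2 * d ^ 2 < 1 / 4 - 2 * R * k := by
        have : Continuous (fun d : ℝ => k ^ 2 * d ^ 2) := by fun_prop
        have h2 := this.tendsto 0
        simp only [ne_eq, OfNat.ofNat_ne_zero, not_false_eq_true, zero_pow, mul_zero] at h2
        have h3 := h2.eventually (gt_mem_nhds hgap)
        obtain ⟨δ₂, h4, h5⟩ := Metric.eventually_nhds_iff.1 h3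
        exact ⟨δ₂, h4, fun d hd => h5 (by simpa [Real.dist_eq] using hd)⟩
      obtain ⟨η₀, hη₀, hη₀'⟩ := Metric.continuousAt_iff.1 hgs (min δ (δ₂ / 2)) (by positivity)
      set η := min (η₀ / 2) (min s (1 - s)) with hη
      have hηpos : 0 < η := by
        rw [hη]; exact lt_min (by linarith) (lt_min h0 (by linarith))
      have hη1 : η < η₀ := (min_le_left _ _).trans_lt (by linarith)
      have hη2 : η ≤ s := (min_le_right _ _).trans (min_le_left _ _)
      have hη3 : η ≤ 1 - s := (min_le_right _ _).trans (min_le_right _ _)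
      have hp : s + η ∈ Icc (0:ℝ) 1 := ⟨by linarith, by linarith⟩
      have hq : s - η ∈ Icc (0:ℝ) 1 := ⟨by linarith, by linarith⟩
      have dp : ‖g (s + η) - g s‖ < min δ (δ₂ / 2) := by
        rw [← dist_eq_norm]
        apply hη₀'
        simpa [Real.dist_eq, abs_of_pos hηpos] using hη1
      have dq : ‖g (s - η) - g s‖ < min δ (δ₂ / 2) := by
        rw [← dist_eq_norm]
        apply hη₀'
        simpa [Real.dist_eq, abs_of_pos hηpos] using hη1
      obtain ⟨m, hmb, hFm, hle⟩ := hm _ (hgb _ hp) _ (hgb _ hq)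
        (dp.trans_le (min_le_left _ _)) (dq.trans_le (min_le_left _ _))
      have hmg : m = g s := by
        apply hinj (hbc hmb) (hbc (hgb s hs))
        rw [hFm, hFg _ hp, hFg _ hq, hFg _ hs]
        module
      rw [hmg] at hle
      have hne : g (s + η) ≠ g (s - η) := by
        intro h
        have h2 := congrArg F h
        rw [hFg _ hp, hFg _ hq] at h2
        have h3 : (2 * η) • (F y - F x) = 0 := by
          have : (F x + (s + η) • (F y - F x)) - (F x + (s - η) • (F y - F x)) = 0 := by
            rw [h2, sub_self]
          rw [← this]; module
        rcases smul_eq_zero.1 h3 with h4 | h4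
        · linarith
        · exact hxy (sub_eq_zero.1 h4).symm
      have eab : (g (s + η) - x₀) - (g (s - η) - x₀) = g (s + η) - g (s - η) := by abel
      refine mid_ineq (a := g (s + η) - x₀) (b := g (s - η) - x₀) (m := g s - x₀) (R := R) hk
        (hsm' _ hp) (hsm' _ hq) rfl ?_ ?_ ?_
      · rw [eab]
        convert hle using 2
        module
      · rw [eab]; exact norm_pos_iff.2 (sub_ne_zero.2 hne)
      · rw [eab]
        apply hδ₂'
        rw [abs_of_nonneg (norm_nonneg _)]
        have : ‖g (s + η) - g (s - η)‖ ≤ ‖g (s + η) - g s‖ + ‖g (s - η) - g s‖ := by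
          have := norm_sub_le (g (s + η) - g s) (g (s - η) - g s)
          simpa using this
        have h5 := dp.trans_le (min_le_right _ _)
        have h6 := dq.trans_le (min_le_right _ _)
        linarith
    intro t ht
    rw [mem_closedBall, dist_eq_norm]
    exact (hsm' t ht).trans main
  -- continuation
  have hcontn : ∀ r' < r, ∀ x ∈ closedBall x₀ r', ∀ y ∈ closedBall x₀ r',
      ∀ s ∈ Icc (0:ℝ) 1, F x + s • (F y - F x) ∈ V := by
    intro r' hr' x hx y hy
    have hsub : closedBall x₀ r' ⊆ ball x₀ r := closedBall_subset_ball hr'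
    set Z : ℝ → ℝ → X := fun u s => F x + s • (F (x + u • (y - x)) - F x) with hZ
    have hyu : ∀ u ∈ Icc (0:ℝ) 1, x + u • (y - x) ∈ closedBall x₀ r' := fun u hu =>
      (convex_closedBall x₀ r').add_smul_sub_mem hx hy hu
    have hZlip : ∀ s ∈ Icc (0:ℝ) 1, ∀ u ∈ Icc (0:ℝ) 1, ∀ v ∈ Icc (0:ℝ) 1, u ≤ v →
        ‖Z v s - Z u s‖ ≤ (C * ‖y - x‖) * (v - u) := by
      intro s hs u hu v hv huv
      have e : Z v s - Z u s = s • (F (x + v • (y - x)) - F (x + u • (y - x))) := by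
        simp only [hZ]; module
      rw [e, norm_smul, Real.norm_of_nonneg hs.1]
      have h1 := hFlip _ (hbc (hsub (hyu u hu))) _ (hbc (hsub (hyu v hv)))
      have e2 : (x + v • (y - x)) - (x + u • (y - x)) = (v - u) • (y - x) := by module
      rw [e2, norm_smul, Real.norm_of_nonneg (by linarith)] at h1
      calc _ ≤ 1 * ‖F (x + v • (y - x)) - F (x + u • (y - x))‖ := by
            gcongr; exact hs.2
        _ ≤ _ := by linarith
    set L := C * ‖y - x‖ with hL
    have hL0 : 0 ≤ L := by positivity
    set S : Set ℝ := {u | ∀ u' ∈ Icc 0 u, ∀ s ∈ Icc (0:ℝ) 1, Z u' s ∈ V} with hS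
    have hsubset : Icc (0:ℝ) 1 ⊆ S := by
      refine IsClosed.Icc_subset_of_forall_exists_gt ?_ ?_ ?_
      · refine isClosed_of_closure_subset fun u hu => ?_
        have huI : u ∈ Icc (0:ℝ) 1 :=
          isClosed_Icc.closure_subset_iff.2 inter_subset_right hu
        have hlt : ∀ u', 0 ≤ u' → u' < u → ∀ s ∈ Icc (0:ℝ) 1, Z u' s ∈ V := by
          intro u' h0 h1
          obtain ⟨v, hv1, hv2⟩ := mem_closure_iff.1 hu (Ioi u') isOpen_Ioi h1
          exact hv2.1 u' ⟨h0, le_of_lt hv1⟩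
        refine ⟨fun u' hu' s hs => ?_, huI⟩
        rcases lt_or_eq_of_le hu'.2 with h | h
        · exact hlt u' hu'.1 h s hs
        rw [h]
        rcases eq_or_lt_of_le huI.1 with h0 | h0
        · rw [← h0]; simp only [hZ, zero_smul, add_zero, sub_self, smul_zero]
          exact mem_image_of_mem F (hsub hx)
        obtain ⟨w, -, hw2, hw3⟩ := exists_seq_strictMono_tendsto' h0
        have hwI : ∀ n, w n ∈ Icc (0:ℝ) 1 := fun n =>
          ⟨(hw2 n).1.le, (hw2 n).2.le.trans huI.2⟩
        have hcl : ∀ a b, 0 ≤ a → a ≤ b → b < u →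
            ‖G (Z b s) - G (Z a s)‖ ≤ c * L * (b - a) := by
          intro a b h0a hab hbu
          have hI : ∀ t ∈ Icc a b, t ∈ Icc (0:ℝ) 1 := fun t ht =>
            ⟨h0a.trans ht.1, ht.2.trans (hbu.le.trans huI.2)⟩
          refine hGlip (fun u => Z u s) a b L hab ?_ ?_ ?_
          · have : ContinuousOn (fun u : ℝ => F (x + u • (y - x))) (Icc a b) :=
              hFc.comp (by fun_prop) (fun t ht => hbc (hsub (hyu t (hI t ht))))
            exact continuousOn_const.add (continuousOn_const.smul (this.sub continuousOn_const))
          · exact fun t ht => hlt t (h0a.trans ht.1) (ht.2.trans_lt hbu) s hs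
          · exact fun t ht s' hs' hts => hZlip s hs t (hI t ht) s' (hI s' hs') hts
        have hcau : CauchySeq (fun n => G (Z (w n) s)) := by
          refine cauchy_of_lip (L := c * L) hw3.cauchySeq ?_
          intro n m
          rcases le_total (w m) (w n) with h | h
          · rw [dist_eq_norm, Real.dist_eq, abs_of_nonneg (by linarith)]
            exact hcl _ _ (hw2 m).1.le h (hw2 n).2
          · rw [dist_comm, dist_eq_norm, dist_comm (w n), Real.dist_eq,
              abs_of_nonneg (by linarith)]
            exact hcl _ _ (hw2 n).1.le h (hw2 m).2
        obtain ⟨m, hm⟩ := cauchySeq_tendsto_of_complete hcau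
        have hmem : ∀ n, G (Z (w n) s) ∈ closedBall x₀ r' := fun n =>
          hmax r' hr' x hx _ (hyu (w n) (hwI n)) (hlt (w n) (hw2 n).1.le (hw2 n).2) s hs
        have hmB : m ∈ closedBall x₀ r' :=
          isClosed_closedBall.mem_of_tendsto hm (Eventually.of_forall hmem)
        have hF1 : Tendsto (fun n => F (G (Z (w n) s))) atTop (𝓝 (F m)) :=
          ((hFc m (hbc (hsub hmB))).tendsto).comp
            (tendsto_nhdsWithin_iff.2 ⟨hm, Eventually.of_forall fun n => hbc (hsub (hmem n))⟩)
        have hF2 : Tendsto (fun n => Z (w n) s) atTop (𝓝 (Z u s)) := by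
          rw [tendsto_iff_norm_sub_tendsto_zero]
          have h7 : Tendsto (fun n => L * (u - w n)) atTop (𝓝 (L * (u - u))) :=
            (hw3.const_sub u).const_mul L
          rw [sub_self, mul_zero] at h7
          refine squeeze_zero (fun _ => norm_nonneg _) (fun n => ?_) h7
          rw [norm_sub_rev]
          exact hZlip s hs _ (hwI n) u huI (hw2 n).2.le
        have h8 : F m = Z u s := by
          refine tendsto_nhds_unique hF1 (hF2.congr fun n => ?_)
          exact (hFG _ (hlt (w n) (hw2 n).1.le (hw2 n).2 s hs)).symm
        rw [← h8]
        exact mem_image_of_mem F (hsub hmB)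
      · intro u' hu' s hs
        have : u' = 0 := le_antisymm hu'.2 hu'.1
        rw [this]; simp only [hZ, zero_smul, add_zero, sub_self, smul_zero]
        exact mem_image_of_mem F (hsub hx)
      · rintro u ⟨huS, hu⟩ v hv
        have huI : u ∈ Icc (0:ℝ) 1 := ⟨hu.1, hu.2.le⟩
        have hKc : IsCompact ((fun s => Z u s) '' Icc (0:ℝ) 1) :=
          isCompact_Icc.image (by simp only [hZ]; fun_prop)
        have hKV : ((fun s => Z u s) '' Icc (0:ℝ) 1) ⊆ V := by
          rintro _ ⟨s, hs, rfl⟩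
          exact huS u ⟨hu.1, le_rfl⟩ s hs
        obtain ⟨δ, hδ, hth⟩ := hKc.exists_thickening_subset_open hVo hKV
        refine ⟨min v (min 1 (u + δ / (2 * (L + 1)))), ?_, ?_, min_le_left _ _⟩
        · intro u' hu' s hs
          rcases le_or_gt u' u with h | h
          · exact huS u' ⟨hu'.1, h⟩ s hs
          have h1 : u' ≤ 1 := hu'.2.trans ((min_le_right _ _).trans (min_le_left _ _))
          have h2 : u' ≤ u + δ / (2 * (L + 1)) :=
            hu'.2.trans ((min_le_right _ _).trans (min_le_right _ _))
          apply hth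
          rw [mem_thickening_iff]
          refine ⟨Z u s, mem_image_of_mem _ hs, ?_⟩
          rw [dist_eq_norm]
          refine (hZlip s hs u huI u' ⟨hu'.1, h1⟩ h.le).trans_lt ?_
          have h3 : u' - u ≤ δ / (2 * (L + 1)) := by linarith
          rw [le_div_iff₀ (by positivity)] at h3
          nlinarith
        · refine lt_min hv (lt_min hu.2 ?_)
          have : 0 < δ / (2 * (L + 1)) := by positivity
          linarith
    intro s hs
    have := hsubset (right_mem_Icc.2 zero_le_one) 1 (right_mem_Icc.2 zero_le_one) s hs
    simpa [hZ] using this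
  have hVconv : ∀ z ∈ V, ∀ z' ∈ V, ∀ s ∈ Icc (0:ℝ) 1, z + s • (z' - z) ∈ V := by
    rintro _ ⟨x, hx, rfl⟩ _ ⟨y, hy, rfl⟩ s hs
    refine hcontn (max (dist x x₀) (dist y x₀)) (max_lt hx hy) x ?_ y ?_ s hs
    · exact mem_closedBall.2 (le_max_left _ _)
    · exact mem_closedBall.2 (le_max_right _ _)
  have hGV : ∀ z ∈ V, ∀ z' ∈ V, ‖G z' - G z‖ ≤ c * ‖z' - z‖ := by
    intro z hz z' hz'
    have := hGlip (fun t => z + t • (z' - z)) 0 1 ‖z' - z‖ zero_le_one (by fun_prop)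
      (fun t ht => hVconv z hz z' hz' t ht) ?_
    · simpa using this
    · intro t ht s hs hts
      have e : (z + s • (z' - z)) - (z + t • (z' - z)) = (s - t) • (z' - z) := by module
      rw [e, norm_smul, Real.norm_of_nonneg (by linarith), mul_comm]
  suffices hsuf : ∀ z ∈ F '' closedBall x₀ r, ∀ z' ∈ F '' closedBall x₀ r, ∀ s ∈ Icc (0:ℝ) 1,
      z + s • (z' - z) ∈ F '' closedBall x₀ r by
    intro z hz z' hz' a b ha hb hab
    have h := hsuf z hz z' hz' b ⟨hb, by linarith⟩
    have e : z + b • (z' - z) = a • z + b • z' := by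
      rw [eq_sub_of_add_eq hab]; module
    rwa [e] at h
  rintro _ ⟨x, hx, rfl⟩ _ ⟨y, hy, rfl⟩ s hs
  rcases le_or_gt r 0 with hr | hr
  · have hxy : x = y := by
      have h1 : dist x x₀ ≤ r := hx
      have h2 : dist y x₀ ≤ r := hy
      have h3 : x = x₀ := dist_le_zero.1 (h1.trans hr)
      have h4 : y = x₀ := dist_le_zero.1 (h2.trans hr)
      rw [h3, h4]
    subst hxy
    simpa using mem_image_of_mem F hx
  obtain ⟨a, -, ha2, ha3⟩ := exists_seq_strictMono_tendsto' (zero_lt_one' ℝ)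
  have hshr : ∀ x ∈ closedBall x₀ r, ∀ n, x₀ + a n • (x - x₀) ∈ ball x₀ r := by
    intro x hx n
    have hx' : ‖x - x₀‖ ≤ r := by simpa [dist_eq_norm] using hx
    rw [mem_ball, dist_eq_norm, add_sub_cancel_left, norm_smul, Real.norm_of_nonneg (ha2 n).1.le]
    calc a n * ‖x - x₀‖ ≤ a n * r := by gcongr; exact (ha2 n).1.le
      _ < 1 * r := by gcongr; exact (ha2 n).2
      _ = r := one_mul r
  have hFt : ∀ x ∈ closedBall x₀ r, Tendsto (fun n => F (x₀ + a n • (x - x₀))) atTop (𝓝 (F x)) := by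
    intro x hx
    have h1 : Tendsto (fun n => x₀ + a n • (x - x₀)) atTop (𝓝 x) := by
      have : Continuous (fun t : ℝ => x₀ + t • (x - x₀)) := by fun_prop
      have h2 := (this.tendsto 1).comp ha3
      simpa [Function.comp_def] using h2
    exact ((hFc x hx).tendsto).comp
      (tendsto_nhdsWithin_iff.2 ⟨h1, Eventually.of_forall fun n => hbc (hshr x hx n)⟩)
  set z : ℕ → X := fun n => F (x₀ + a n • (x - x₀)) +
    s • (F (x₀ + a n • (y - x₀)) - F (x₀ + a n • (x - x₀))) with hzdef
  have hzV : ∀ n, z n ∈ V := fun n => hVconv _ (mem_image_of_mem F (hshr x hx n)) _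
    (mem_image_of_mem F (hshr y hy n)) s hs
  have hzt : Tendsto z atTop (𝓝 (F x + s • (F y - F x))) :=
    (hFt x hx).add (((hFt y hy).sub (hFt x hx)).const_smul s)
  have hcau : CauchySeq (fun n => G (z n)) := by
    refine cauchy_of_lip (L := c) hzt.cauchySeq fun n m => ?_
    rw [dist_eq_norm, dist_eq_norm]
    exact hGV _ (hzV m) _ (hzV n)
  obtain ⟨m, hm⟩ := cauchySeq_tendsto_of_complete hcau
  have hmem : ∀ n, G (z n) ∈ closedBall x₀ r := fun n => hbc (hGm _ (hzV n))
  have hmB : m ∈ closedBall x₀ r :=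
    isClosed_closedBall.mem_of_tendsto hm (Eventually.of_forall hmem)
  have hF1 : Tendsto (fun n => F (G (z n))) atTop (𝓝 (F m)) :=
    ((hFc m hmB).tendsto).comp (tendsto_nhdsWithin_iff.2 ⟨hm, Eventually.of_forall hmem⟩)
  refine ⟨m, hmB, tendsto_nhds_unique hF1 (hzt.congr fun n => ?_)⟩
  exact (hFG _ (hzV n)).symm

structure OdeHyp (T : ℝ) (U : Set (ℝ × X)) (f : ℝ → X → X) (f' : ℝ → X → X →L[ℝ] X)
    (lm lp M₂ : ℝ) : Prop where
  hT : 0 ≤ T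
  op : ∀ t ∈ Icc 0 T, ∀ x, (t, x) ∈ U →
    ∃ ε > 0, ∀ t' ∈ Icc 0 T, ∀ x', |t' - t| < ε → ‖x' - x‖ < ε → (t', x') ∈ U
  fc : ContinuousOn (fun p : ℝ × X => f p.1 p.2) (U ∩ Icc 0 T ×ˢ univ)
  f'c : ContinuousOn (fun p : ℝ × X => f' p.1 p.2) (U ∩ Icc 0 T ×ˢ univ)
  der : ∀ t ∈ Icc 0 T, ∀ x, (t, x) ∈ U → HasFDerivAt (f t) (f' t x) x
  lo : ∀ t ∈ Icc 0 T, ∀ x, (t, x) ∈ U → ∀ h, lm * ‖h‖ ^ 2 ≤ ⟪f' t x h, h⟫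
  hi : ∀ t ∈ Icc 0 T, ∀ x, (t, x) ∈ U → ∀ h, ⟪f' t x h, h⟫ ≤ lp * ‖h‖ ^ 2
  m2 : ∀ t ∈ Icc 0 T, ∀ x, (t, x) ∈ U → ∀ C > M₂, ∃ δ > 0, ∀ h : X, ‖h‖ < δ →
    ‖f' t (x + h) - f' t x‖ ≤ C * ‖h‖

structure IsSol (T : ℝ) (U : Set (ℝ × X)) (f : ℝ → X → X) (v : ℝ → X) : Prop where
  mem : ∀ t ∈ Icc 0 T, (t, v t) ∈ U
  der : ∀ t ∈ Icc 0 T, HasDerivWithinAt v (f t (v t)) (Icc 0 T) t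

variable {T : ℝ} {U : Set (ℝ × X)} {f : ℝ → X → X} {f' : ℝ → X → X →L[ℝ] X} {lm lp M₂ : ℝ}

lemma IsSol.cont {γ : ℝ → X} (hγ : IsSol T U f γ) : ContinuousOn γ (Icc 0 T) :=
  fun t ht => (hγ.der t ht).continuousWithinAt

lemma OdeHyp.tube (H : OdeHyp T U f f' lm lp M₂) {γ : ℝ → X} (hγ : IsSol T U f γ) :
    ∃ ε > 0, ∃ L : ℝ, 0 ≤ L ∧ ∀ t ∈ Icc 0 T, ∀ y ∈ ball (γ t) ε,
      (t, y) ∈ U ∧ ‖f' t y‖ ≤ L ∧ ‖f t y‖ ≤ L := by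
  have key : ∃ ε > 0, ∃ L : ℝ, 0 ≤ L ∧ ∀ t ∈ Icc 0 T, t ∈ Icc 0 T → ∀ y ∈ ball (γ t) ε,
      (t, y) ∈ U ∧ ‖f' t y‖ ≤ L ∧ ‖f t y‖ ≤ L := by
    refine isCompact_Icc.induction_on (p := fun s => ∃ ε > 0, ∃ L : ℝ, 0 ≤ L ∧
      ∀ t ∈ s, t ∈ Icc 0 T → ∀ y ∈ ball (γ t) ε,
      (t, y) ∈ U ∧ ‖f' t y‖ ≤ L ∧ ‖f t y‖ ≤ L) ?_ ?_ ?_ ?_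
    · exact ⟨1, one_pos, 0, le_rfl, by simp⟩
    · rintro s t hst ⟨ε, hε, L, hL, h⟩
      exact ⟨ε, hε, L, hL, fun τ hτ => h τ (hst hτ)⟩
    · rintro s t ⟨ε, hε, L, hL, h⟩ ⟨ε', hε', L', hL', h'⟩
      refine ⟨min ε ε', lt_min hε hε', max L L', hL.trans (le_max_left _ _), ?_⟩
      rintro τ (hτ | hτ) hτI y hy
      · obtain ⟨h1, h2, h3⟩ := h τ hτ hτI y (ball_subset_ball (min_le_left _ _) hy)
        exact ⟨h1, h2.trans (le_max_left _ _), h3.trans (le_max_left _ _)⟩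
      · obtain ⟨h1, h2, h3⟩ := h' τ hτ hτI y (ball_subset_ball (min_le_right _ _) hy)
        exact ⟨h1, h2.trans (le_max_right _ _), h3.trans (le_max_right _ _)⟩
    · intro t ht
      obtain ⟨ε₀, hε₀, h₀⟩ := H.op t ht _ (hγ.mem t ht)
      have hp : (t, γ t) ∈ U ∩ Icc 0 T ×ˢ univ := ⟨hγ.mem t ht, ht, mem_univ _⟩
      obtain ⟨ε₁, hε₁, h₁⟩ := Metric.continuousWithinAt_iff.1 (H.fc _ hp) 1 one_pos
      obtain ⟨ε₂, hε₂, h₂⟩ := Metric.continuousWithinAt_iff.1 (H.f'c _ hp) 1 one_pos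
      set ε := min ε₀ (min ε₁ ε₂) with hε
      have hεpos : 0 < ε := lt_min hε₀ (lt_min hε₁ hε₂)
      have hγc := Metric.continuousWithinAt_iff.1 (hγ.cont t ht) (ε / 2) (by linarith)
      obtain ⟨η, hη, hηc⟩ := hγc
      refine ⟨Icc 0 T ∩ ball t (min η ε), ?_, ε / 2, by linarith,
        max (‖f t (γ t)‖ + 1) (‖f' t (γ t)‖ + 1),
        le_max_of_le_left (by positivity), ?_⟩
      · exact inter_mem self_mem_nhdsWithin
          (nhdsWithin_le_nhds (Metric.ball_mem_nhds t (lt_min hη hεpos)))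
      · rintro τ ⟨hτ, hτb⟩ - y hy
        have hd1 : dist τ t < ε := (mem_ball.1 hτb).trans_le (min_le_right _ _)
        have hd2 : dist (γ τ) (γ t) < ε / 2 := hηc hτ ((mem_ball.1 hτb).trans_le (min_le_left _ _))
        have hd3 : dist y (γ t) < ε := by
          have := dist_triangle y (γ τ) (γ t)
          have := mem_ball.1 hy
          linarith
        have hyU : (τ, y) ∈ U := h₀ τ hτ y
          (by rw [← Real.dist_eq]; exact hd1.trans_le (min_le_left _ _))
          (by rw [← dist_eq_norm]; exact hd3.trans_le (min_le_left _ _))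
        have hyU' : (τ, y) ∈ U ∩ Icc 0 T ×ˢ univ := ⟨hyU, hτ, mem_univ _⟩
        have hdd : dist (τ, y) (t, γ t) < ε := by
          rw [Prod.dist_eq]; exact max_lt hd1 hd3
        have e1 := h₁ hyU' (hdd.trans_le ((min_le_right _ _).trans (min_le_left _ _)))
        have e2 := h₂ hyU' (hdd.trans_le ((min_le_right _ _).trans (min_le_right _ _)))
        rw [dist_eq_norm] at e1 e2
        refine ⟨hyU, ?_, ?_⟩
        · refine le_trans ?_ (le_max_right _ _)
          have := norm_sub_norm_le (f' τ y) (f' t (γ t))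
          simp only at e2
          linarith
        · refine le_trans ?_ (le_max_left _ _)
          have := norm_sub_norm_le (f τ y) (f t (γ t))
          simp only at e1
          linarith
  obtain ⟨ε, hε, L, hL, h⟩ := key
  exact ⟨ε, hε, L, hL, fun t ht => h t ht ht⟩

lemma OdeHyp.lip (H : OdeHyp T U f f' lm lp M₂) {t ε L : ℝ} (ht : t ∈ Icc 0 T) {z : X}
    (hB : ∀ y ∈ ball z ε, (t, y) ∈ U ∧ ‖f' t y‖ ≤ L) {a b : X} (ha : a ∈ ball z ε)
    (hb : b ∈ ball z ε) : ‖f t b - f t a‖ ≤ L * ‖b - a‖ :=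
  (convex_ball z ε).norm_image_sub_le_of_norm_hasFDerivWithin_le
    (fun y hy => (H.der t ht y (hB y hy).1).hasFDerivWithinAt) (fun y hy => (hB y hy).2) ha hb

lemma OdeHyp.mean (H : OdeHyp T U f f' lm lp M₂) {t ε : ℝ} (ht : t ∈ Icc 0 T) {z : X}
    (hB : ∀ y ∈ ball z ε, (t, y) ∈ U) {a b : X} (ha : a ∈ ball z ε)
    (hb : b ∈ ball z ε) : lm * ‖b - a‖ ^ 2 ≤ ⟪f t b - f t a, b - a⟫ ∧
      ⟪f t b - f t a, b - a⟫ ≤ lp * ‖b - a‖ ^ 2 := by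
  have hmem : ∀ s ∈ Icc (0:ℝ) 1, (t, a + s • (b - a)) ∈ U := fun s hs =>
    hB _ ((convex_ball z ε).add_smul_sub_mem ha hb hs)
  have hd : ∀ s ∈ Icc (0:ℝ) 1, HasDerivAt (fun s : ℝ => ⟪f t (a + s • (b - a)), b - a⟫)
      (⟪f' t (a + s • (b - a)) (b - a), b - a⟫) s := by
    intro s hs
    have h1 : HasDerivAt (fun s : ℝ => a + s • (b - a)) (b - a) s := by
      simpa using ((hasDerivAt_id s).smul_const (b - a)).const_add a
    have h2 := (H.der t ht _ (hmem s hs)).comp_hasDerivAt s h1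
    have h3 := h2.inner ℝ (hasDerivAt_const s (b - a))
    simpa using h3
  obtain ⟨s, hs, hse⟩ := exists_hasDerivAt_eq_slope
    (fun s : ℝ => ⟪f t (a + s • (b - a)), b - a⟫)
    (fun s => ⟪f' t (a + s • (b - a)) (b - a), b - a⟫) zero_lt_one
    (fun s hs => (hd s hs).continuousAt.continuousWithinAt)
    (fun s hs => hd s ⟨hs.1.le, hs.2.le⟩)
  have e : ⟪f t b - f t a, b - a⟫ = ⟪f' t (a + s • (b - a)) (b - a), b - a⟫ := by
    rw [hse, inner_sub_left]; simp
  have hsU := hmem s ⟨hs.1.le, hs.2.le⟩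
  rw [e]
  exact ⟨H.lo t ht _ hsU _, H.hi t ht _ hsU _⟩

lemma OdeHyp.flip (H : OdeHyp T U f f' lm lp M₂) {t ε : ℝ} (ht : t ∈ Icc 0 T) {z : X}
    (hB : ∀ y ∈ ball z ε, (t, y) ∈ U) {a b : X} (ha : a ∈ ball z ε)
    (hb : b ∈ ball z ε) : ‖f' t b - f' t a‖ ≤ M₂ * ‖b - a‖ := by
  have hmem : ∀ s ∈ Icc (0:ℝ) 1, (t, a + s • (b - a)) ∈ U := fun s hs =>
    hB _ ((convex_ball z ε).add_smul_sub_mem ha hb hs)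
  rcases eq_or_ne a b with rfl | hab
  · simp
  have hn : 0 < ‖b - a‖ := norm_pos_iff.2 (sub_ne_zero.2 hab.symm)
  have := lip_of_slope (h := fun s : ℝ => f' t (a + s • (b - a))) (a := 0) (b := 1)
    (C := M₂ * ‖b - a‖) zero_le_one ?_ ?_
  · simpa using this
  · have h1 : ContinuousOn (fun s : ℝ => ((t, a + s • (b - a)) : ℝ × X)) (Icc 0 1) := by fun_prop
    exact H.f'c.comp h1 (fun s hs => ⟨hmem s hs, ht, mem_univ _⟩)
  · intro s hs C' hC'
    have hC'' : M₂ < C' / ‖b - a‖ := by rwa [lt_div_iff₀ hn]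
    obtain ⟨δ, hδ, h⟩ := H.m2 t ht _ (hmem s ⟨hs.1, hs.2.le⟩) _ hC''
    have h1 : ∀ᶠ s' in 𝓝[>] s, ‖(s' - s) • (b - a)‖ < δ := by
      have : Continuous (fun s' : ℝ => ‖(s' - s) • (b - a)‖) := by fun_prop
      have h2 := this.tendsto s
      simp only [sub_self, norm_zero, zero_smul] at h2
      exact (h2.mono_left nhdsWithin_le_nhds).eventually (gt_mem_nhds hδ)
    filter_upwards [h1, self_mem_nhdsWithin] with s' h2 h3
    have h3' : s < s' := h3
    have h4 := h _ h2
    have e : a + s • (b - a) + (s' - s) • (b - a) = a + s' • (b - a) := by module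
    rw [e, norm_smul, Real.norm_of_nonneg (by linarith)] at h4
    refine h4.trans (le_of_eq ?_)
    field_simp

lemma OdeHyp.quad (H : OdeHyp T U f f' lm lp M₂) {t ε : ℝ} (ht : t ∈ Icc 0 T) {z : X}
    (hB : ∀ y ∈ ball z ε, (t, y) ∈ U) {a b : X} (ha : a ∈ ball z ε)
    (hb : b ∈ ball z ε) :
    ‖(1 / 2 : ℝ) • (f t a + f t b) - f t ((1 / 2 : ℝ) • (a + b))‖ ≤ M₂ / 8 * ‖a - b‖ ^ 2 := by
  set w := (1 / 2 : ℝ) • (a + b) with hw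
  set h := (1 / 2 : ℝ) • (a - b) with hh
  have hp : ∀ s ∈ Icc (0:ℝ) 1, w + s • h ∈ ball z ε := by
    intro s hs
    have e : w + s • h = ((1 + s) / 2) • a + ((1 - s) / 2) • b := by
      rw [hw, hh]; module
    rw [e]
    exact convex_ball z ε ha hb (by linarith [hs.1]) (by linarith [hs.2]) (by ring)
  have hm : ∀ s ∈ Icc (0:ℝ) 1, w + (-s) • h ∈ ball z ε := by
    intro s hs
    have e : w + (-s) • h = ((1 - s) / 2) • a + ((1 + s) / 2) • b := by
      rw [hw, hh]; module
    rw [e]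
    exact convex_ball z ε ha hb (by linarith [hs.2]) (by linarith [hs.1]) (by ring)
  have hd : ∀ s ∈ Icc (0:ℝ) 1, HasDerivAt
      (fun s : ℝ => (1 / 2 : ℝ) • (f t (w + s • h) + f t (w + (-s) • h)) - f t w)
      ((1 / 2 : ℝ) • (f' t (w + s • h) h + f' t (w + (-s) • h) (-h))) s := by
    intro s hs
    have h1 : HasDerivAt (fun s : ℝ => w + s • h) h s := by
      simpa using ((hasDerivAt_id s).smul_const h).const_add w
    have h1' : HasDerivAt (fun s : ℝ => w + (-s) • h) (-h) s := by
      simpa using ((hasDerivAt_neg s).smul_const h).const_add w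
    have h2 := (H.der t ht _ (hB _ (hp s hs))).comp_hasDerivAt s h1
    have h2' := (H.der t ht _ (hB _ (hm s hs))).comp_hasDerivAt s h1'
    exact ((h2.add h2').const_smul (1 / 2 : ℝ)).sub_const _
  have main := image_norm_le_of_norm_deriv_right_le_deriv_boundary' (a := 0) (b := 1)
    (f := fun s : ℝ => (1 / 2 : ℝ) • (f t (w + s • h) + f t (w + (-s) • h)) - f t w)
    (f' := fun s => (1 / 2 : ℝ) • (f' t (w + s • h) h + f' t (w + (-s) • h) (-h)))
    (B := fun s => M₂ * ‖h‖ ^ 2 / 2 * s ^ 2) (B' := fun s => M₂ * ‖h‖ ^ 2 * s)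
    (fun s hs => (hd s hs).continuousAt.continuousWithinAt)
    (fun s hs => (hd s ⟨hs.1, hs.2.le⟩).hasDerivWithinAt)
    (by
      have e : (1 / 2 : ℝ) • (f t w + f t w) - f t w = 0 := by module
      simp only [zero_smul, neg_zero, add_zero, e, norm_zero]; norm_num)
    (by fun_prop)
    (fun s hs => by
      have := ((hasDerivAt_pow 2 s).const_mul (M₂ * ‖h‖ ^ 2 / 2)).hasDerivWithinAt (s := Ici s)
      refine this.congr_deriv ?_
      norm_num; ring)
    (fun s hs => by
      have hs' : s ∈ Icc (0:ℝ) 1 := ⟨hs.1, hs.2.le⟩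
      have h1 := H.flip ht hB (hm s hs') (hp s hs')
      have e1 : (w + s • h) - (w + (-s) • h) = (2 * s) • h := by module
      rw [e1, norm_smul, Real.norm_of_nonneg (by linarith [hs.1])] at h1
      have e2 : f' t (w + s • h) h + f' t (w + (-s) • h) (-h) =
        (f' t (w + s • h) - f' t (w + (-s) • h)) h := by
        simp [sub_eq_add_neg]
      rw [e2, norm_smul]
      have h2 := (f' t (w + s • h) - f' t (w + (-s) • h)).le_opNorm h
      have h3 := mul_le_mul_of_nonneg_right h1 (norm_nonneg h)
      have e3 : ‖(1 / 2 : ℝ)‖ = 1 / 2 := by norm_num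
      rw [e3]
      nlinarith)
    (right_mem_Icc.2 zero_le_one)
  have ea : w + (1:ℝ) • h = a := by rw [hw, hh]; module
  have eb : w + (-1:ℝ) • h = b := by rw [hw, hh]; module
  simp only [ea, eb] at main
  refine main.trans (le_of_eq ?_)
  have : ‖h‖ = 1 / 2 * ‖a - b‖ := by rw [hh, norm_smul]; norm_num
  rw [this]; ring

lemma rev_der {v : ℝ → X} {v' : X} {s : ℝ} 
    (h : HasDerivWithinAt v v' (Icc 0 T) (T - s)) :
    HasDerivWithinAt (fun s => v (T - s)) (-v') (Icc 0 T) s := by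
  have h1 : HasDerivWithinAt (fun s : ℝ => T - s) (-1) (Icc 0 T) s :=
    ((hasDerivAt_id s).const_sub T).hasDerivWithinAt
  have := HasDerivWithinAt.scomp (t' := Icc 0 T) s h h1 (fun x hx => ⟨by linarith [hx.2], by linarith [hx.1]⟩)
  simpa [Function.comp_def] using this

lemma exp_le_abs {l t : ℝ} (ht : t ∈ Icc 0 T) : Real.exp (l * t) ≤ Real.exp (|l| * T) := by
  apply Real.exp_le_exp.2
  calc l * t ≤ |l| * t := mul_le_mul_of_nonneg_right (le_abs_self _) ht.1
    _ ≤ |l| * T := mul_le_mul_of_nonneg_left ht.2 (abs_nonneg _)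

lemma rev_mem {s : ℝ} (hs : s ∈ Icc 0 T) : T - s ∈ Icc 0 T :=
  ⟨by linarith [hs.2], by linarith [hs.1]⟩

lemma fence_big {u u' : ℝ → X} {T lam a : ℝ} (A A' : ℝ → ℝ) (hT : 0 ≤ T)
    (hu : ∀ t ∈ Icc 0 T, HasDerivWithinAt u (u' t) (Icc 0 T) t)
    (hA : ∀ t, HasDerivAt A (A' t) t) (hA0 : ∀ t ∈ Icc 0 T, 0 ≤ A t)
    (ha : ‖u 0‖ ≤ a)
    (hd : ∀ t ∈ Icc 0 T,
      ⟪u' t, u t⟫ ≤ lam * ‖u t‖ ^ 2 + Real.exp (lam * t) * A' t * ‖u t‖) :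
    ∀ t ∈ Icc 0 T, ‖u t‖ ≤ Real.exp (lam * t) * (a + A t) := by
  have hAc : Continuous A := continuous_iff_continuousAt.2 fun t => (hA t).continuousAt
  have hc : Continuous fun t => Real.exp (lam * t) * (a + A t) := by fun_prop
  obtain ⟨B, hB⟩ := (isCompact_Icc (a := (0:ℝ)) (b := T)).bddAbove_image hc.continuousOn
  have hB' : ∀ t ∈ Icc 0 T, Real.exp (lam * t) * (a + A t) ≤ B := fun t ht =>
    hB (mem_image_of_mem _ ht)
  refine fence (ε := 2 * (|B| + 1)) A A' hT (by positivity) hu hA hA0 ha ?_ fun t ht _ => hd t ht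
  intro t ht
  have := hB' t ht
  have := le_abs_self B
  linarith

lemma OdeHyp.fwd (H : OdeHyp T U f f' lm lp M₂) {γ : ℝ → X} (hγ : IsSol T U f γ) {ε : ℝ}
    (hε : 0 < ε) (hB : ∀ t ∈ Icc 0 T, ∀ y ∈ ball (γ t) ε, (t, y) ∈ U) {v v' : ℝ → X}
    (hv : ∀ t ∈ Icc 0 T, HasDerivWithinAt v (v' t) (Icc 0 T) t)
    (hv' : ∀ t ∈ Icc 0 T, ‖v t - γ t‖ < ε → v' t = f t (v t))
    (h0 : Real.exp (|lp| * T) * ‖v 0 - γ 0‖ ≤ ε / 2) :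
    ∀ t ∈ Icc 0 T, ‖v t - γ t‖ ≤ Real.exp (lp * t) * ‖v 0 - γ 0‖ := by
  have := fence (u := fun t => v t - γ t) (u' := fun t => v' t - f t (γ t)) (lam := lp)
    (ε := ε) (a := ‖v 0 - γ 0‖) (fun _ => 0) (fun _ => 0) H.hT hε
    (fun t ht => (hv t ht).sub (hγ.der t ht)) (fun t => hasDerivAt_const t 0)
    (fun _ _ => le_rfl) le_rfl ?_ ?_
  · simpa using this
  · intro t ht
    rw [add_zero]
    exact (mul_le_mul_of_nonneg_right (exp_le_abs ht) (norm_nonneg _)).trans h0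
  · intro t ht hlt
    simp only [mul_zero, zero_mul, add_zero]
    rw [hv' t ht hlt]
    exact (H.mean ht (hB t ht) (mem_ball_self hε) (by rwa [mem_ball, dist_eq_norm])).2

lemma OdeHyp.bwd (H : OdeHyp T U f f' lm lp M₂) {γ : ℝ → X} (hγ : IsSol T U f γ) {ε : ℝ}
    (hε : 0 < ε) (hB : ∀ t ∈ Icc 0 T, ∀ y ∈ ball (γ t) ε, (t, y) ∈ U) {v v' : ℝ → X}
    (hv : ∀ t ∈ Icc 0 T, HasDerivWithinAt v (v' t) (Icc 0 T) t)
    (hv' : ∀ t ∈ Icc 0 T, ‖v t - γ t‖ < ε → v' t = f t (v t))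
    (h0 : Real.exp (|lm| * T) * ‖v T - γ T‖ ≤ ε / 2) :
    ∀ t ∈ Icc 0 T, ‖v t - γ t‖ ≤ Real.exp (-lm * (T - t)) * ‖v T - γ T‖ := by
  have := fence (u := fun s => v (T - s) - γ (T - s))
    (u' := fun s => -v' (T - s) - -f (T - s) (γ (T - s))) (lam := -lm)
    (ε := ε) (a := ‖v T - γ T‖) (fun _ => 0) (fun _ => 0) H.hT hε
    (fun t ht => (rev_der (hv _ (rev_mem ht))).sub (rev_der (hγ.der _ (rev_mem ht))))
    (fun t => hasDerivAt_const t 0)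
    (fun _ _ => le_rfl) (by simp) ?_ ?_
  · intro t ht
    simpa using this _ (rev_mem ht)
  · intro t ht
    rw [add_zero]
    refine (mul_le_mul_of_nonneg_right (exp_le_abs ht) (norm_nonneg _)).trans ?_
    rwa [abs_neg]
  · intro t ht hlt
    simp only [mul_zero, zero_mul, add_zero]
    rw [hv' _ (rev_mem ht) hlt]
    have := (H.mean (rev_mem ht) (hB _ (rev_mem ht)) (mem_ball_self hε)
      (b := v (T - t)) (by rwa [mem_ball, dist_eq_norm])).1
    rw [neg_sub_neg, ← neg_sub (f (T - t) (v (T - t))), inner_neg_left]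
    linarith

lemma small_pos {E ε : ℝ} (hE : 0 < E) (hε : 0 < ε) : ∃ δ > 0, ∀ x < δ, E * x ≤ ε := by
  refine ⟨ε / E, by positivity, fun x hx => ?_⟩
  rw [lt_div_iff₀ hE] at hx
  linarith

lemma OdeHyp.uniq (H : OdeHyp T U f f' lm lp M₂) {γ v : ℝ → X} (hγ : IsSol T U f γ)
    (hv : IsSol T U f v) (h0 : v 0 = γ 0) : ∀ t ∈ Icc 0 T, v t = γ t := by
  obtain ⟨ε, hε, L, hL, hB⟩ := H.tube hγ
  intro t ht
  have := H.fwd hγ hε (fun t ht y hy => (hB t ht y hy).1) hv.der (fun _ _ _ => rfl)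
    (by simp [h0]; positivity) t ht
  simpa [h0, sub_eq_zero] using this

lemma OdeHyp.uniqb (H : OdeHyp T U f f' lm lp M₂) {γ v : ℝ → X} (hγ : IsSol T U f γ)
    (hv : IsSol T U f v) (h0 : v T = γ T) : v 0 = γ 0 := by
  obtain ⟨ε, hε, L, hL, hB⟩ := H.tube hγ
  have := H.bwd hγ hε (fun t ht y hy => (hB t ht y hy).1) hv.der (fun _ _ _ => rfl)
    (by simp [h0]; positivity) 0 ⟨le_rfl, H.hT⟩
  simpa [h0, sub_eq_zero] using this

lemma OdeHyp.two (H : OdeHyp T U f f' lm lp M₂) {γ v w : ℝ → X} {ε : ℝ}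
    (hB : ∀ t ∈ Icc 0 T, ∀ y ∈ ball (γ t) ε, (t, y) ∈ U)
    (hv : IsSol T U f v) (hw : IsSol T U f w)
    (hvB : ∀ t ∈ Icc 0 T, v t ∈ ball (γ t) ε) (hwB : ∀ t ∈ Icc 0 T, w t ∈ ball (γ t) ε) :
    ∀ t ∈ Icc 0 T, ‖v t - w t‖ ≤ Real.exp (lp * t) * ‖v 0 - w 0‖ := by
  have := fence_big (u := fun t => v t - w t) (u' := fun t => f t (v t) - f t (w t)) (lam := lp)
    (a := ‖v 0 - w 0‖) (fun _ => 0) (fun _ => 0) H.hT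
    (fun t ht => (hv.der t ht).sub (hw.der t ht)) (fun t => hasDerivAt_const t 0)
    (fun _ _ => le_rfl) le_rfl ?_
  · simpa using this
  · intro t ht
    simp only [mul_zero, zero_mul, add_zero]
    exact (H.mean ht (hB t ht) (hwB t ht) (hvB t ht)).2

lemma OdeHyp.exist [CompleteSpace X] (H : OdeHyp T U f f' lm lp M₂) {γ : ℝ → X}
    (hγ : IsSol T U f γ) {η : ℝ} (hη : 0 < η) : ∃ δ > 0, ∀ z, ‖z - γ T‖ < δ →
      ∃ ψ : ℝ → X, IsSol T U f ψ ∧ ψ T = z ∧ (∀ t ∈ Icc 0 T, ‖ψ t - γ t‖ < η) ∧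
        ‖ψ 0 - γ 0‖ ≤ Real.exp (-lm * T) * ‖z - γ T‖ := by
  obtain ⟨ε₀, hε₀, L, hL, hB₀⟩ := H.tube hγ
  set ε := min ε₀ η with hεd
  have hε : 0 < ε := lt_min hε₀ hη
  have hB : ∀ t ∈ Icc 0 T, ∀ y ∈ ball (γ t) ε, (t, y) ∈ U ∧ ‖f' t y‖ ≤ L ∧ ‖f t y‖ ≤ L :=
    fun t ht y hy => hB₀ t ht y (ball_subset_ball (min_le_left _ _) hy)
  obtain ⟨P, hP1, hP2, hP3⟩ := retract_exists (X := X) (half_pos hε)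
  obtain ⟨δ, hδ, hδ'⟩ := small_pos (Real.exp_pos (|lm| * T)) (ε := ε / 2 / 4) (by positivity)
  refine ⟨δ, hδ, fun z hz => ?_⟩
  have hPb : ∀ t x, γ t + P (x - γ t) ∈ ball (γ t) ε := by
    intro t x
    rw [mem_ball, dist_eq_norm, add_sub_cancel_left]
    linarith [hP1 (x - γ t)]
  have hPc : Continuous P := by
    have : LipschitzWith 2 P := LipschitzWith.of_dist_le_mul fun v w => by
      simpa [dist_eq_norm] using hP3 v w
    exact this.continuous
  let g : ℝ → X → X := fun t x => f t (γ t + P (x - γ t))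
  have hT' : T ∈ Icc 0 T := ⟨H.hT, le_rfl⟩
  have hPL : IsPicardLindelof g (tmin := 0) (tmax := T) ⟨T, hT'⟩ z
      (L.toNNReal * T.toNNReal) 0 L.toNNReal (L.toNNReal * 2) := by
    constructor
    · intro t ht
      refine LipschitzWith.lipschitzOnWith (LipschitzWith.of_dist_le_mul fun x y => ?_)
      rw [dist_eq_norm, dist_eq_norm]
      have h1 := H.lip ht (fun y hy => ⟨(hB t ht y hy).1, (hB t ht y hy).2.1⟩) (hPb t y) (hPb t x)
      refine h1.trans ?_
      have h2 := hP3 (x - γ t) (y - γ t)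
      have h3 : γ t + P (x - γ t) - (γ t + P (y - γ t)) = P (x - γ t) - P (y - γ t) := by abel
      rw [h3]
      rw [sub_sub_sub_cancel_right] at h2
      rw [NNReal.coe_mul, Real.coe_toNNReal L hL, NNReal.coe_ofNat, mul_assoc]
      exact mul_le_mul_of_nonneg_left h2 hL
    · intro x _
      have h1 : ContinuousOn (fun t => ((t, γ t + P (x - γ t)) : ℝ × X)) (Icc 0 T) :=
        continuousOn_id.prodMk (hγ.cont.add (hPc.comp_continuousOn (continuousOn_const.sub hγ.cont)))
      exact H.fc.comp h1 fun t ht => ⟨(hB t ht _ (hPb t x)).1, ht, mem_univ _⟩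
    · intro t ht x _
      rw [Real.coe_toNNReal L hL]
      exact (hB t ht _ (hPb t x)).2.2
    · simp [H.hT, hL]
  obtain ⟨ψ, hψT, hψ⟩ := hPL.exists_eq_forall_mem_Icc_hasDerivWithinAt₀
  simp only at hψT
  have hgf : ∀ t ∈ Icc 0 T, ‖ψ t - γ t‖ < ε / 2 → g t (ψ t) = f t (ψ t) := by
    intro t ht hlt
    simp only [g]
    rw [hP2 _ hlt.le]; congr 1; abel
  have hsm := hδ' _ hz
  have hbw := H.bwd hγ (half_pos hε)
    (fun t ht y hy => (hB t ht y (ball_subset_ball (by linarith) hy)).1) hψ hgf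
    (by rw [hψT]; linarith)
  rw [hψT] at hbw
  have hbd : ∀ t ∈ Icc 0 T, ‖ψ t - γ t‖ < ε / 2 := by
    intro t ht
    refine (hbw t ht).trans_lt ?_
    have := exp_le_abs (l := -lm) (rev_mem ht)
    rw [abs_neg] at this
    have := mul_le_mul_of_nonneg_right this (norm_nonneg (z - γ T))
    linarith
  refine ⟨ψ, ⟨fun t ht => (hB t ht _ ?_).1, fun t ht => ?_⟩, hψT, ?_, ?_⟩
  · rw [mem_ball, dist_eq_norm]; linarith [hbd t ht]
  · rw [← hgf t ht (hbd t ht)]; exact hψ t ht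
  · intro t ht
    have := hbd t ht
    have := min_le_right ε₀ η
    linarith
  · simpa using hbw 0 ⟨le_rfl, H.hT⟩

lemma kappa_exists (M T : ℝ) (hT : 0 ≤ T) : ∃ κ : ℝ → ℝ,
    (∀ s, HasDerivAt κ (Real.exp (M * (T - s))) s) ∧ (∀ s ∈ Icc 0 T, 0 ≤ κ s) ∧
    κ T = if M = 0 then T else (Real.exp (M * T) - 1) / M := by
  have key : ∃ κ : ℝ → ℝ, (∀ s, HasDerivAt κ (Real.exp (M * (T - s))) s) ∧ κ 0 = 0 ∧ 
      κ T = if M = 0 then T else (Real.exp (M * T) - 1) / M := by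
    by_cases hM : M = 0
    · refine ⟨fun s => s, fun s => ?_, rfl, by simp [hM]⟩
      simpa [hM] using hasDerivAt_id' s
    · refine ⟨fun s => (Real.exp (M * T) - Real.exp (M * (T - s))) / M, fun s => ?_, by simp,
        by simp [hM]⟩
      have h1 : HasDerivAt (fun s : ℝ => Real.exp (M * (T - s)))
          (Real.exp (M * (T - s)) * (M * (-1))) s :=
        (((hasDerivAt_id s).const_sub T).const_mul M).exp
      refine ((h1.const_sub _).div_const M).congr_deriv ?_
      field_simp
  obtain ⟨κ, h1, h2, h3⟩ := key
  refine ⟨κ, h1, fun s hs => ?_, h3⟩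
  have hmono : Monotone κ := monotone_of_deriv_nonneg (fun s => (h1 s).differentiableAt)
    (fun s => by rw [(h1 s).deriv]; positivity)
  rw [← h2]; exact hmono hs.1

lemma OdeHyp.midpt (H : OdeHyp T U f f' lm lp M₂) (hM₂ : 0 ≤ M₂) {γ v w m : ℝ → X} {ε : ℝ}
    (hB : ∀ t ∈ Icc 0 T, ∀ y ∈ ball (γ t) ε, (t, y) ∈ U)
    (hv : IsSol T U f v) (hw : IsSol T U f w) (hm : IsSol T U f m)
    (hvB : ∀ t ∈ Icc 0 T, v t ∈ ball (γ t) ε) (hwB : ∀ t ∈ Icc 0 T, w t ∈ ball (γ t) ε)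
    (hmB : ∀ t ∈ Icc 0 T, m t ∈ ball (γ t) ε)
    (hmT : m T = (1 / 2 : ℝ) • (v T + w T)) {K : ℝ}
    (hK : K = if 2 * lp - lm = 0 then T else (Real.exp ((2 * lp - lm) * T) - 1) / (2 * lp - lm)) :
    ‖m 0 - (1 / 2 : ℝ) • (v 0 + w 0)‖ ≤ M₂ * K / 8 * ‖v 0 - w 0‖ ^ 2 := by
  obtain ⟨κ, hκ1, hκ2, hκ3⟩ := kappa_exists (2 * lp - lm) T H.hT
  set d := ‖v 0 - w 0‖ with hd
  have h2 := H.two hB hv hw hvB hwB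
  set c := M₂ / 8 * d ^ 2 * Real.exp (lm * T) with hc
  have hc0 : 0 ≤ c := by positivity
  have hmain := fence_big (T := T) (lam := -lm) (a := 0)
    (u := fun s => m (T - s) - (1 / 2 : ℝ) • (v (T - s) + w (T - s)))
    (u' := fun s => -f (T - s) (m (T - s)) -
      (1 / 2 : ℝ) • (-f (T - s) (v (T - s)) + -f (T - s) (w (T - s))))
    (fun s => c * κ s) (fun s => c * Real.exp ((2 * lp - lm) * (T - s))) H.hT
    (fun s hs => (rev_der (hm.der _ (rev_mem hs))).sub
      (((rev_der (hv.der _ (rev_mem hs))).add (rev_der (hw.der _ (rev_mem hs)))).const_smul _))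
    (fun s => (hκ1 s).const_mul c) (fun s hs => mul_nonneg hc0 (hκ2 s hs))
    (by simp [hmT]) ?_ T ⟨H.hT, le_rfl⟩
  · simp only [sub_self, zero_add, hκ3, ← hK] at hmain
    refine hmain.trans (le_of_eq ?_)
    rw [hc, neg_mul, Real.exp_neg]
    field_simp
  · intro s hs
    set t := T - s with ht
    have htm : t ∈ Icc 0 T := rev_mem hs
    set p := (1 / 2 : ℝ) • (v t + w t) with hp
    have hpB : p ∈ ball (γ t) ε := by
      have := (convex_ball (γ t) ε) (hvB t htm) (hwB t htm) (a := 1 / 2) (b := 1 / 2)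
        (by norm_num) (by norm_num) (by norm_num)
      rwa [← smul_add] at this
    have hq := H.quad htm (hB t htm) (hvB t htm) (hwB t htm)
    have hmn := (H.mean htm (hB t htm) hpB (hmB t htm)).1
    set e := (1 / 2 : ℝ) • (f t (v t) + f t (w t)) - f t p with he
    have e1 : -f t (m t) - (1 / 2 : ℝ) • (-f t (v t) + -f t (w t)) = -(f t (m t) - f t p) + e := by
      rw [he]; module
    have e2 : ‖v t - w t‖ ^ 2 ≤ Real.exp (2 * lp * t) * d ^ 2 := by
      calc ‖v t - w t‖ ^ 2 ≤ (Real.exp (lp * t) * d) ^ 2 :=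
            pow_le_pow_left₀ (norm_nonneg _) (h2 t htm) 2
        _ = Real.exp (2 * lp * t) * d ^ 2 := by
            rw [mul_pow, ← Real.exp_nat_mul]; congr 2; push_cast; ring
    have e3 : Real.exp (-lm * s) * (c * Real.exp ((2 * lp - lm) * t))
        = M₂ / 8 * (Real.exp (2 * lp * t) * d ^ 2) := by
      have : Real.exp (2 * lp * t) = Real.exp (-lm * s) * Real.exp (lm * T) *
          Real.exp ((2 * lp - lm) * t) := by
        rw [← Real.exp_add, ← Real.exp_add]; congr 1; rw [ht]; ring
      rw [this, hc]; ring
    have e4 : ‖e‖ ≤ Real.exp (-lm * s) * (c * Real.exp ((2 * lp - lm) * t)) := by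
      rw [e3]; exact hq.trans (mul_le_mul_of_nonneg_left e2 (by positivity))
    rw [e1, inner_add_left, inner_neg_left]
    have e5 : ⟪e, m t - p⟫ ≤ ‖e‖ * ‖m t - p‖ := real_inner_le_norm _ _
    have e6 := mul_le_mul_of_nonneg_right e4 (norm_nonneg (m t - p))
    linarith

theorem OdeHyp.core [CompleteSpace X] (H : OdeHyp T U f f' lm lp M₂) (hM₂ : 0 ≤ M₂)
    {x₀ : X} {r K : ℝ} {φ : X → ℝ → X} (h0 : ∀ x ∈ closedBall x₀ r, φ x 0 = x)
    (hφ : ∀ x ∈ closedBall x₀ r, IsSol T U f (φ x))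
    (hK : K = if 2 * lp - lm = 0 then T else (Real.exp ((2 * lp - lm) * T) - 1) / (2 * lp - lm))
    (hrK : r * M₂ * K ≤ 1) :
    Convex ℝ ((fun x => φ x T) '' closedBall x₀ r) := by
  have hT0 : (0:ℝ) ∈ Icc 0 T := ⟨le_rfl, H.hT⟩
  have hTT : T ∈ Icc 0 T := ⟨H.hT, le_rfl⟩
  have hK0 : 0 ≤ K := by
    obtain ⟨κ, hκ1, hκ2, hκ3⟩ := kappa_exists (2 * lp - lm) T H.hT
    rw [hK, ← hκ3]; exact hκ2 T hTT
  have hcb : ∀ x ∈ ball x₀ r, x ∈ closedBall x₀ r := fun x hx => ball_subset_closedBall hx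
  have hball : ∀ x ∈ ball x₀ r, ∃ η > 0, ∀ y, ‖y - x‖ < η → y ∈ ball x₀ r := by
    intro x hx
    obtain ⟨η, hη, h⟩ := Metric.isOpen_iff.1 isOpen_ball x hx
    exact ⟨η, hη, fun y hy => h (by rwa [mem_ball, dist_eq_norm])⟩
  have hstab : ∀ x ∈ closedBall x₀ r, ∀ η > 0, ∃ δ > 0, ∀ y ∈ closedBall x₀ r, ‖y - x‖ < δ →
      ∀ t ∈ Icc 0 T, ‖φ y t - φ x t‖ ≤ Real.exp (lp * t) * ‖y - x‖ ∧ ‖φ y t - φ x t‖ < η := by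
    intro x hx η hη
    obtain ⟨ε, hε, L, hL, hB⟩ := H.tube (hφ x hx)
    have hε' : 0 < min ε η := lt_min hε hη
    obtain ⟨δ, hδ, hδ'⟩ := small_pos (Real.exp_pos (|lp| * T)) (half_pos hε')
    refine ⟨δ, hδ, fun y hy hyx t ht => ?_⟩
    have h1 := H.fwd (hφ x hx) hε'
      (fun t ht y hy => (hB t ht y (ball_subset_ball (min_le_left _ _) hy)).1) (hφ y hy).der
      (fun _ _ _ => rfl) (by rw [h0 x hx, h0 y hy]; exact hδ' _ hyx) t ht
    rw [h0 x hx, h0 y hy] at h1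
    refine ⟨h1, ?_⟩
    have h2 := mul_le_mul_of_nonneg_right (exp_le_abs (l := lp) ht) (norm_nonneg (y - x))
    have h3 := hδ' _ hyx
    have h4 := min_le_right ε η
    linarith
  have hex : ∀ x ∈ ball x₀ r, ∀ η > 0, ∃ δ > 0, ∀ z, ‖z - φ x T‖ < δ → ∃ y ∈ ball x₀ r,
      φ y T = z ∧ (∀ t ∈ Icc 0 T, ‖φ y t - φ x t‖ < η) ∧
      ‖y - x‖ ≤ Real.exp (-lm * T) * ‖z - φ x T‖ := by
    intro x hx η hη
    obtain ⟨η', hη', hb⟩ := hball x hx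
    obtain ⟨δ, hδ, h⟩ := H.exist (hφ x (hcb x hx)) (lt_min hη hη')
    refine ⟨δ, hδ, fun z hz => ?_⟩
    obtain ⟨ψ, h1, h2, h3, h4⟩ := h z hz
    rw [h0 x (hcb x hx)] at h4
    have hy : ψ 0 ∈ ball x₀ r := by
      apply hb
      have := h3 0 hT0
      rw [h0 x (hcb x hx)] at this
      exact this.trans_le (min_le_right _ _)
    have hu := H.uniq h1 (hφ _ (hcb _ hy)) (h0 _ (hcb _ hy))
    refine ⟨ψ 0, hy, ?_, fun t ht => ?_, h4⟩
    · rw [hu T hTT, h2]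
    · rw [hu t ht]; exact (h3 t ht).trans_le (min_le_left _ _)
  refine convex_image (C := Real.exp (lp * T)) (c := Real.exp (-lm * T)) (k := M₂ * K / 8)
    (by positivity) (by positivity) (by positivity) (by linarith) ?_ ?_ ?_ ?_
  · intro x hx y hy hxy
    have := H.uniqb (hφ y hy) (hφ x hx) hxy
    rwa [h0 x hx, h0 y hy] at this
  · intro x hx
    obtain ⟨δ, hδ, h⟩ := hstab x hx 1 one_pos
    exact ⟨δ, hδ, fun y hy hyx => (h y hy hyx T hTT).1⟩
  · intro x hx
    obtain ⟨δ, hδ, h⟩ := hex x hx 1 one_pos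
    refine ⟨δ, hδ, fun z hz => ?_⟩
    obtain ⟨y, hy, h1, -, h2⟩ := h z hz
    exact ⟨y, hy, h1, h2⟩
  · intro x hx
    obtain ⟨ε, hε, L, hL, hB⟩ := H.tube (hφ x (hcb x hx))
    obtain ⟨δ₁, hδ₁, h₁⟩ := hex x hx ε hε
    obtain ⟨δ₂, hδ₂, h₂⟩ := hstab x (hcb x hx) (min ε δ₁) (lt_min hε hδ₁)
    refine ⟨δ₂, hδ₂, fun y hy y' hy' hyx hyx' => ?_⟩
    have hs := h₂ y (hcb y hy) hyx
    have hs' := h₂ y' (hcb y' hy') hyx'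
    obtain ⟨m, hm, hmT, hmB, -⟩ := h₁ ((1 / 2 : ℝ) • (φ y T + φ y' T)) (by
      have e : (1 / 2 : ℝ) • (φ y T + φ y' T) - φ x T =
        (1 / 2 : ℝ) • ((φ y T - φ x T) + (φ y' T - φ x T)) := by module
      rw [e, norm_smul]
      have a1 := norm_add_le (φ y T - φ x T) (φ y' T - φ x T)
      have a2 := (hs T hTT).2
      have a3 := (hs' T hTT).2
      have a4 := min_le_right ε δ₁
      rw [Real.norm_of_nonneg (by norm_num)]
      linarith)
    refine ⟨m, hm, hmT, ?_⟩
    have := H.midpt hM₂ (γ := φ x) (ε := ε) (fun t ht y hy => (hB t ht y hy).1)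
      (hφ y (hcb y hy)) (hφ y' (hcb y' hy')) (hφ m (hcb m hm))
      (fun t ht => by
        rw [mem_ball, dist_eq_norm]; exact (hs t ht).2.trans_le (min_le_left _ _))
      (fun t ht => by
        rw [mem_ball, dist_eq_norm]; exact (hs' t ht).2.trans_le (min_le_left _ _))
      (fun t ht => by rw [mem_ball, dist_eq_norm]; exact hmB t ht) hmT hK
    rwa [h0 y (hcb y hy), h0 y' (hcb y' hy'), h0 m (hcb m hm)] at this

end helpers

/-- Same setting as Statement 6, but with
`λ₋ ≤ μ₋(D₂f(τ,x)) ≤ μ₊(D₂f(τ,x)) ≤ λ₊` on `U` and `M₁ = 2λ₊ − λ₋` if `t₁ ≥ t₀`,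
`M₁ = λ₊ − 2λ₋` otherwise.  If `r·M₂·K(M₁) ≤ 1` then the reachable set
`φ(t₁,t₀,B̄(x₀,r))` is convex. -/
theorem stmt_7 {X : Type*} [NormedAddCommGroup X] [InnerProductSpace ℝ X] [CompleteSpace X]
    (I : Set ℝ) (hI : I.OrdConnected)
    (U : Set (ℝ × X)) (hU : ∃ W : Set (ℝ × X), IsOpen W ∧ U = W ∩ I ×ˢ (univ : Set X))
    (f : ℝ → X → X) (f' : ℝ → X → X →L[ℝ] X)
    (hfc : ContinuousOn (fun p : ℝ × X => f p.1 p.2) U)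
    (hf'c : ContinuousOn (fun p : ℝ × X => f' p.1 p.2) U)
    (hderiv : ∀ p ∈ U, HasFDerivAt (fun x => f p.1 x) (f' p.1 p.2) p.2)
    (hlip : ∀ p ∈ U, ∃ ε > 0, ∃ L : NNReal,
      ∀ x ∈ ball p.2 ε, ∀ y ∈ ball p.2 ε, (p.1, x) ∈ U → (p.1, y) ∈ U →
        ‖f' p.1 x - f' p.1 y‖ ≤ L * ‖x - y‖)
    (x₀ : X) (r : ℝ) (hr : 0 < r) (t₀ t₁ : ℝ) (ht₀ : t₀ ∈ I) (ht₁ : t₁ ∈ I)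
    (φ : ℝ → ℝ → X → X)
    (hφ : ∀ x ∈ closedBall x₀ r, φ t₀ t₀ x = x ∧
      ∀ τ ∈ uIcc t₀ t₁, (τ, φ τ t₀ x) ∈ U ∧
        HasDerivWithinAt (fun s => φ s t₀ x) (f τ (φ τ t₀ x)) (uIcc t₀ t₁) τ)
    (lm lp M₁ M₂ : ℝ)
    (hlmlp : ∀ p ∈ U, lm ≤ muMinus (f' p.1 p.2) ∧
      muMinus (f' p.1 p.2) ≤ muPlus (f' p.1 p.2) ∧ muPlus (f' p.1 p.2) ≤ lp)
    (hM₁ : M₁ = if t₀ ≤ t₁ then 2 * lp - lm else lp - 2 * lm)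
    (hM₂ : ∀ p ∈ U,
      limsup (fun h : X => ‖f' p.1 (p.2 + h) - f' p.1 p.2‖ / ‖h‖) (𝓝[≠] (0:X)) ≤ M₂)
    (K : ℝ → ℝ)
    (hK : ∀ α : ℝ, K α = if α = 0 then |t₁ - t₀| else (Real.exp (α * |t₁ - t₀|) - 1) / α)
    (hrad : r * M₂ * K M₁ ≤ 1) :
    Convex ℝ ((fun x => φ t₁ t₀ x) '' closedBall x₀ r) := by
  rcases subsingleton_or_nontrivial X with hX | hX
  · exact (Set.subsingleton_of_subsingleton).convex
  obtain ⟨W, hW, hUW⟩ := hU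
  have hev : ∀ p ∈ U, ∀ C > M₂, ∀ᶠ h in 𝓝[≠] (0:X),
      ‖f' p.1 (p.2 + h) - f' p.1 p.2‖ / ‖h‖ < C := by
    intro p hp C hC
    refine eventually_lt_of_limsup_lt ((hM₂ p hp).trans_lt hC) ?_
    obtain ⟨ε, hε, L, hL⟩ := hlip p hp
    have hpW : p ∈ W ∧ p ∈ I ×ˢ (univ : Set X) := by rw [hUW] at hp; exact hp
    have hc : Continuous fun h : X => ((p.1, p.2 + h) : ℝ × X) := by fun_prop
    have h1 : ∀ᶠ h in 𝓝 (0:X), ((p.1, p.2 + h) : ℝ × X) ∈ W := by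
      apply hc.continuousAt.eventually_mem
      apply hW.mem_nhds
      simpa using hpW.1
    have h2 : ∀ᶠ h in 𝓝 (0:X), h ∈ ball (0:X) ε := ball_mem_nhds _ hε
    refine isBoundedUnder_of_eventually_le (a := (L:ℝ)) ?_
    filter_upwards [nhdsWithin_le_nhds h1, nhdsWithin_le_nhds h2, self_mem_nhdsWithin] with h a1 a2 a3
    have hpos : 0 < ‖h‖ := norm_pos_iff.2 a3
    rw [div_le_iff₀ hpos]
    have := hL (p.2 + h) (by simpa [mem_ball, dist_eq_norm] using a2) p.2 (mem_ball_self hε)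
      (by rw [hUW]; exact ⟨a1, hpW.2.1, mem_univ _⟩) hp
    simpa using this
  have hx₀ : x₀ ∈ closedBall x₀ r := mem_closedBall_self hr.le
  have hM₂0 : 0 ≤ M₂ := by
    refine le_of_forall_gt_imp_ge_of_dense fun C hC => ?_
    have h1 := ((hφ x₀ hx₀).2 t₀ left_mem_uIcc).1
    obtain ⟨h, hh⟩ := (hev _ h1 C hC).exists
    exact le_trans (by positivity) hh.le
  obtain ⟨σ, lm', lp', hσ⟩ : ∃ σ lm' lp' : ℝ, (t₀ ≤ t₁ ∧ σ = 1 ∧ lm' = lm ∧ lp' = lp) ∨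
      (t₁ < t₀ ∧ σ = -1 ∧ lm' = -lp ∧ lp' = -lm) := by
    rcases le_or_gt t₀ t₁ with h | h
    · exact ⟨1, lm, lp, Or.inl ⟨h, rfl, rfl, rfl⟩⟩
    · exact ⟨-1, -lp, -lm, Or.inr ⟨h, rfl, rfl, rfl⟩⟩
  have hM₁' : M₁ = 2 * lp' - lm' := by
    rcases hσ with ⟨h, rfl, rfl, rfl⟩ | ⟨h, rfl, rfl, rfl⟩
    · rw [hM₁, if_pos h]
    · rw [hM₁, if_neg (not_le.2 h)]; ring
  have hσn : |σ| = 1 := by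
    rcases hσ with ⟨h, rfl, rfl, rfl⟩ | ⟨h, rfl, rfl, rfl⟩ <;> simp
  have hσ1 : t₀ + σ * |t₁ - t₀| = t₁ := by
    rcases hσ with ⟨h, rfl, rfl, rfl⟩ | ⟨h, rfl, rfl, rfl⟩
    · rw [abs_of_nonneg (by linarith)]; ring
    · rw [abs_of_neg (by linarith)]; ring
  have hmem : ∀ s ∈ Icc 0 |t₁ - t₀|, t₀ + σ * s ∈ uIcc t₀ t₁ := by
    rintro s ⟨hs0, hs1⟩
    rcases hσ with ⟨h, rfl, rfl, rfl⟩ | ⟨h, rfl, rfl, rfl⟩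
    · rw [abs_of_nonneg (by linarith)] at hs1
      rw [uIcc_of_le h]; constructor <;> linarith
    · rw [abs_of_neg (by linarith)] at hs1
      rw [uIcc_of_ge h.le]; constructor <;> linarith
  have hmemI : ∀ s ∈ Icc 0 |t₁ - t₀|, t₀ + σ * s ∈ I := fun s hs =>
    hI.uIcc_subset ht₀ ht₁ (hmem s hs)
  have hcm : Continuous fun p : ℝ × X => ((t₀ + σ * p.1, p.2) : ℝ × X) := by fun_prop
  have H : OdeHyp |t₁ - t₀| {p : ℝ × X | (t₀ + σ * p.1, p.2) ∈ U}
      (fun s x => σ • f (t₀ + σ * s) x) (fun s x => σ • f' (t₀ + σ * s) x) lm' lp' M₂ := by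
    refine ⟨abs_nonneg _, ?_, ?_, ?_, ?_, ?_, ?_, ?_⟩
    · intro t ht x hx
      have hxW : ((t₀ + σ * t, x) : ℝ × X) ∈ W := by
        have : ((t₀ + σ * t, x) : ℝ × X) ∈ U := hx
        rw [hUW] at this; exact this.1
      obtain ⟨ε, hε, h⟩ := Metric.isOpen_iff.1 hW _ hxW
      refine ⟨ε, hε, fun t' ht' x' h1 h2 => ?_⟩
      change ((t₀ + σ * t', x') : ℝ × X) ∈ U
      rw [hUW]
      refine ⟨h ?_, hmemI t' ht', mem_univ _⟩
      rw [mem_ball, Prod.dist_eq]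
      refine max_lt ?_ (by rwa [dist_eq_norm])
      rw [Real.dist_eq]
      have : t₀ + σ * t' - (t₀ + σ * t) = σ * (t' - t) := by ring
      simp only [this, abs_mul, hσn, one_mul]
      exact h1
    · exact (hfc.comp hcm.continuousOn (fun p hp => hp.1)).const_smul σ
    · exact (hf'c.comp hcm.continuousOn (fun p hp => hp.1)).const_smul σ
    · intro t ht x hx
      exact (hderiv _ hx).const_smul σ
    · intro t ht x hx h
      obtain ⟨a1, -, a2⟩ := hlmlp _ hx
      obtain ⟨b1, b2⟩ := mu_bounds _ a1 a2 h
      rw [ContinuousLinearMap.smul_apply, real_inner_smul_left]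
      rcases hσ with ⟨h, rfl, rfl, rfl⟩ | ⟨h, rfl, rfl, rfl⟩ <;> linarith
    · intro t ht x hx h
      obtain ⟨a1, -, a2⟩ := hlmlp _ hx
      obtain ⟨b1, b2⟩ := mu_bounds _ a1 a2 h
      rw [ContinuousLinearMap.smul_apply, real_inner_smul_left]
      rcases hσ with ⟨h, rfl, rfl, rfl⟩ | ⟨h, rfl, rfl, rfl⟩ <;> linarith
    · intro t ht x hx C hC
      have h1 := hev _ hx C hC
      rw [eventually_nhdsWithin_iff, Metric.eventually_nhds_iff] at h1
      obtain ⟨δ, hδ, h1⟩ := h1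
      refine ⟨δ, hδ, fun h hh => ?_⟩
      rw [← smul_sub, norm_smul, Real.norm_eq_abs, hσn, one_mul]
      rcases eq_or_ne h 0 with rfl | hne
      · simp
      · have := h1 (by simpa using hh) hne
        rw [div_lt_iff₀ (norm_pos_iff.2 hne)] at this
        exact this.le
  have hfin := H.core hM₂0 (x₀ := x₀) (r := r) (K := K M₁)
    (φ := fun x s => φ (t₀ + σ * s) t₀ x) ?_ ?_ (by rw [← hM₁']; exact hK M₁) hrad
  · simpa only [hσ1] using hfin
  · intro x hx
    simpa using (hφ x hx).1
  · intro x hx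
    refine ⟨fun s hs => ((hφ x hx).2 _ (hmem s hs)).1, fun s hs => ?_⟩
    have h1 := ((hφ x hx).2 _ (hmem s hs)).2
    have h2 : HasDerivWithinAt (fun s : ℝ => t₀ + σ * s) σ (Icc 0 |t₁ - t₀|) s := by
      simpa using (((hasDerivAt_id s).const_mul σ).const_add t₀).hasDerivWithinAt
    exact HasDerivWithinAt.scomp (t' := uIcc t₀ t₁) s h1 h2 (fun s hs => hmem s hs)
end
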